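/- arXiv:2412.13080 — 2 statements merged into one kernel-verified Lean document; each statement's English description precedes it below -/
import Mathlib

section
/- Convergence of the regularized Chern–Simons–Schrödinger flow to the unregularized one: let M > 0 and T > 0. There exist constants c' > 0 and C > 0 depending only on M such that the following holds for every β with |β| ≤ c' and every R ∈ (0, 1). Suppose φ, ψ : [0,T] × ℝ² → ℂ are smooth Schwartz-class solutions of, respectively, the Chern–Simons–Schrödinger equations CSS(0) and CSS(R): i ∂ₜ φ = −Δφ − 2iβ A₀·∇φ + β²‖A₀‖²φ − β(K₀ ∗ (2βA₀|φ|² + J[φ]))φ with A₀(t,·) = K₀ ∗ |φ(t,·)|², and i ∂ₜ ψ = −Δψ − 2iβ A_R·∇ψ + β²‖A_R‖²ψ − β(K_R ∗ (2βA_R|ψ|² + J[ψ]))ψ with A_R(t,·) = K_R ∗ |ψ(t,·)|²; suppose that φ(0,·) = ψ(0,·) and that ‖φ(t,·)‖_{H²} + ‖ψ(t,·)‖_{H²} ≤ M for all t ∈ [0,T]. Then for all t ∈ [0,T]: (d/dt) ‖φ(t,·) − ψ(t,·)‖₂² ≤ C R² + C ‖φ(t,·) − ψ(t,·)‖₂²,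 and consequently ‖φ(t,·) − ψ(t,·)‖₂² ≤ C R² e^{Ct}. -/
noncomputable section
open MeasureTheory ENNReal
open scoped RealInnerProductSpace

/-- The plane `ℝ²`. -/
abbrev E2 : Type := EuclideanSpace ℝ (Fin 2)

/-- The rotation by 90 degrees: `x^⊥ = (-x₂, x₁)`. -/
def perp (x : E2) : E2 := (WithLp.equiv 2 (Fin 2 → ℝ)).symm ![-(x 1), x 0]

/-- The Aharonov–Bohm kernel `K_R(x) = x^⊥ / (max R ‖x‖)²` (with `K_R 0 = 0`,
also when `R = 0`, by the junk-value convention `(0 : ℝ)⁻¹ = 0`). -/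
def K (R : ℝ) (x : E2) : E2 := ((max R ‖x‖) ^ 2)⁻¹ • perp x

/-- The standard basis of `ℝ²`. -/
def e2 (j : Fin 2) : E2 := EuclideanSpace.single j 1

/-- Componentwise convolution of the vector kernel `K_R` with a scalar density. -/
def convKs (R : ℝ) (ρ : E2 → ℝ) (x : E2) : E2 := ∫ y, ρ y • K R (x - y)

/-- Convolution of the vector kernel `K_R` with a vector field, summed over components. -/
def convKv (R : ℝ) (F : E2 → E2) (x : E2) : ℝ := ∫ y, ⟪K R (x - y), F y⟫

/-- The current `J[u] = i(u∇ū - ū∇u) = 2 Im(ū ∇u)`, an `ℝ²`-valued function. -/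
def Jf (u : E2 → ℂ) (x : E2) : E2 :=
  (WithLp.equiv 2 (Fin 2 → ℝ)).symm fun j =>
    2 * ((starRingEnd ℂ) (u x) * fderiv ℝ u x (e2 j)).im

/-- The `H¹` norm `(‖u‖₂² + ‖∇u‖₂²)^{1/2}` (extended-real valued). -/
def H1 (u : E2 → ℂ) : ℝ≥0∞ :=
  (eLpNorm u 2 volume ^ 2 + eLpNorm (fun x => fderiv ℝ u x) 2 volume ^ 2) ^ (1 / 2 : ℝ)

/-- The `H²` norm `(‖u‖₂² + ‖∇u‖₂² + ‖∇²u‖₂²)^{1/2}` (extended-real valued). -/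
def H2 (u : E2 → ℂ) : ℝ≥0∞ :=
  (eLpNorm u 2 volume ^ 2 + eLpNorm (fun x => fderiv ℝ u x) 2 volume ^ 2
    + eLpNorm (fun x => fderiv ℝ (fderiv ℝ u) x) 2 volume ^ 2) ^ (1 / 2 : ℝ)

/-- The magnetic potential `A^R[|u|²] = K_R ∗ |u|²`. -/
def Apot (R : ℝ) (u : E2 → ℂ) (x : E2) : E2 := convKs R (fun y => ‖u y‖ ^ 2) x

/-- Laplacian of a complex function on `ℝ²`. -/
def lap (u : E2 → ℂ) (x : E2) : ℂ :=
  ∑ j : Fin 2, fderiv ℝ (fun y => fderiv ℝ u y (e2 j)) x (e2 j)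

/-- Right-hand side of the regularized Chern–Simons–Schrödinger equation
`i∂ₜu = -Δu - 2iβ A·∇u + β²‖A‖²u - β(K_R ∗ (2βA|u|² + J[u]))u`,
where `A = A^R[|u|²]`. -/
def cssRHS (β R : ℝ) (u : E2 → ℂ) (x : E2) : ℂ :=
  -(lap u x) - 2 * β * Complex.I * fderiv ℝ u x (Apot R u x)
    + (↑(β ^ 2 * ‖Apot R u x‖ ^ 2) : ℂ) * u x
    - (β : ℂ) * (↑(convKv R (fun y => (2 * β * ‖u y‖ ^ 2) • Apot R u y + Jf u y) x) : ℂ) * u x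

/-- The (average-field / magnetic) energy `∫ ‖(-i∇ + β A^R[|u|²]) u‖²`. -/
def energy (β R : ℝ) (u : E2 → ℂ) : ℝ :=
  ∫ x, ∑ j : Fin 2,
    ‖-Complex.I * fderiv ℝ u x (e2 j) + (↑(β * Apot R u x j) : ℂ) * u x‖ ^ 2

namespace CSS

/-- Polar coordinates on `E2`. -/
def pol (r θ : ℝ) : E2 := !₂[r * Real.cos θ, r * Real.sin θ]

def toE2 : ℝ × ℝ ≃ᵐ E2 :=
  (MeasurableEquiv.finTwoArrow (α := ℝ)).symm.trans (MeasurableEquiv.toLp 2 (Fin 2 → ℝ))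

lemma toE2_mp : MeasurePreserving toE2 volume volume :=
  (PiLp.volume_preserving_toLp (Fin 2)).comp (volume_preserving_finTwoArrow ℝ).symm

lemma toE2_polar (p : ℝ × ℝ) : toE2 (polarCoord.symm p) = pol p.1 p.2 := by
  ext i
  fin_cases i <;> simp [toE2, pol, MeasurableEquiv.finTwoArrow]

lemma lintegral_polar (f : E2 → ℝ≥0∞) :
    ∫⁻ z, f z = ∫⁻ p in (Set.Ioi (0:ℝ) ×ˢ Set.Ioo (-Real.pi) Real.pi),
      ENNReal.ofReal p.1 * f (pol p.1 p.2) := by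
  rw [← toE2_mp.lintegral_comp_emb toE2.measurableEmbedding, ← lintegral_comp_polarCoord_symm]
  simp only [toE2_polar, smul_eq_mul]
  rfl

lemma integral_polar (f : E2 → ℝ) :
    ∫ z, f z = ∫ p in (Set.Ioi (0:ℝ) ×ˢ Set.Ioo (-Real.pi) Real.pi),
      p.1 * f (pol p.1 p.2) := by
  rw [← toE2_mp.integral_comp toE2.measurableEmbedding, ← integral_comp_polarCoord_symm]
  simp only [toE2_polar, smul_eq_mul]
  rfl

lemma norm_pol (r θ : ℝ) : ‖pol r θ‖ = |r| := by
  rw [EuclideanSpace.norm_eq]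
  simp only [pol, Fin.sum_univ_two]
  simp only [Matrix.cons_val_zero, Matrix.cons_val_one, Real.norm_eq_abs, sq_abs]
  rw [← Real.sqrt_sq_eq_abs]
  congr 1
  have := Real.cos_sq_add_sin_sq θ
  linear_combination r^2 * this

lemma pol_eq (r θ : ℝ) : pol r θ = r • pol 1 θ := by
  ext i; fin_cases i <;> simp [pol]

lemma hasDerivAt_pol (r θ : ℝ) : HasDerivAt (fun t => pol r t) (perp (pol r θ)) θ := by
  rw [hasDerivAt_iff_hasFDerivAt, ← hasFDerivWithinAt_univ, hasFDerivWithinAt_euclidean]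
  intro i
  rw [hasFDerivWithinAt_univ, hasFDerivAt_iff_hasDerivAt]
  fin_cases i
  · simp only [pol, perp]
    simpa using (Real.hasDerivAt_cos θ).const_mul r
  · simp only [pol, perp]
    simpa using (Real.hasDerivAt_sin θ).const_mul r

lemma continuous_pol : Continuous (fun p : ℝ × ℝ => pol p.1 p.2) := by
  unfold pol
  fun_prop

lemma continuous_perp : Continuous perp := by
  unfold perp
  refine (PiLp.continuous_toLp 2 _).comp ?_
  refine continuous_pi fun i => ?_
  fin_cases i <;> simp <;> fun_prop

lemma norm_perp (x : E2) : ‖perp x‖ = ‖x‖ := by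
  simp [EuclideanSpace.norm_eq, perp, Fin.sum_univ_two, add_comm]

/-- `K_R` is divergence free (weak form). -/
lemma divfree (R : ℝ) (h : E2 → ℝ) (hh : ContDiff ℝ 1 h) :
    ∫ z, fderiv ℝ h z (K R z) = 0 := by
  rw [integral_polar]
  set F : ℝ × ℝ → ℝ := fun p => p.1 * fderiv ℝ h (pol p.1 p.2) (K R (pol p.1 p.2))
  by_cases hi : IntegrableOn F (Set.Ioi (0:ℝ) ×ˢ Set.Ioo (-Real.pi) Real.pi) volume
  · rw [Measure.volume_eq_prod] at hi ⊢
    rw [setIntegral_prod _ hi]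
    have : ∀ r : ℝ, ∫ y in Set.Ioo (-Real.pi) Real.pi, F (r, y) = 0 := by
      intro r
      have h1 : ∀ y, F (r, y) = (r * ((max R |r|) ^ 2)⁻¹) * fderiv ℝ h (pol r y) (perp (pol r y)) := by
        intro y
        simp only [F, K, norm_pol, map_smul, smul_eq_mul]
        ring
      simp_rw [h1]
      rw [integral_const_mul, ← integral_Ioc_eq_integral_Ioo,
        ← intervalIntegral.integral_of_le (by linarith [Real.pi_pos])]
      have h2 : ∀ y, HasDerivAt (fun t => h (pol r t)) (fderiv ℝ h (pol r y) (perp (pol r y))) y := by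
        intro y
        exact ((hh.differentiable (by norm_num) _).hasFDerivAt).comp_hasDerivAt y (hasDerivAt_pol r y)
      rw [intervalIntegral.integral_eq_sub_of_hasDerivAt (fun y _ => h2 y)]
      · simp [pol]
      · apply Continuous.intervalIntegrable
        have hc : Continuous (fun y => pol r y) := continuous_pol.comp (by fun_prop : Continuous fun y : ℝ => (r, y))
        exact ((hh.continuous_fderiv (by norm_num)).comp hc).clm_apply (continuous_perp.comp hc)
    change ∫ x in Set.Ioi (0:ℝ), ∫ y in Set.Ioo (-Real.pi) Real.pi, F (x, y) = 0
    simp [this]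
  · exact integral_undef hi

end CSS

namespace CSS
open Filter Topology

lemma ray_aux (F F' p q : ℝ → ℝ) (hF : ∀ r, HasDerivAt F (F' r) r) (hF' : Continuous F')
    (hp : Continuous p) (hq : Continuous q) (hp0 : ∀ r, 0 ≤ p r)
    (hq0 : ∀ r, 0 < r → 0 ≤ q r)
    (hpq : ∀ r, 0 < r → p r ≤ F' r + q r) (h0 : 0 ≤ F 0) (hlim : Tendsto F atTop (𝓝 0)) :
    ENNReal.ofReal (F 0) + ∫⁻ r in Set.Ioi (0:ℝ), ENNReal.ofReal (p r)
      ≤ ∫⁻ r in Set.Ioi (0:ℝ), ENNReal.ofReal (q r) := by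
  have key : ∀ n : ℕ, ENNReal.ofReal (F 0) + ∫⁻ r in Set.Iic (n:ℝ), ENNReal.ofReal (p r) ∂(volume.restrict (Set.Ioi (0:ℝ)))
      ≤ ENNReal.ofReal (F n) + ∫⁻ r in Set.Ioi (0:ℝ), ENNReal.ofReal (q r) := by
    intro n
    have hn : (0:ℝ) ≤ n := Nat.cast_nonneg n
    have e1 : F n - F 0 = ∫ r in (0:ℝ)..n, F' r :=
      (intervalIntegral.integral_eq_sub_of_hasDerivAt (fun y _ => hF y) (hF'.intervalIntegrable _ _)).symm
    have e2 : (∫ r in (0:ℝ)..n, p r) ≤ ∫ r in (0:ℝ)..n, (F' r + q r) := by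
      rw [intervalIntegral.integral_of_le hn, intervalIntegral.integral_of_le hn]
      refine setIntegral_mono_on ?_ ?_ measurableSet_Ioc (fun r hr => hpq r hr.1)
      · exact (hp.intervalIntegrable 0 n).1
      · exact ((hF'.add hq).intervalIntegrable 0 n).1
    rw [intervalIntegral.integral_add (hF'.intervalIntegrable _ _) (hq.intervalIntegrable _ _), ← e1] at e2
    have e3 : F 0 + ∫ r in (0:ℝ)..n, p r ≤ F n + ∫ r in (0:ℝ)..n, q r := by linarith
    have hpi : 0 ≤ ∫ r in (0:ℝ)..n, p r := intervalIntegral.integral_nonneg hn (fun r _ => hp0 r)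
    have e4 := ENNReal.ofReal_le_ofReal e3
    rw [ENNReal.ofReal_add h0 hpi] at e4
    rw [Measure.restrict_restrict measurableSet_Iic, Set.inter_comm, Set.Ioi_inter_Iic]
    have e5 : ENNReal.ofReal (∫ r in (0:ℝ)..n, p r) = ∫⁻ r in Set.Ioc (0:ℝ) n, ENNReal.ofReal (p r) := by
      rw [intervalIntegral.integral_of_le hn, ofReal_integral_eq_lintegral_ofReal]
      · exact (hp.intervalIntegrable 0 n).1
      · exact Eventually.of_forall hp0
    have e6 : ENNReal.ofReal (∫ r in (0:ℝ)..n, q r) = ∫⁻ r in Set.Ioc (0:ℝ) n, ENNReal.ofReal (q r) := by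
      rw [intervalIntegral.integral_of_le hn, ofReal_integral_eq_lintegral_ofReal]
      · exact (hq.intervalIntegrable 0 n).1
      · exact (ae_restrict_iff' measurableSet_Ioc).2 (Eventually.of_forall fun r hr => hq0 r hr.1)
    rw [← e5]
    refine e4.trans (ENNReal.ofReal_add_le.trans ?_)
    rw [e6]
    gcongr
    exact Set.Ioc_subset_Ioi_self
  have hcov : AECover (volume.restrict (Set.Ioi (0:ℝ))) atTop (fun n : ℕ => Set.Iic (n:ℝ)) :=
    aecover_Iic tendsto_natCast_atTop_atTop
  have t1 := hcov.lintegral_tendsto_of_countably_generated (f := fun r => ENNReal.ofReal (p r))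
    (ENNReal.measurable_ofReal.comp hp.measurable).aemeasurable
  have t2 : Tendsto (fun n : ℕ => ENNReal.ofReal (F n)) atTop (𝓝 0) := by
    rw [← ENNReal.ofReal_zero]
    exact (ENNReal.continuous_ofReal.tendsto 0).comp (hlim.comp tendsto_natCast_atTop_atTop)
  have := le_of_tendsto_of_tendsto' (t1.const_add (ENNReal.ofReal (F 0))) (t2.add_const _) key
  simpa using this

lemma sq_enorm (a : ℂ) : ‖a‖ₑ ^ 2 = ENNReal.ofReal (‖a‖ ^ 2) := by
  rw [← ofReal_norm, ENNReal.ofReal_pow (norm_nonneg _)]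

lemma hasDerivAt_norm_sq {v v' : ℝ → ℂ} {r : ℝ} (hv : HasDerivAt v (v' r) r) :
    HasDerivAt (fun s => ‖v s‖ ^ 2) (2 * ⟪v r, v' r⟫) r := hv.norm_sq

lemma inner_bd (a b : ℂ) : |2 * ⟪a, b⟫| ≤ ‖a‖ ^ 2 + ‖b‖ ^ 2 := by
  have h := abs_real_inner_le_norm a b
  rw [abs_mul, abs_two]
  nlinarith [sq_nonneg (‖a‖ - ‖b‖)]

lemma ray_hardy (v v' : ℝ → ℂ) (hv : ∀ r, HasDerivAt v (v' r) r) (hv' : Continuous v')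
    (hlim : Tendsto (fun r => r * ‖v r‖ ^ 2) atTop (𝓝 0)) :
    ∫⁻ r in Set.Ioi (0:ℝ), ‖v r‖ₑ ^ 2
      ≤ ∫⁻ r in Set.Ioi (0:ℝ), ENNReal.ofReal r * (‖v r‖ₑ ^ 2 + ‖v' r‖ₑ ^ 2) := by
  have hvc : Continuous v := continuous_iff_continuousAt.2 fun r => (hv r).continuousAt
  have := ray_aux (fun r => r * ‖v r‖ ^ 2) (fun r => 1 * ‖v r‖ ^ 2 + r * (2 * ⟪v r, v' r⟫))
    (fun r => ‖v r‖ ^ 2) (fun r => r * (‖v r‖ ^ 2 + ‖v' r‖ ^ 2))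
    (fun r => (hasDerivAt_id r).mul (hasDerivAt_norm_sq (hv r)))
    (by fun_prop) (by fun_prop) (by fun_prop) (fun r => by positivity) (fun r hr => by positivity)
    (fun r hr => by
      have := (abs_le.1 (inner_bd (v r) (v' r))).1
      nlinarith) (by simp) hlim
  simp only [zero_mul, ENNReal.ofReal_zero, zero_add] at this
  convert this using 1
  · simp only [sq_enorm]
  · refine setLIntegral_congr_fun measurableSet_Ioi (fun r hr => ?_)
    simp only [sq_enorm]
    rw [ENNReal.ofReal_mul (le_of_lt hr), ENNReal.ofReal_add (by positivity) (by positivity)]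

lemma ray_sup (v v' : ℝ → ℂ) (hv : ∀ r, HasDerivAt v (v' r) r) (hv' : Continuous v')
    (hlim : Tendsto (fun r => ‖v r‖ ^ 2) atTop (𝓝 0)) :
    ‖v 0‖ₑ ^ 2 ≤ ∫⁻ r in Set.Ioi (0:ℝ), (‖v r‖ₑ ^ 2 + ‖v' r‖ₑ ^ 2) := by
  have hvc : Continuous v := continuous_iff_continuousAt.2 fun r => (hv r).continuousAt
  have := ray_aux (fun r => ‖v r‖ ^ 2) (fun r => (2 * ⟪v r, v' r⟫))
    (fun r => 0) (fun r => (‖v r‖ ^ 2 + ‖v' r‖ ^ 2))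
    (fun r => (hasDerivAt_norm_sq (hv r)))
    (by fun_prop) (by fun_prop) (by fun_prop) (fun r => by positivity) (fun r hr => by positivity)
    (fun r hr => by
      have := (abs_le.1 (inner_bd (v r) (v' r))).1
      linarith) (by positivity) hlim
  simp only [ENNReal.ofReal_zero, lintegral_zero, add_zero] at this
  convert this using 1
  · simp only [sq_enorm]
  · refine setLIntegral_congr_fun measurableSet_Ioi (fun r hr => ?_)
    simp only [sq_enorm]
    rw [ENNReal.ofReal_add (by positivity) (by positivity)]

/-- the kernel `1/|z|`. -/
def kap (z : E2) : ℝ≥0∞ := ‖z‖ₑ⁻¹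

lemma measurable_kap : Measurable kap := measurable_enorm.inv

lemma lintegral_polar' (f : E2 → ℝ≥0∞) (hf : Measurable f) :
    ∫⁻ z, f z = ∫⁻ θ in Set.Ioo (-Real.pi) Real.pi, ∫⁻ r in Set.Ioi (0:ℝ),
      ENNReal.ofReal r * f (pol r θ) := by
  rw [lintegral_polar, Measure.volume_eq_prod, ← Measure.prod_restrict, lintegral_prod_symm]
  refine Measurable.aemeasurable ?_
  exact (ENNReal.measurable_ofReal.comp measurable_fst).mul (hf.comp continuous_pol.measurable)

lemma lintegral_polar_kap (f : E2 → ℝ≥0∞) (hf : Measurable f) :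
    ∫⁻ z, kap z * f z = ∫⁻ θ in Set.Ioo (-Real.pi) Real.pi, ∫⁻ r in Set.Ioi (0:ℝ),
      f (pol r θ) := by
  rw [lintegral_polar' (fun z => kap z * f z) (measurable_kap.mul hf)]
  refine lintegral_congr fun θ => setLIntegral_congr_fun measurableSet_Ioi fun r hr => ?_
  have hr' : (0:ℝ) < r := hr
  rw [kap, ← ofReal_norm, norm_pol, abs_of_pos hr', ← mul_assoc, ENNReal.mul_inv_cancel, one_mul]
  · simpa using hr'
  · exact ENNReal.ofReal_ne_top

section schwartz
variable (u : SchwartzMap E2 ℂ) (x : E2) (θ : ℝ)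

lemma ray_deriv (r : ℝ) : HasDerivAt (fun r => u (x + pol r θ)) (fderiv ℝ u (x + pol r θ) (pol 1 θ)) r := by
  have h1 : HasDerivAt (fun r : ℝ => x + pol r θ) (pol 1 θ) r := by
    have : (fun r : ℝ => x + pol r θ) = fun r : ℝ => x + r • pol 1 θ := by
      funext r; rw [pol_eq]
    rw [this]
    simpa using ((hasDerivAt_id r).smul_const (pol 1 θ)).const_add x
  exact (u.hasFDerivAt _).comp_hasDerivAt r h1

lemma continuous_fderiv_S : Continuous (fderiv ℝ u) := (u.smooth 1).continuous_fderiv (by norm_num)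

lemma ray_deriv_cont : Continuous (fun r => fderiv ℝ u (x + pol r θ) (pol 1 θ)) := by
  have hc : Continuous (fun r => x + pol r θ) :=
    continuous_const.add (continuous_pol.comp (by fun_prop : Continuous fun r : ℝ => (r, θ)))
  exact ((continuous_fderiv_S u).comp hc).clm_apply continuous_const

lemma ray_deriv_bd (r : ℝ) : ‖fderiv ℝ u (x + pol r θ) (pol 1 θ)‖ₑ ≤ ‖fderiv ℝ u (x + pol r θ)‖ₑ := by
  rw [← ofReal_norm, ← ofReal_norm]
  apply ENNReal.ofReal_le_ofReal
  refine (ContinuousLinearMap.le_opNorm _ _).trans ?_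
  rw [norm_pol]; simp

lemma ray_tendsto : Tendsto (fun r => r * ‖u (x + pol r θ)‖ ^ 2) atTop (𝓝 0) ∧
    Tendsto (fun r => ‖u (x + pol r θ)‖ ^ 2) atTop (𝓝 0) := by
  obtain ⟨C, hC⟩ := u.decay 1 0
  simp only [pow_one, norm_iteratedFDeriv_zero] at hC
  have hC' : ∀ r > ‖x‖ + 1, ‖u (x + pol r θ)‖ ≤ C / (r - ‖x‖) := by
    intro r hr
    rw [le_div_iff₀ (by linarith)]
    refine le_trans ?_ (hC.2 (x + pol r θ))
    rw [mul_comm]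
    gcongr
    have := norm_sub_le_norm_add (pol r θ) x
    rw [norm_pol, add_comm] at this
    linarith [le_abs_self r]
  have hCpos := hC.1
  -- majorant
  have hmaj : ∀ r > ‖x‖ + 1, r * ‖u (x + pol r θ)‖ ^ 2 ≤ C ^ 2 * (1 + ‖x‖) * (r - ‖x‖)⁻¹ := by
    intro r hr
    have h1 := hC' r hr
    have hpos : 0 < r - ‖x‖ := by linarith
    have hx := norm_nonneg x
    have h2 : ‖u (x + pol r θ)‖ ^ 2 ≤ (C / (r - ‖x‖)) ^ 2 := by gcongr
    have h3 : r ≤ (1 + ‖x‖) * (r - ‖x‖) := by nlinarith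
    calc r * ‖u (x + pol r θ)‖ ^ 2 ≤ ((1 + ‖x‖) * (r - ‖x‖)) * (C / (r - ‖x‖)) ^ 2 := by
            gcongr
      _ = _ := by field_simp
  have htl : Tendsto (fun r : ℝ => C ^ 2 * (1 + ‖x‖) * (r - ‖x‖)⁻¹) atTop (𝓝 0) := by
    rw [← mul_zero (C ^ 2 * (1 + ‖x‖))]
    refine Tendsto.const_mul _ (tendsto_inv_atTop_zero.comp ?_)
    exact tendsto_atTop_add_const_right _ _ tendsto_id
  have hx := norm_nonneg x
  constructor
  · refine squeeze_zero' ?_ ?_ htl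
    · filter_upwards [eventually_gt_atTop (‖x‖ + 1)] with r hr
      have : 0 < r := by linarith
      positivity
    · filter_upwards [eventually_gt_atTop (‖x‖ + 1)] with r hr using hmaj r hr
  · refine squeeze_zero' (Eventually.of_forall fun r => by positivity) ?_ htl
    filter_upwards [eventually_gt_atTop (‖x‖ + 1)] with r hr
    refine le_trans ?_ (hmaj r hr)
    have : 1 ≤ r := by linarith
    exact le_mul_of_one_le_left (by positivity) this

lemma meas_norm_sq : Measurable fun z : E2 => ‖u z‖ₑ ^ 2 := by
  have := u.continuous.measurable
  fun_prop

lemma meas_fderiv_sq : Measurable fun z : E2 => ‖fderiv ℝ u z‖ₑ ^ 2 := by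
  have := (continuous_fderiv_S u).measurable
  fun_prop

lemma hardy0 : ∫⁻ z, kap z * ‖u (x + z)‖ₑ ^ 2 ≤ (∫⁻ z, ‖u z‖ₑ ^ 2) + ∫⁻ z, ‖fderiv ℝ u z‖ₑ ^ 2 := by
  have hm := meas_norm_sq u
  have hm' := meas_fderiv_sq u
  rw [lintegral_polar_kap (fun z => ‖u (x + z)‖ₑ ^ 2) (hm.comp (measurable_const_add x)),
    ← lintegral_add_left hm, ← lintegral_add_left_eq_self _ x,
    lintegral_polar' (fun z => ‖u (x + z)‖ₑ ^ 2 + ‖fderiv ℝ u (x + z)‖ₑ ^ 2) ((hm.comp (measurable_const_add x)).add (hm'.comp (measurable_const_add x)))]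
  refine lintegral_mono fun θ => ?_
  refine (ray_hardy (fun r => u (x + pol r θ)) _ (ray_deriv u x θ) (ray_deriv_cont u x θ)
    (ray_tendsto u x θ).1).trans ?_
  refine lintegral_mono fun r => ?_
  simp only
  gcongr
  exact ray_deriv_bd u x θ r

lemma sup0 : 3 * ‖u x‖ₑ ^ 2 ≤ ∫⁻ z, kap z * (‖u (x + z)‖ₑ ^ 2 + ‖fderiv ℝ u (x + z)‖ₑ ^ 2) := by
  have hm := meas_norm_sq u
  have hm' := meas_fderiv_sq u
  rw [lintegral_polar_kap (fun z => ‖u (x + z)‖ₑ ^ 2 + ‖fderiv ℝ u (x + z)‖ₑ ^ 2) ((hm.comp (measurable_const_add x)).add (hm'.comp (measurable_const_add x)))]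
  calc 3 * ‖u x‖ₑ ^ 2 ≤ ∫⁻ θ in Set.Ioo (-Real.pi) Real.pi, ‖u x‖ₑ ^ 2 := by
        rw [setLIntegral_const, Real.volume_Ioo, mul_comm]
        gcongr
        rw [show (3:ℝ≥0∞) = ENNReal.ofReal 3 by simp]
        apply ENNReal.ofReal_le_ofReal
        linarith [Real.pi_gt_three]
    _ ≤ _ := by
        refine lintegral_mono fun θ => ?_
        have := ray_sup (fun r => u (x + pol r θ)) _ (ray_deriv u x θ) (ray_deriv_cont u x θ)
          (ray_tendsto u x θ).2
        have h0 : pol 0 θ = 0 := by rw [pol_eq]; simp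
        simp only [h0, add_zero] at this
        refine this.trans (lintegral_mono fun r => ?_)
        gcongr
        exact ray_deriv_bd u x θ r

end schwartz

/-- local part of the kernel -/
def kapR (R : ℝ) (z : E2) : ℝ≥0∞ := kap z * (Metric.ball (0:E2) R).indicator 1 z

lemma measurable_kapR (R : ℝ) : Measurable (kapR R) :=
  measurable_kap.mul (measurable_one.indicator Metric.isOpen_ball.measurableSet)

lemma lintegral_kapR (R : ℝ) (hR : 0 < R) : ∫⁻ z, kapR R z ≤ ENNReal.ofReal (8 * R) := by
  unfold kapR
  rw [lintegral_polar_kap _ (measurable_one.indicator Metric.isOpen_ball.measurableSet)]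
  calc _ ≤ ∫⁻ θ in Set.Ioo (-Real.pi) Real.pi, ENNReal.ofReal R := by
        refine lintegral_mono fun θ => ?_
        calc _ ≤ ∫⁻ r in Set.Ioi (0:ℝ), (Set.Ioo (0:ℝ) R).indicator 1 r := by
              refine setLIntegral_mono' measurableSet_Ioi fun r hr => ?_
              have hr' : (0:ℝ) < r := hr
              by_cases h : r < R
              · rw [Set.indicator_of_mem (show r ∈ Set.Ioo 0 R from ⟨hr, h⟩)]
                exact Set.indicator_le_self' (fun _ _ => zero_le) _
              · rw [Set.indicator_of_notMem]
                · exact zero_le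
                · simp [norm_pol, abs_of_pos hr', not_lt.1 h]
          _ ≤ ∫⁻ r, (Set.Ioo (0:ℝ) R).indicator 1 r := setLIntegral_le_lintegral _ _
          _ = _ := by rw [lintegral_indicator_one measurableSet_Ioo]; simp
    _ ≤ _ := by
        rw [setLIntegral_const, Real.volume_Ioo, ← ENNReal.ofReal_mul hR.le]
        apply ENNReal.ofReal_le_ofReal
        nlinarith [Real.pi_lt_d2]

end CSS

namespace CSS
open Filter Topology

def cv (k f : E2 → ℝ≥0∞) (x : E2) : ℝ≥0∞ := ∫⁻ y, k (x - y) * f y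

section
variable {k f g : E2 → ℝ≥0∞}

lemma cv_meas (hk : Measurable k) (hf : Measurable f) : Measurable (cv k f) := by
  unfold cv
  have : Measurable fun p : E2 × E2 => k (p.1 - p.2) * f p.2 := by fun_prop
  exact this.lintegral_prod_right'

lemma cv_swap (hk : Measurable k) (hf : Measurable f) (hg : Measurable g)
    (he : ∀ z, k (-z) = k z) : ∫⁻ x, g x * cv k f x = ∫⁻ x, f x * cv k g x := by
  unfold cv
  have e1 : ∀ x, g x * ∫⁻ y, k (x - y) * f y = ∫⁻ y, g x * (k (x - y) * f y) := fun x =>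
    (lintegral_const_mul _ (by fun_prop)).symm
  have e2 : ∀ x, f x * ∫⁻ y, k (x - y) * g y = ∫⁻ y, f x * (k (x - y) * g y) := fun x =>
    (lintegral_const_mul _ (by fun_prop)).symm
  simp_rw [e1, e2]
  rw [lintegral_lintegral_swap (by fun_prop)]
  refine lintegral_congr fun x => lintegral_congr fun y => ?_
  rw [← he (x - y), neg_sub]; ring

lemma cv_total (hk : Measurable k) (hf : Measurable f) (he : ∀ z, k (-z) = k z) :
    ∫⁻ x, cv k f x = (∫⁻ z, k z) * ∫⁻ x, f x := by
  have := cv_swap hk hf (measurable_const (a := (1:ℝ≥0∞))) he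
  simp only [one_mul] at this
  rw [this, mul_comm, ← lintegral_mul_const _ hf]
  refine lintegral_congr fun x => ?_
  congr 1
  unfold cv
  simp only [mul_one]
  exact lintegral_sub_left_eq_self k x

lemma cs (μ : Measure E2) (hf : Measurable f) (hg : Measurable g) :
    (∫⁻ x, f x * g x ∂μ) ^ 2 ≤ (∫⁻ x, f x ^ 2 ∂μ) * ∫⁻ x, g x ^ 2 ∂μ := by
  have h := ENNReal.lintegral_mul_le_Lp_mul_Lq μ (p := 2) (q := 2)
    (by constructor <;> norm_num) hf.aemeasurable hg.aemeasurable
  simp only [Pi.mul_apply, ENNReal.rpow_two] at h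
  calc _ ≤ ((∫⁻ x, f x ^ 2 ∂μ) ^ (1 / 2 : ℝ) * (∫⁻ x, g x ^ 2 ∂μ) ^ (1 / 2 : ℝ)) ^ 2 := by gcongr
    _ = _ := by
      rw [mul_pow, ← ENNReal.rpow_natCast, ← ENNReal.rpow_natCast, ← ENNReal.rpow_mul,
        ← ENNReal.rpow_mul]
      norm_num

lemma cv_cs (hk : Measurable k) (hf : Measurable f) (hg : Measurable g) (x : E2) :
    cv k (fun y => f y * g y) x ^ 2 ≤ cv k (fun y => f y ^ 2) x * cv k (fun y => g y ^ 2) x := by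
  have hkx : Measurable fun y => k (x - y) := by fun_prop
  have e : ∀ h : E2 → ℝ≥0∞, Measurable h →
      cv k h x = ∫⁻ y, h y ∂(volume.withDensity fun y => k (x - y)) := by
    intro h hh
    rw [lintegral_withDensity_eq_lintegral_mul _ hkx hh]
    rfl
  rw [e _ (by fun_prop), e _ (by fun_prop), e _ (by fun_prop)]
  exact cs _ hf hg

lemma cv_mono {x : E2} (h : ∀ y, f y ≤ g y) : cv k f x ≤ cv k g x :=
  lintegral_mono fun y => mul_le_mul_right (h y) _

lemma cv_add (hk : Measurable k) (hf : Measurable f) (x : E2) :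
    cv k (fun y => f y + g y) x = cv k f x + cv k g x := by
  unfold cv
  simp_rw [mul_add]
  exact lintegral_add_left (by fun_prop) _

lemma cv_const_mul (hk : Measurable k) (hf : Measurable f) (c : ℝ≥0∞) (x : E2) :
    cv k (fun y => c * f y) x = c * cv k f x := by
  unfold cv
  rw [← lintegral_const_mul _ (by fun_prop)]
  refine lintegral_congr fun y => by ring

lemma cv_sup (hk : Measurable k) {c : ℝ≥0∞} (h : ∀ y, f y ≤ c) (x : E2) :
    cv k f x ≤ (∫⁻ z, k z) * c := by
  refine (cv_mono h).trans ?_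
  unfold cv
  rw [lintegral_mul_const _ (by fun_prop)]
  exact mul_le_mul_left (lintegral_sub_left_eq_self (μ := volume) k x).le _

end

lemma kap_neg (z : E2) : kap (-z) = kap z := by simp [kap]
lemma kapR_neg (R : ℝ) (z : E2) : kapR R (-z) = kapR R z := by
  unfold kapR
  rw [kap_neg]
  congr 1
  simp only [Set.indicator, mem_ball_zero_iff, norm_neg, Pi.one_apply]

lemma cv_kap_eq (f : E2 → ℝ≥0∞) (x : E2) : cv kap f x = ∫⁻ z, kap z * f (x + z) := by
  unfold cv
  rw [← lintegral_add_left_eq_self _ x]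
  refine lintegral_congr fun z => ?_
  rw [sub_add_cancel_left, kap_neg]

lemma sq3 (a b c : ℝ≥0∞) : (a + b + c) ^ 2 ≤ 3 * (a ^ 2 + b ^ 2 + c ^ 2) := by
  by_cases ha : a = ⊤
  · simp [ha]
  by_cases hb : b = ⊤
  · simp [hb]
  by_cases hc : c = ⊤
  · simp [hc]
  lift a to NNReal using ha
  lift b to NNReal using hb
  lift c to NNReal using hc
  norm_cast
  rw [← NNReal.coe_le_coe]
  push_cast
  nlinarith [sq_nonneg ((a:ℝ) - b), sq_nonneg ((a:ℝ) - c), sq_nonneg ((b:ℝ) - c)]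

lemma sq2 (a b : ℝ≥0∞) : (a + b) ^ 2 ≤ 2 * (a ^ 2 + b ^ 2) := by
  by_cases ha : a = ⊤
  · simp [ha]
  by_cases hb : b = ⊤
  · simp [hb]
  lift a to NNReal using ha
  lift b to NNReal using hb
  norm_cast
  rw [← NNReal.coe_le_coe]
  push_cast
  nlinarith [sq_nonneg ((a:ℝ) - b)]

lemma amgm (a b : ℝ≥0∞) : 2 * (a * b) ≤ a ^ 2 + b ^ 2 := by
  by_cases ha : a = ⊤
  · simp [ha]
  by_cases hb : b = ⊤
  · simp [hb]
  lift a to NNReal using ha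
  lift b to NNReal using hb
  norm_cast
  rw [← NNReal.coe_le_coe]
  push_cast
  nlinarith [sq_nonneg ((a:ℝ) - b)]

section est
variable {a b w p q D kr : E2 → ℝ≥0∞} {N r : ℝ≥0∞}

/-- bound on `D²` integrated against a weight `g²` -/
lemma estD (ha : Measurable a) (hb : Measurable b) (hw : Measurable w)
    (hkr : Measurable kr) (hkI : ∫⁻ z, kr z ≤ 8 * r)
    (cva : ∀ x, cv kap (fun y => a y ^ 2) x ≤ N) (cvb : ∀ x, cv kap (fun y => b y ^ 2) x ≤ N)
    (supb : ∀ x, b x ^ 2 ≤ N)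
    (hD : ∀ x, D x ≤ cv kap (fun y => w y * a y) x + cv kap (fun y => w y * b y) x
      + cv kr (fun y => b y ^ 2) x)
    {g : E2 → ℝ≥0∞} {N₁ : ℝ≥0∞} (hg : Measurable g) (cvg : ∀ x, cv kap (fun y => g y ^ 2) x ≤ N₁)
    (intg : ∫⁻ x, g x ^ 2 ≤ N) :
    ∫⁻ x, g x ^ 2 * D x ^ 2 ≤ 6 * N * N₁ * (∫⁻ x, w x ^ 2) + 192 * N ^ 3 * r ^ 2 := by
  have hW : Measurable (cv kap (fun y => w y ^ 2)) := cv_meas measurable_kap (by fun_prop)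
  have hD2 : ∀ x, D x ^ 2 ≤ 6 * N * cv kap (fun y => w y ^ 2) x + 192 * N ^ 2 * r ^ 2 := by
    intro x
    calc D x ^ 2 ≤ _ := pow_le_pow_left₀ zero_le (hD x) 2
      _ ≤ _ := sq3 _ _ _
      _ ≤ 3 * (cv kap (fun y => w y ^ 2) x * N + cv kap (fun y => w y ^ 2) x * N
            + (8 * r * N) ^ 2) := by
          gcongr
          · exact (cv_cs measurable_kap hw ha x).trans (mul_le_mul_right (cva x) _)
          · exact (cv_cs measurable_kap hw hb x).trans (mul_le_mul_right (cvb x) _)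
          · exact (cv_sup hkr supb x).trans (mul_le_mul_left hkI _)
      _ = _ := by ring
  calc _ ≤ ∫⁻ x, (6 * N * (g x ^ 2 * cv kap (fun y => w y ^ 2) x) + 192 * N ^ 2 * r ^ 2 * g x ^ 2) := by
        refine lintegral_mono fun x => ?_
        refine (mul_le_mul_right (hD2 x) _).trans (le_of_eq (by ring))
    _ = 6 * N * (∫⁻ x, g x ^ 2 * cv kap (fun y => w y ^ 2) x) + 192 * N ^ 2 * r ^ 2 * ∫⁻ x, g x ^ 2 := by
        rw [lintegral_add_left (by fun_prop), lintegral_const_mul _ (by fun_prop),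
          lintegral_const_mul _ (by fun_prop)]
    _ ≤ 6 * N * ((∫⁻ x, w x ^ 2) * N₁) + 192 * N ^ 2 * r ^ 2 * N := by
        gcongr
        rw [cv_swap measurable_kap (by fun_prop) (by fun_prop) kap_neg, ← lintegral_mul_const _ (by fun_prop)]
        exact lintegral_mono fun x => mul_le_mul_right (cvg x) _
    _ = _ := by ring

/-- weighted `W` bound -/
lemma estW (hw : Measurable w)
    {g : E2 → ℝ≥0∞} {N₁ : ℝ≥0∞} (hg : Measurable g) (cvg : ∀ x, cv kap (fun y => g y ^ 2) x ≤ N₁) :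
    ∫⁻ x, g x ^ 2 * cv kap (fun y => w y ^ 2) x ≤ N₁ * ∫⁻ x, w x ^ 2 := by
  rw [cv_swap measurable_kap (by fun_prop) (by fun_prop) kap_neg, mul_comm N₁,
    ← lintegral_mul_const _ (by fun_prop)]
  exact lintegral_mono fun x => mul_le_mul_right (cvg x) _

lemma estG (ha : Measurable a) (hb : Measurable b) (hw : Measurable w) (hp : Measurable p)
    (hq : Measurable q) (hDm : Measurable D)
    (hkr : Measurable kr) (hkI : ∫⁻ z, kr z ≤ 8 * r) (hke : ∀ z, kr (-z) = kr z)
    (cva : ∀ x, cv kap (fun y => a y ^ 2) x ≤ N) (cvb : ∀ x, cv kap (fun y => b y ^ 2) x ≤ N)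
    (cvp : ∀ x, cv kap (fun y => p y ^ 2) x ≤ 2 * N) (cvq : ∀ x, cv kap (fun y => q y ^ 2) x ≤ 2 * N)
    (supa : ∀ x, a x ^ 2 ≤ N) (supb : ∀ x, b x ^ 2 ≤ N)
    (inta : ∫⁻ x, a x ^ 2 ≤ N) (intq : ∫⁻ x, q x ^ 2 ≤ N)
    (hD : ∀ x, D x ≤ cv kap (fun y => w y * a y) x + cv kap (fun y => w y * b y) x
      + cv kr (fun y => b y ^ 2) x)
    {G : E2 → ℝ≥0∞}
    (hG : ∀ x, G x ≤ cv kap (fun y => 2 * (D y * a y * a y) + 2 * N * (w y * a y + w y * b y)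
        + 4 * (w y * p y + w y * q y)) x
      + cv kr (fun y => 2 * N * b y ^ 2 + 4 * (b y * q y)) x) :
    ∫⁻ x, a x ^ 2 * G x ^ 2 ≤ (168 * N ^ 4 + 768 * N ^ 2) * (∫⁻ x, w x ^ 2)
      + (3840 * N ^ 5 + 6144 * N ^ 3) * r ^ 2 := by
  have hW : Measurable (cv kap (fun y => w y ^ 2)) := cv_meas measurable_kap (by fun_prop)
  have hQ : Measurable (cv kr (fun y => q y ^ 2)) := cv_meas hkr (by fun_prop)
  have hX : Measurable (cv kap (fun y => (D y * a y) ^ 2)) := cv_meas measurable_kap (by fun_prop)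
  have hG2 : ∀ x, G x ^ 2 ≤ 12 * N * cv kap (fun y => (D y * a y) ^ 2) x
      + (96 * N ^ 3 + 768 * N) * cv kap (fun y => w y ^ 2) x + 1536 * N ^ 4 * r ^ 2
      + 768 * r * N * cv kr (fun y => q y ^ 2) x := by
    intro x
    have e1 : G x ≤ 2 * cv kap (fun y => D y * a y * a y) x
        + (2 * N * (cv kap (fun y => w y * a y) x + cv kap (fun y => w y * b y) x)
          + 4 * (cv kap (fun y => w y * p y) x + cv kap (fun y => w y * q y) x))
        + (2 * N * cv kr (fun y => b y ^ 2) x + 4 * cv kr (fun y => b y * q y) x) := by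
      refine (hG x).trans (le_of_eq ?_)
      have hk := measurable_kap
      rw [cv_add hk (by fun_prop), cv_add hk (by fun_prop), cv_const_mul hk (by fun_prop),
        cv_const_mul hk (by fun_prop), cv_const_mul hk (by fun_prop), cv_add hk (by fun_prop),
        cv_add hk (by fun_prop), cv_add hkr (by fun_prop), cv_const_mul hkr (by fun_prop),
        cv_const_mul hkr (by fun_prop)]
      ring
    have wg : ∀ {g : E2 → ℝ≥0∞} {N₁ : ℝ≥0∞}, Measurable g → cv kap (fun y => g y ^ 2) x ≤ N₁ →
        cv kap (fun y => w y * g y) x ^ 2 ≤ N₁ * cv kap (fun y => w y ^ 2) x := by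
      intro g N₁ hg h
      refine (cv_cs measurable_kap hw hg x).trans ?_
      rw [mul_comm]
      gcongr
    have y1 : cv kr (fun y => b y ^ 2) x ≤ 8 * r * N := (cv_sup hkr supb x).trans (mul_le_mul_left hkI _)
    calc G x ^ 2 ≤ _ := pow_le_pow_left₀ zero_le e1 2
      _ ≤ 3 * ((2 * cv kap (fun y => D y * a y * a y) x) ^ 2
        + 2 * ((2 * N * (cv kap (fun y => w y * a y) x + cv kap (fun y => w y * b y) x)) ^ 2
          + (4 * (cv kap (fun y => w y * p y) x + cv kap (fun y => w y * q y) x)) ^ 2)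
        + 2 * ((2 * N * cv kr (fun y => b y ^ 2) x) ^ 2 + (4 * cv kr (fun y => b y * q y) x) ^ 2)) := by
          refine (sq3 _ _ _).trans ?_
          gcongr
          · exact sq2 _ _
          · exact sq2 _ _
      _ = 3 * (4 * cv kap (fun y => D y * a y * a y) x ^ 2
        + 2 * (4 * N ^ 2 * (cv kap (fun y => w y * a y) x + cv kap (fun y => w y * b y) x) ^ 2
          + 16 * (cv kap (fun y => w y * p y) x + cv kap (fun y => w y * q y) x) ^ 2)
        + 2 * (4 * N ^ 2 * cv kr (fun y => b y ^ 2) x ^ 2 + 16 * cv kr (fun y => b y * q y) x ^ 2)) := by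
          ring
      _ ≤ 3 * (4 * (cv kap (fun y => (D y * a y) ^ 2) x * N)
        + 2 * (4 * N ^ 2 * (2 * (N * cv kap (fun y => w y ^ 2) x + N * cv kap (fun y => w y ^ 2) x))
          + 16 * (2 * ((2 * N) * cv kap (fun y => w y ^ 2) x + (2 * N) * cv kap (fun y => w y ^ 2) x)))
        + 2 * (4 * N ^ 2 * (8 * r * N) ^ 2 + 16 * ((8 * r * N) * cv kr (fun y => q y ^ 2) x))) := by
          gcongr
          · exact (cv_cs measurable_kap (hDm.mul ha) ha x).trans (mul_le_mul_right (cva x) _)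
          · refine (sq2 _ _).trans ?_
            gcongr
            · exact wg ha (cva x)
            · exact wg hb (cvb x)
          · refine (sq2 _ _).trans ?_
            gcongr
            · exact wg hp (cvp x)
            · exact wg hq (cvq x)
          · refine (cv_cs hkr hb hq x).trans ?_
            gcongr
      _ = _ := by ring
  calc _ ≤ ∫⁻ x, (12 * N * (a x ^ 2 * cv kap (fun y => (D y * a y) ^ 2) x)
          + (96 * N ^ 3 + 768 * N) * (a x ^ 2 * cv kap (fun y => w y ^ 2) x)
          + 1536 * N ^ 4 * r ^ 2 * a x ^ 2
          + 768 * r * N * N * cv kr (fun y => q y ^ 2) x) := by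
        refine lintegral_mono fun x => ?_
        calc a x ^ 2 * G x ^ 2 ≤ a x ^ 2 * (12 * N * cv kap (fun y => (D y * a y) ^ 2) x
            + (96 * N ^ 3 + 768 * N) * cv kap (fun y => w y ^ 2) x + 1536 * N ^ 4 * r ^ 2)
            + a x ^ 2 * (768 * r * N * cv kr (fun y => q y ^ 2) x) := by
              rw [← mul_add]
              exact mul_le_mul_right (hG2 x) _
          _ ≤ a x ^ 2 * (12 * N * cv kap (fun y => (D y * a y) ^ 2) x
            + (96 * N ^ 3 + 768 * N) * cv kap (fun y => w y ^ 2) x + 1536 * N ^ 4 * r ^ 2)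
            + N * (768 * r * N * cv kr (fun y => q y ^ 2) x) := by
              gcongr
              exact supa x
          _ = _ := by ring
    _ = 12 * N * (∫⁻ x, a x ^ 2 * cv kap (fun y => (D y * a y) ^ 2) x)
          + (96 * N ^ 3 + 768 * N) * (∫⁻ x, a x ^ 2 * cv kap (fun y => w y ^ 2) x)
          + 1536 * N ^ 4 * r ^ 2 * (∫⁻ x, a x ^ 2)
          + 768 * r * N * N * ∫⁻ x, cv kr (fun y => q y ^ 2) x := by
        rw [lintegral_add_left (by fun_prop), lintegral_add_left (by fun_prop),
          lintegral_add_left (by fun_prop), lintegral_const_mul _ (by fun_prop),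
          lintegral_const_mul _ (by fun_prop), lintegral_const_mul _ (by fun_prop),
          lintegral_const_mul _ (by fun_prop)]
    _ ≤ 12 * N * (N * (6 * N * N * (∫⁻ x, w x ^ 2) + 192 * N ^ 3 * r ^ 2))
          + (96 * N ^ 3 + 768 * N) * (N * ∫⁻ x, w x ^ 2)
          + 1536 * N ^ 4 * r ^ 2 * N
          + 768 * r * N * N * (8 * r * N) := by
        gcongr
        · refine (estW (w := fun y => D y * a y) (by fun_prop) ha cva).trans ?_
          gcongr
          refine le_trans (le_of_eq ?_) (estD ha hb hw hkr hkI cva cvb supb hD ha cva inta)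
          refine lintegral_congr fun x => by ring
        · exact estW hw ha cva
        · rw [cv_total hkr (by fun_prop) hke]
          gcongr
    _ = _ := by ring
end est
end CSS

namespace CSS
open Filter Topology LineDeriv

lemma norm_K (R : ℝ) (z : E2) : ‖K R z‖ = ((max R ‖z‖) ^ 2)⁻¹ * ‖z‖ := by
  rw [K, norm_smul, norm_perp, Real.norm_eq_abs, abs_of_nonneg (by positivity)]

lemma kap_eq {z : E2} (hz : z ≠ 0) : kap z = ENNReal.ofReal ‖z‖⁻¹ := by
  rw [kap, ← ofReal_norm, ENNReal.ofReal_inv_of_pos (norm_pos_iff.2 hz)]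

lemma K_le {R : ℝ} (z : E2) : ‖K R z‖ₑ ≤ kap z := by
  by_cases hz : z = 0
  · simp [kap, hz]
  have hz' := norm_pos_iff.2 hz
  rw [kap_eq hz, ← ofReal_norm, norm_K]
  apply ENNReal.ofReal_le_ofReal
  calc ((max R ‖z‖) ^ 2)⁻¹ * ‖z‖ ≤ (‖z‖ ^ 2)⁻¹ * ‖z‖ := by
        gcongr; exact le_max_right _ _
    _ = _ := by field_simp

lemma K_sub_le {R : ℝ} (hR : 0 < R) (z : E2) : ‖K 0 z - K R z‖ₑ ≤ kapR R z := by
  by_cases h : ‖z‖ < R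
  · have : kapR R z = kap z := by
      simp [kapR, Set.indicator, h]
    rw [this]
    by_cases hz : z = 0
    · simp [kap, hz]
    have hz' := norm_pos_iff.2 hz
    rw [kap_eq hz, ← ofReal_norm]
    apply ENNReal.ofReal_le_ofReal
    rw [K, K, ← sub_smul, norm_smul, norm_perp, max_eq_right hz'.le, max_eq_left h.le, Real.norm_eq_abs]
    have h1 : (R ^ 2)⁻¹ ≤ (‖z‖ ^ 2)⁻¹ := by gcongr
    have h2 : 0 ≤ (R ^ 2)⁻¹ := by positivity
    rw [abs_of_nonneg (by linarith)]
    calc _ ≤ (‖z‖ ^ 2)⁻¹ * ‖z‖ := by gcongr; linarith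
      _ = _ := by field_simp
  · have : K 0 z = K R z := by
      rw [K, K, max_eq_right (norm_nonneg _), max_eq_right (not_lt.1 h)]
    simp [this]

lemma measurable_K (R : ℝ) : Measurable (K R) := by
  unfold K
  have := continuous_perp.measurable
  fun_prop

/-- squared `H²` bound -/
def Bd (u : SchwartzMap E2 ℂ) (N : ℝ≥0∞) : Prop :=
  (∫⁻ x, ‖u x‖ₑ ^ 2) + (∫⁻ x, ‖fderiv ℝ u x‖ₑ ^ 2) + (∫⁻ x, ‖fderiv ℝ (fderiv ℝ u) x‖ₑ ^ 2) ≤ N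

lemma norm_le_sum (x : E2) : ‖x‖ ≤ |x 0| + |x 1| := by
  rw [EuclideanSpace.norm_eq, Fin.sum_univ_two]
  simp only [Real.norm_eq_abs]
  rw [Real.sqrt_le_left (by positivity)]
  nlinarith [abs_nonneg (x 0), abs_nonneg (x 1)]

lemma vec_eq (x : E2) : x = x 0 • e2 0 + x 1 • e2 1 := by
  ext i; fin_cases i <;> simp [e2]

lemma norm_e2 (j : Fin 2) : ‖e2 j‖ = 1 := by simp [e2]

lemma opnorm_sq (L : E2 →L[ℝ] ℂ) : ‖L‖ ^ 2 ≤ ‖L (e2 0)‖ ^ 2 + ‖L (e2 1)‖ ^ 2 := by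
  have : ‖L‖ ≤ Real.sqrt (‖L (e2 0)‖ ^ 2 + ‖L (e2 1)‖ ^ 2) := by
    refine L.opNorm_le_bound (by positivity) fun x => ?_
    have e : L x = x 0 • L (e2 0) + x 1 • L (e2 1) := by
      conv_lhs => rw [vec_eq x]
      simp
    rw [e, EuclideanSpace.norm_eq, ← Real.sqrt_mul (by positivity), Fin.sum_univ_two]
    refine (norm_add_le _ _).trans ?_
    rw [norm_smul, norm_smul]
    apply Real.le_sqrt_of_sq_le
    nlinarith [sq_nonneg (‖x 0‖ * ‖L (e2 1)‖ - ‖x 1‖ * ‖L (e2 0)‖)]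
  calc ‖L‖ ^ 2 ≤ _ := pow_le_pow_left₀ (norm_nonneg _) this 2
    _ = _ := Real.sq_sqrt (by positivity)

lemma opnorm_sqe (L : E2 →L[ℝ] ℂ) : ‖L‖ₑ ^ 2 ≤ ‖L (e2 0)‖ₑ ^ 2 + ‖L (e2 1)‖ₑ ^ 2 := by
  rw [sq_enorm, sq_enorm, ← ENNReal.ofReal_add (by positivity) (by positivity), ← ofReal_norm,
    ← ENNReal.ofReal_pow (norm_nonneg _)]
  exact ENNReal.ofReal_le_ofReal (opnorm_sq L)

lemma clm_le (L : E2 →L[ℝ] ℂ) (v : E2) : ‖L v‖ₑ ≤ ‖L‖ₑ * ‖v‖ₑ := by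
  rw [← ofReal_norm, ← ofReal_norm, ← ofReal_norm, ← ENNReal.ofReal_mul (norm_nonneg _)]
  exact ENNReal.ofReal_le_ofReal (L.le_opNorm v)

lemma clm_e2_le (L : E2 →L[ℝ] ℂ) (j : Fin 2) : ‖L (e2 j)‖ₑ ≤ ‖L‖ₑ := by
  refine (clm_le L _).trans ?_
  rw [← ofReal_norm (e2 j), norm_e2]; simp

lemma pd_apply (u : SchwartzMap E2 ℂ) (j : Fin 2) (x : E2) :
    (∂_{e2 j} u : SchwartzMap E2 ℂ) x = fderiv ℝ u x (e2 j) :=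
  SchwartzMap.lineDerivOp_apply_eq_fderiv _ _ _

lemma pd_fderiv (u : SchwartzMap E2 ℂ) (j : Fin 2) (x v : E2) :
    fderiv ℝ (∂_{e2 j} u : SchwartzMap E2 ℂ) x v = fderiv ℝ (fderiv ℝ u) x v (e2 j) := by
  have h : (⇑(∂_{e2 j} u : SchwartzMap E2 ℂ)) = fun y => fderiv ℝ u y (e2 j) :=
    funext (pd_apply u j)
  rw [h]
  have hd : DifferentiableAt ℝ (fderiv ℝ u) x :=
    ((u.smooth 2).fderiv_right (m := 1) (by norm_num)).differentiable (by norm_num) x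
  rw [fderiv_clm_apply hd (differentiableAt_const _)]
  simp

lemma pd_fderiv_le (u : SchwartzMap E2 ℂ) (j : Fin 2) (x : E2) :
    ‖fderiv ℝ (∂_{e2 j} u : SchwartzMap E2 ℂ) x‖ₑ ≤ ‖fderiv ℝ (fderiv ℝ u) x‖ₑ := by
  rw [← ofReal_norm, ← ofReal_norm]
  apply ENNReal.ofReal_le_ofReal
  refine ContinuousLinearMap.opNorm_le_bound _ (norm_nonneg _) fun v => ?_
  rw [pd_fderiv]
  refine (ContinuousLinearMap.le_opNorm _ _).trans ?_
  rw [norm_e2, mul_one]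
  exact ContinuousLinearMap.le_opNorm _ _

section bd
variable {u : SchwartzMap E2 ℂ} {N : ℝ≥0∞}

lemma Bd.int0 (h : Bd u N) : ∫⁻ x, ‖u x‖ₑ ^ 2 ≤ N := (le_self_add.trans le_self_add).trans h
lemma Bd.int1 (h : Bd u N) : ∫⁻ x, ‖fderiv ℝ u x‖ₑ ^ 2 ≤ N := (le_add_self.trans le_self_add).trans h
lemma Bd.int2 (h : Bd u N) : ∫⁻ x, ‖fderiv ℝ (fderiv ℝ u) x‖ₑ ^ 2 ≤ N := le_add_self.trans h

lemma Bd.cv0 (h : Bd u N) (x : E2) : cv kap (fun y => ‖u y‖ₑ ^ 2) x ≤ N := by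
  rw [cv_kap_eq]
  exact (hardy0 u x).trans (le_self_add.trans h)

lemma Bd.cvj (h : Bd u N) (x : E2) (j : Fin 2) : cv kap (fun y => ‖fderiv ℝ u y (e2 j)‖ₑ ^ 2) x ≤ N := by
  rw [cv_kap_eq]
  have := hardy0 (∂_{e2 j} u : SchwartzMap E2 ℂ) x
  simp only [pd_apply] at this
  refine this.trans (le_trans ?_ ((add_le_add_left le_add_self _).trans h))
  gcongr with y y
  · exact clm_e2_le _ _
  · exact pd_fderiv_le u j y

lemma Bd.cv1 (h : Bd u N) (x : E2) : cv kap (fun y => ‖fderiv ℝ u y‖ₑ ^ 2) x ≤ 2 * N := by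
  have := (continuous_fderiv_S u).measurable
  calc _ ≤ cv kap (fun y => ‖fderiv ℝ u y (e2 0)‖ₑ ^ 2 + ‖fderiv ℝ u y (e2 1)‖ₑ ^ 2) x :=
        cv_mono fun y => opnorm_sqe _
    _ = _ := cv_add measurable_kap (by fun_prop) _
    _ ≤ N + N := add_le_add (h.cvj x 0) (h.cvj x 1)
    _ = _ := by ring

lemma Bd.sup (h : Bd u N) (x : E2) : ‖u x‖ₑ ^ 2 ≤ N := by
  have h1 := sup0 u x
  rw [← cv_kap_eq (fun y => ‖u y‖ₑ ^ 2 + ‖fderiv ℝ u y‖ₑ ^ 2), cv_add measurable_kap (meas_norm_sq u)] at h1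
  have h2 : 3 * ‖u x‖ₑ ^ 2 ≤ 3 * N := by
    refine h1.trans ((add_le_add (h.cv0 x) (h.cv1 x)).trans (le_of_eq (by ring)))
  exact (ENNReal.mul_le_mul_iff_right (by norm_num) (by norm_num)).1 h2

end bd

lemma enorm_nsq (a : ℂ) : ‖(‖a‖ ^ 2 : ℝ)‖ₑ = ‖a‖ₑ ^ 2 := by
  rw [sq_enorm, Real.enorm_of_nonneg (by positivity)]

lemma A_integrable {R : ℝ} {u : SchwartzMap E2 ℂ} {x : E2}
    (h : cv kap (fun y => ‖u y‖ₑ ^ 2) x ≠ ⊤) :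
    Integrable (fun y => (‖u y‖ ^ 2) • K R (x - y)) := by
  have hK := measurable_K R
  have hu := u.continuous.measurable
  refine ⟨Measurable.aestronglyMeasurable (by fun_prop), ?_⟩
  refine lt_of_le_of_lt ?_ (lt_top_iff_ne_top.2 h)
  refine lintegral_mono fun y => ?_
  rw [enorm_smul, enorm_nsq, mul_comm]
  gcongr
  exact K_le _

lemma A_le {R : ℝ} {u : SchwartzMap E2 ℂ} (x : E2) :
    ‖Apot R u x‖ₑ ≤ cv kap (fun y => ‖u y‖ₑ ^ 2) x := by
  refine (enorm_integral_le_lintegral_enorm _).trans ?_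
  refine lintegral_mono fun y => ?_
  rw [enorm_smul, enorm_nsq, mul_comm]
  gcongr
  exact K_le _

lemma A_meas (R : ℝ) (u : SchwartzMap E2 ℂ) : Measurable (Apot R u) := by
  have hK := measurable_K R
  have hu := u.continuous.measurable
  have : Measurable (fun p : E2 × E2 => (‖u p.2‖ ^ 2) • K R (p.1 - p.2)) := by fun_prop
  exact this.stronglyMeasurable.integral_prod_right'.measurable

lemma sqdiff (a b : ℂ) : ‖(‖a‖ ^ 2 - ‖b‖ ^ 2 : ℝ)‖ₑ ≤ ‖a - b‖ₑ * ‖a‖ₑ + ‖a - b‖ₑ * ‖b‖ₑ := by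
  rw [← mul_add, ← ofReal_norm, ← ofReal_norm, ← ofReal_norm, ← ofReal_norm,
    ← ENNReal.ofReal_add (by positivity) (by positivity), ← ENNReal.ofReal_mul (by positivity)]
  apply ENNReal.ofReal_le_ofReal
  have h1 : ‖a‖ ^ 2 - ‖b‖ ^ 2 = (‖a‖ - ‖b‖) * (‖a‖ + ‖b‖) := by ring
  rw [h1, norm_mul, Real.norm_eq_abs, Real.norm_eq_abs, abs_of_nonneg (by positivity : 0 ≤ ‖a‖ + ‖b‖)]
  gcongr
  exact abs_norm_sub_norm_le a b

lemma D_le {R : ℝ} (hR : 0 < R) (φ ψ : SchwartzMap E2 ℂ) (x : E2)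
    (h1 : cv kap (fun y => ‖φ y‖ₑ ^ 2) x ≠ ⊤) (h2 : cv kap (fun y => ‖ψ y‖ₑ ^ 2) x ≠ ⊤) :
    ‖Apot 0 φ x - Apot R ψ x‖ₑ ≤ cv kap (fun y => ‖φ y - ψ y‖ₑ * ‖φ y‖ₑ) x
      + cv kap (fun y => ‖φ y - ψ y‖ₑ * ‖ψ y‖ₑ) x + cv (kapR R) (fun y => ‖ψ y‖ₑ ^ 2) x := by
  have hφ := φ.continuous.measurable
  have hψ := ψ.continuous.measurable
  rw [← cv_add measurable_kap (by fun_prop)]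
  unfold Apot convKs cv
  have hk := measurable_kap
  rw [← integral_sub (A_integrable h1) (A_integrable h2), ← lintegral_add_left (by fun_prop)]
  refine (enorm_integral_le_lintegral_enorm _).trans (lintegral_mono fun y => ?_)
  have : (‖φ y‖ ^ 2) • K 0 (x - y) - (‖ψ y‖ ^ 2) • K R (x - y)
      = (‖φ y‖ ^ 2 - ‖ψ y‖ ^ 2) • K 0 (x - y) + (‖ψ y‖ ^ 2) • (K 0 (x - y) - K R (x - y)) := by
    module
  rw [this]
  refine (enorm_add_le _ _).trans ?_
  rw [enorm_smul, enorm_smul, enorm_nsq, mul_comm, mul_comm (‖ψ y‖ₑ ^ 2)]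
  gcongr
  · exact K_le _
  · exact sqdiff _ _
  · exact K_sub_le hR _

/-- the field inside `convKv` -/
def FF (β R : ℝ) (u : E2 → ℂ) (y : E2) : E2 := (2 * β * ‖u y‖ ^ 2) • Apot R u y + Jf u y

lemma Jf_apply (u : E2 → ℂ) (x : E2) (j : Fin 2) :
    Jf u x j = 2 * ((starRingEnd ℂ) (u x) * fderiv ℝ u x (e2 j)).im := rfl

/-- bilinear current -/
def Jb (a : ℂ) (L : E2 →L[ℝ] ℂ) : E2 :=
  (WithLp.equiv 2 (Fin 2 → ℝ)).symm fun j => 2 * ((starRingEnd ℂ) a * L (e2 j)).im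

lemma Jb_apply (a : ℂ) (L : E2 →L[ℝ] ℂ) (j : Fin 2) :
    Jb a L j = 2 * ((starRingEnd ℂ) a * L (e2 j)).im := rfl

lemma Jb_le (a : ℂ) (L : E2 →L[ℝ] ℂ) : ‖Jb a L‖ₑ ≤ 4 * (‖a‖ₑ * ‖L‖ₑ) := by
  rw [show (4:ℝ≥0∞) = ENNReal.ofReal 4 by simp, ← ofReal_norm, ← ofReal_norm, ← ofReal_norm,
    ← ENNReal.ofReal_mul (by positivity), ← ENNReal.ofReal_mul (by positivity)]
  apply ENNReal.ofReal_le_ofReal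
  have hj : ∀ j, |Jb a L j| ≤ 2 * (‖a‖ * ‖L‖) := by
    intro j
    rw [Jb_apply, abs_mul, abs_two]
    gcongr
    refine (Complex.abs_im_le_norm _).trans ?_
    rw [norm_mul, RCLike.norm_conj]
    gcongr
    have := L.le_opNorm (e2 j)
    rwa [norm_e2, mul_one] at this
  have := norm_le_sum (Jb a L)
  linarith [hj 0, hj 1]

lemma Jf_eq (u : E2 → ℂ) (x : E2) : Jf u x = Jb (u x) (fderiv ℝ u x) := rfl

lemma Jf_cont (u : SchwartzMap E2 ℂ) : Continuous (Jf u) := by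
  unfold Jf
  refine (PiLp.continuous_toLp 2 _).comp ?_
  have := continuous_fderiv_S u
  have := u.continuous
  fun_prop

lemma FF_meas (β R : ℝ) (u : SchwartzMap E2 ℂ) : Measurable (FF β R u) := by
  unfold FF
  have := A_meas R u
  have := (Jf_cont u).measurable
  have := u.continuous.measurable
  fun_prop

lemma enorm_beta {β : ℝ} (hβ : |β| ≤ 1) : ‖β‖ₑ ≤ 1 := by
  rw [Real.enorm_eq_ofReal_abs]
  simpa using ENNReal.ofReal_le_ofReal hβ

lemma FF_le {β R : ℝ} (hβ : |β| ≤ 1) {u : SchwartzMap E2 ℂ} {N : ℝ≥0∞} (h : Bd u N) (y : E2) :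
    ‖FF β R u y‖ₑ ≤ 2 * N * ‖u y‖ₑ ^ 2 + 4 * (‖u y‖ₑ * ‖fderiv ℝ u y‖ₑ) := by
  unfold FF
  refine (enorm_add_le _ _).trans ?_
  rw [enorm_smul, enorm_mul, enorm_mul, enorm_nsq]
  have h2 : ‖(2:ℝ)‖ₑ = 2 := by rw [Real.enorm_of_nonneg (by norm_num)]; simp
  rw [h2]
  refine add_le_add ?_ ?_
  · calc 2 * ‖β‖ₑ * ‖u y‖ₑ ^ 2 * ‖Apot R u y‖ₑ ≤ 2 * 1 * ‖u y‖ₑ ^ 2 * N := by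
          gcongr
          · exact enorm_beta hβ
          · exact (A_le y).trans (h.cv0 y)
      _ = _ := by ring
  · rw [Jf_eq]; exact Jb_le _ _

lemma inner_enorm_le (a b : E2) : ‖⟪a, b⟫‖ₑ ≤ ‖a‖ₑ * ‖b‖ₑ := by
  rw [← ofReal_norm, ← ofReal_norm, ← ofReal_norm, ← ENNReal.ofReal_mul (by positivity)]
  exact ENNReal.ofReal_le_ofReal (norm_inner_le_norm a b)

lemma conv_integrable {R : ℝ} {F : E2 → E2} (hF : Measurable F) {x : E2}
    (h : cv kap (fun y => ‖F y‖ₑ) x ≠ ⊤) : Integrable (fun y => ⟪K R (x - y), F y⟫) := by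
  have hK := measurable_K R
  refine ⟨Measurable.aestronglyMeasurable (by fun_prop), ?_⟩
  refine lt_of_le_of_lt (lintegral_mono fun y => ?_) (lt_top_iff_ne_top.2 h)
  refine (inner_enorm_le _ _).trans ?_
  gcongr
  exact K_le _

lemma conv_le {R : ℝ} {F : E2 → E2} {x : E2} : ‖convKv R F x‖ₑ ≤ cv kap (fun y => ‖F y‖ₑ) x := by
  refine (enorm_integral_le_lintegral_enorm _).trans (lintegral_mono fun y => ?_)
  refine (inner_enorm_le _ _).trans ?_
  gcongr
  exact K_le _

lemma conv_meas (R : ℝ) {F : E2 → E2} (hF : Measurable F) : Measurable (convKv R F) := by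
  have hK := measurable_K R
  have : Measurable (fun p : E2 × E2 => ⟪K R (p.1 - p.2), F p.2⟫) := by fun_prop
  exact this.stronglyMeasurable.integral_prod_right'.measurable

lemma cvFF_le {β R : ℝ} (hβ : |β| ≤ 1) {u : SchwartzMap E2 ℂ} {N : ℝ≥0∞} (h : Bd u N) (x : E2) :
    cv kap (fun y => ‖FF β R u y‖ₑ) x ≤ 2 * N ^ 2 + 6 * N := by
  have hu := u.continuous.measurable
  have hdu := (continuous_fderiv_S u).measurable
  have hk := measurable_kap
  calc _ ≤ cv kap (fun y => (2 * N * ‖u y‖ₑ ^ 2 + (2 * ‖u y‖ₑ ^ 2 + 2 * ‖fderiv ℝ u y‖ₑ ^ 2))) x := by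
        refine cv_mono fun y => (FF_le hβ h y).trans ?_
        gcongr
        calc 4 * (‖u y‖ₑ * ‖fderiv ℝ u y‖ₑ) = 2 * (2 * (‖u y‖ₑ * ‖fderiv ℝ u y‖ₑ)) := by ring
          _ ≤ 2 * (‖u y‖ₑ ^ 2 + ‖fderiv ℝ u y‖ₑ ^ 2) := by gcongr; exact amgm _ _
          _ = _ := by ring
    _ = 2 * N * cv kap (fun y => ‖u y‖ₑ ^ 2) x + (2 * cv kap (fun y => ‖u y‖ₑ ^ 2) x
          + 2 * cv kap (fun y => ‖fderiv ℝ u y‖ₑ ^ 2) x) := by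
        rw [cv_add hk (by fun_prop), cv_add hk (by fun_prop), cv_const_mul hk (by fun_prop),
          cv_const_mul hk (by fun_prop), cv_const_mul hk (by fun_prop)]
    _ ≤ 2 * N * N + (2 * N + 2 * (2 * N)) := by
        gcongr
        · exact h.cv0 x
        · exact h.cv0 x
        · exact h.cv1 x
    _ = _ := by ring

end CSS

namespace CSS
open Filter Topology LineDeriv

lemma divfree_sub (R : ℝ) (h : E2 → ℝ) (hh : ContDiff ℝ 1 h) (x : E2) :
    ∫ y, fderiv ℝ h y (K R (x - y)) = 0 := by
  have e := integral_sub_left_eq_self (fun y => fderiv ℝ h y (K R (x - y))) volume x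
  simp only [_root_.sub_sub_cancel] at e
  rw [← e]
  have := divfree R (fun z => h (x - z)) (hh.comp (contDiff_const.sub contDiff_id))
  have e2 : ∀ z, fderiv ℝ (fun z => h (x - z)) z = -fderiv ℝ h (x - z) := by
    intro z
    have h1 : HasFDerivAt h (fderiv ℝ h (x - z)) (x - z) :=
      (hh.differentiable (by norm_num) _).hasFDerivAt
    have h2 := h1.comp z ((hasFDerivAt_id z).const_sub x)
    have h3 : HasFDerivAt (fun z => h (x - z)) _ z := h2
    rw [h3.fderiv]
    ext v
    simp
  simp only [e2] at this
  simpa [integral_neg] using this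

lemma divfree_add (R : ℝ) (h : E2 → ℝ) (hh : ContDiff ℝ 1 h) (y : E2) :
    ∫ x, fderiv ℝ h x (K R (x - y)) = 0 := by
  rw [← integral_add_right_eq_self _ y]
  simp only [add_sub_cancel_right]
  have := divfree R (fun z => h (z + y)) (hh.comp (contDiff_id.add contDiff_const))
  simpa only [fderiv_comp_add_right] using this

lemma inner_grad (L : E2 →L[ℝ] ℝ) (v g : E2) (hg : ∀ j, g j = L (e2 j)) : ⟪v, g⟫ = L v := by
  rw [PiLp.inner_apply, Fin.sum_univ_two, hg, hg]
  conv_rhs => rw [vec_eq v]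
  simp [mul_comm]

section
variable (φ ψ : SchwartzMap E2 ℂ)

/-- `h = 2 Im (ψ̄ (φ - ψ))` -/
def hh (x : E2) : ℝ := 2 * ((starRingEnd ℂ) (ψ x) * (φ x - ψ x)).im

lemma hh_contDiff : ContDiff ℝ 1 (hh φ ψ) := by
  unfold hh
  have h1 := φ.smooth 1
  have h2 := ψ.smooth 1
  have h3 : ContDiff ℝ 1 fun x => (starRingEnd ℂ) (ψ x) * (φ x - ψ x) :=
    (Complex.conjCLE.contDiff.comp h2).mul (h1.sub h2)
  have h4 : ContDiff ℝ 1 fun x => ((starRingEnd ℂ) (ψ x) * (φ x - ψ x)).im :=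
    Complex.imCLM.contDiff.comp h3
  exact contDiff_const.mul h4

lemma hh_fderiv (x v : E2) : fderiv ℝ (hh φ ψ) x v
    = 2 * ((starRingEnd ℂ) (ψ x) * (fderiv ℝ φ x v - fderiv ℝ ψ x v)
      + (starRingEnd ℂ) (fderiv ℝ ψ x v) * (φ x - ψ x)).im := by
  have h1 := φ.hasFDerivAt x
  have h2 := ψ.hasFDerivAt x
  have h3 := ((Complex.conjCLE.toContinuousLinearMap.hasFDerivAt.comp x h2).mul (h1.sub h2))
  have h4 := (Complex.imCLM.hasFDerivAt.comp x h3).const_mul 2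
  have h5 : HasFDerivAt (hh φ ψ) _ x := h4
  rw [h5.fderiv]
  simp
  ring

/-- gradient of `h` as a vector -/
def gradh (x : E2) : E2 := (WithLp.equiv 2 (Fin 2 → ℝ)).symm fun j => fderiv ℝ (hh φ ψ) x (e2 j)

/-- the remainder field -/
def PP (β R : ℝ) (y : E2) : E2 :=
  (2 * β * ‖φ y‖ ^ 2) • (Apot 0 φ y - Apot R ψ y)
    + (2 * β * (‖φ y‖ ^ 2 - ‖ψ y‖ ^ 2)) • Apot R ψ y
    + Jb (φ y - ψ y) (fderiv ℝ φ y + fderiv ℝ ψ y)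

lemma J_decomp (y : E2) : Jf φ y - Jf ψ y
    = Jb (φ y - ψ y) (fderiv ℝ φ y + fderiv ℝ ψ y) + gradh φ ψ y := by
  ext j
  change Jf φ y j - Jf ψ y j = Jb (φ y - ψ y) (fderiv ℝ φ y + fderiv ℝ ψ y) j
    + fderiv ℝ (hh φ ψ) y (e2 j)
  rw [Jf_apply, Jf_apply, Jb_apply, hh_fderiv]
  simp
  ring

lemma FF_decomp (β R : ℝ) (y : E2) : FF β 0 φ y - FF β R ψ y = PP φ ψ β R y + gradh φ ψ y := by
  have := J_decomp φ ψ y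
  have h2 : Jf φ y = Jf ψ y + (Jb (φ y - ψ y) (fderiv ℝ φ y + fderiv ℝ ψ y) + gradh φ ψ y) := by
    rw [← this]; abel
  unfold FF PP
  rw [h2]
  module

lemma gradh_meas : Measurable (gradh φ ψ) := by
  unfold gradh
  have := (hh_contDiff φ ψ).continuous_fderiv (by norm_num)
  refine Continuous.measurable ((PiLp.continuous_toLp 2 _).comp ?_)
  fun_prop

lemma PP_meas (β R : ℝ) : Measurable (PP φ ψ β R) := by
  have : PP φ ψ β R = fun y => FF β 0 φ y - FF β R ψ y - gradh φ ψ y := by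
    funext y; rw [FF_decomp]; abel
  rw [this]
  exact ((FF_meas _ _ _).sub (FF_meas _ _ _)).sub (gradh_meas φ ψ)

lemma PP_le {β R : ℝ} (hβ : |β| ≤ 1) {N : ℝ≥0∞} (hψ : Bd ψ N) (y : E2) :
    ‖PP φ ψ β R y‖ₑ ≤ 2 * (‖Apot 0 φ y - Apot R ψ y‖ₑ * ‖φ y‖ₑ * ‖φ y‖ₑ)
      + 2 * N * (‖φ y - ψ y‖ₑ * ‖φ y‖ₑ + ‖φ y - ψ y‖ₑ * ‖ψ y‖ₑ)
      + 4 * (‖φ y - ψ y‖ₑ * ‖fderiv ℝ φ y‖ₑ + ‖φ y - ψ y‖ₑ * ‖fderiv ℝ ψ y‖ₑ) := by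
  unfold PP
  refine (enorm_add_le _ _).trans (add_le_add ((enorm_add_le _ _).trans (add_le_add ?_ ?_)) ?_)
  · rw [enorm_smul, enorm_mul, enorm_mul, enorm_nsq]
    have h2 : ‖(2:ℝ)‖ₑ = 2 := by rw [Real.enorm_of_nonneg (by norm_num)]; simp
    rw [h2]
    calc _ ≤ 2 * 1 * ‖φ y‖ₑ ^ 2 * ‖Apot 0 φ y - Apot R ψ y‖ₑ := by
          gcongr; exact enorm_beta hβ
      _ = _ := by ring
  · rw [enorm_smul, enorm_mul, enorm_mul]
    have h2 : ‖(2:ℝ)‖ₑ = 2 := by rw [Real.enorm_of_nonneg (by norm_num)]; simp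
    rw [h2]
    calc _ ≤ 2 * 1 * (‖φ y - ψ y‖ₑ * ‖φ y‖ₑ + ‖φ y - ψ y‖ₑ * ‖ψ y‖ₑ) * N := by
          gcongr
          · exact enorm_beta hβ
          · exact sqdiff _ _
          · exact (A_le y).trans (hψ.cv0 y)
      _ = _ := by ring
  · refine (Jb_le _ _).trans ?_
    rw [← mul_add]
    gcongr
    exact enorm_add_le (fderiv ℝ φ y) (fderiv ℝ ψ y)

lemma G_le {β R : ℝ} (hβ : |β| ≤ 1) (hR : 0 < R) {N : ℝ≥0∞} (hN : N ≠ ⊤) (hφ : Bd φ N) (hψ : Bd ψ N)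
    (x : E2) :
    ‖convKv 0 (FF β 0 φ) x - convKv R (FF β R ψ) x‖ₑ
      ≤ cv kap (fun y => ‖PP φ ψ β R y‖ₑ) x + cv (kapR R) (fun y => ‖FF β R ψ y‖ₑ) x := by
  by_cases hfin : cv kap (fun y => ‖PP φ ψ β R y‖ₑ) x + cv (kapR R) (fun y => ‖FF β R ψ y‖ₑ) x = ⊤
  · rw [hfin]; exact le_top
  have hfin2 : 2 * N ^ 2 + 6 * N ≠ ⊤ := by finiteness
  have i1 : Integrable (fun y => ⟪K 0 (x - y), FF β 0 φ y⟫) :=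
    conv_integrable (FF_meas _ _ _) (ne_top_of_le_ne_top hfin2 (cvFF_le hβ hφ x))
  have i2 : Integrable (fun y => ⟪K R (x - y), FF β R ψ y⟫) :=
    conv_integrable (FF_meas _ _ _) (ne_top_of_le_ne_top hfin2 (cvFF_le hβ hψ x))
  have hK0 := measurable_K 0
  have hKR := measurable_K R
  have hk := measurable_kap
  have hkR := measurable_kapR R
  have hP := PP_meas φ ψ β R
  have hF := FF_meas β R ψ
  set Q : E2 → ℝ := fun y => ⟪K 0 (x - y), PP φ ψ β R y⟫ + ⟪K 0 (x - y) - K R (x - y), FF β R ψ y⟫ with hQ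
  have hQle : ∫⁻ y, ‖Q y‖ₑ ≤ cv kap (fun y => ‖PP φ ψ β R y‖ₑ) x + cv (kapR R) (fun y => ‖FF β R ψ y‖ₑ) x := by
    unfold cv
    rw [← lintegral_add_left (by fun_prop)]
    refine lintegral_mono fun y => ?_
    refine (enorm_add_le _ _).trans (add_le_add ((inner_enorm_le _ _).trans ?_) ((inner_enorm_le _ _).trans ?_))
    · gcongr; exact K_le _
    · gcongr; exact K_sub_le hR _
  have hQi : Integrable Q := by
    refine ⟨Measurable.aestronglyMeasurable (by fun_prop), ?_⟩
    exact lt_of_le_of_lt hQle (lt_top_iff_ne_top.2 hfin)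
  have hsplit : ∀ y, ⟪K 0 (x - y), FF β 0 φ y⟫ - ⟪K R (x - y), FF β R ψ y⟫
      = Q y + fderiv ℝ (hh φ ψ) y (K 0 (x - y)) := by
    intro y
    have e1 : FF β 0 φ y = FF β R ψ y + (PP φ ψ β R y + gradh φ ψ y) := by
      rw [← FF_decomp]; abel
    rw [← inner_grad (fderiv ℝ (hh φ ψ) y) (K 0 (x - y)) (gradh φ ψ y) (fun j => rfl), hQ, e1]
    simp only [inner_add_right, inner_sub_left]
    ring
  have : convKv 0 (FF β 0 φ) x - convKv R (FF β R ψ) x = ∫ y, Q y := by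
    unfold convKv
    rw [← integral_sub i1 i2]
    simp_rw [hsplit]
    have i3 : Integrable (fun y => fderiv ℝ (hh φ ψ) y (K 0 (x - y))) := by
      refine ((i1.sub i2).sub hQi).congr (Eventually.of_forall fun y => ?_)
      simp only [Pi.sub_apply, hsplit]
      ring
    rw [integral_add hQi i3, divfree_sub 0 _ (hh_contDiff φ ψ), add_zero]
  rw [this]
  exact (enorm_integral_le_lintegral_enorm _).trans hQle

end
end CSS

namespace CSS
open Filter Topology LineDeriv

lemma int_sq_lt_top (u : SchwartzMap E2 ℂ) : ∫⁻ x, ‖u x‖ₑ ^ 2 < ⊤ := by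
  have := (u.memLp 2 volume).2
  rw [eLpNorm_lt_top_iff_lintegral_rpow_enorm_lt_top (by norm_num) (by norm_num)] at this
  simpa using this

lemma int_fderiv_sq_lt_top (u : SchwartzMap E2 ℂ) : ∫⁻ x, ‖fderiv ℝ u x‖ₑ ^ 2 < ⊤ := by
  have := ((SchwartzMap.fderivCLM ℝ E2 ℂ u).memLp 2 volume).2
  rw [eLpNorm_lt_top_iff_lintegral_rpow_enorm_lt_top (by norm_num) (by norm_num)] at this
  simpa using this

/-- `(a,b) ↦ Im (ā b)` -/
def imL : ℂ →L[ℝ] ℂ →L[ℝ] ℝ :=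
  (innerSL ℝ : ℂ →L[ℝ] ℂ →L[ℝ] ℝ).comp (ContinuousLinearMap.mul ℝ ℂ Complex.I)

lemma imL_apply (a b : ℂ) : imL a b = ((starRingEnd ℂ) a * b).im := by
  simp [imL, Complex.inner]
  ring

lemma imL_self (a : ℂ) : imL a a = 0 := by
  rw [imL_apply]; simp; ring

lemma lap_eq (u : SchwartzMap E2 ℂ) (x : E2) :
    lap u x = (∂_{e2 0} (∂_{e2 0} u : SchwartzMap E2 ℂ) : SchwartzMap E2 ℂ) x
      + (∂_{e2 1} (∂_{e2 1} u : SchwartzMap E2 ℂ) : SchwartzMap E2 ℂ) x := by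
  unfold lap
  rw [Fin.sum_univ_two, pd_apply, pd_apply]
  congr 2

lemma integrable_imL (f g : SchwartzMap E2 ℂ) : Integrable (fun x => imL (f x) (g x)) :=
  (SchwartzMap.pairing imL f g).integrable

lemma lap_integrable (w : SchwartzMap E2 ℂ) : Integrable (fun x => ((starRingEnd ℂ) (w x) * lap w x).im) := by
  simp_rw [← imL_apply, lap_eq, map_add]
  exact (integrable_imL _ _).add (integrable_imL _ _)

lemma lap_integral (w : SchwartzMap E2 ℂ) : ∫ x, ((starRingEnd ℂ) (w x) * lap w x).im = 0 := by
  simp_rw [← imL_apply, lap_eq, map_add]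
  rw [integral_add (integrable_imL _ _) (integrable_imL _ _),
    SchwartzMap.integral_bilinear_lineDerivOp_right_eq_neg_left w (∂_{e2 0} w : SchwartzMap E2 ℂ),
    SchwartzMap.integral_bilinear_lineDerivOp_right_eq_neg_left w (∂_{e2 1} w : SchwartzMap E2 ℂ)]
  simp [imL_self]

/-- `‖w‖²` -/
def nn (w : SchwartzMap E2 ℂ) (x : E2) : ℝ := ‖w x‖ ^ 2

lemma nn_contDiff (w : SchwartzMap E2 ℂ) : ContDiff ℝ 1 (nn w) := (w.smooth 1).norm_sq ℝ

lemma nn_fderiv (w : SchwartzMap E2 ℂ) (x v : E2) :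
    fderiv ℝ (nn w) x v = 2 * ((starRingEnd ℂ) (w x) * fderiv ℝ w x v).re := by
  have h := (w.hasFDerivAt x).norm_sq
  have h' : HasFDerivAt (nn w) _ x := h
  rw [h'.fderiv]
  simp [Complex.inner]
  ring

lemma nn_fderiv_le (w : SchwartzMap E2 ℂ) (x v : E2) :
    ‖fderiv ℝ (nn w) x v‖ₑ ≤ (‖w x‖ₑ ^ 2 + ‖fderiv ℝ w x‖ₑ ^ 2) * ‖v‖ₑ := by
  rw [nn_fderiv]
  calc ‖2 * ((starRingEnd ℂ) (w x) * fderiv ℝ w x v).re‖ₑ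
      ≤ 2 * (‖w x‖ₑ * (‖fderiv ℝ w x‖ₑ * ‖v‖ₑ)) := by
        rw [enorm_mul]
        have h2 : ‖(2:ℝ)‖ₑ = 2 := by rw [Real.enorm_of_nonneg (by norm_num)]; simp
        rw [h2]
        gcongr
        calc _ ≤ ‖(starRingEnd ℂ) (w x) * fderiv ℝ w x v‖ₑ := by
              rw [← ofReal_norm, ← ofReal_norm]
              exact ENNReal.ofReal_le_ofReal (Complex.abs_re_le_norm _)
          _ = ‖w x‖ₑ * ‖fderiv ℝ w x v‖ₑ := by
              rw [enorm_mul]; congr 1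
              rw [← ofReal_norm, ← ofReal_norm, RCLike.norm_conj]
          _ ≤ _ := by gcongr; exact clm_le _ _
    _ = (2 * (‖w x‖ₑ * ‖fderiv ℝ w x‖ₑ)) * ‖v‖ₑ := by ring
    _ ≤ _ := by gcongr; exact amgm _ _

lemma transport {N : ℝ≥0∞} (hN : N ≠ ⊤) (w u : SchwartzMap E2 ℂ) (hu : Bd u N) (R : ℝ) :
    Integrable (fun x => fderiv ℝ (nn w) x (Apot R u x)) ∧
    ∫ x, fderiv ℝ (nn w) x (Apot R u x) = 0 := by
  have hcd := (nn_contDiff w).continuous_fderiv (by norm_num)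
  have hm := hcd.measurable
  have hw := w.continuous.measurable
  have hdw := (continuous_fderiv_S w).measurable
  have hum := u.continuous.measurable
  have hK := measurable_K R
  have hk := measurable_kap
  have hpt : ∀ x, fderiv ℝ (nn w) x (Apot R u x)
      = ∫ y, fderiv ℝ (nn w) x (‖u y‖ ^ 2 • K R (x - y)) := by
    intro x
    rw [ContinuousLinearMap.integral_comp_comm]
    · rfl
    · exact A_integrable (ne_top_of_le_ne_top hN (hu.cv0 x))
  have hev : Measurable (fun p : (E2 →L[ℝ] ℝ) × E2 => p.1 p.2) := by
    have : Continuous (fun p : (E2 →L[ℝ] ℝ) × E2 => p.1 p.2) := by fun_prop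
    exact this.measurable
  have hmeas : Measurable (fun p : E2 × E2 => fderiv ℝ (nn w) p.1 (‖u p.2‖ ^ 2 • K R (p.1 - p.2))) := by
    have : Measurable (fun p : E2 × E2 => (fderiv ℝ (nn w) p.1, ‖u p.2‖ ^ 2 • K R (p.1 - p.2))) :=
      (hm.comp measurable_fst).prodMk (by fun_prop)
    exact hev.comp this
  have hint : Integrable (Function.uncurry fun x y => fderiv ℝ (nn w) x (‖u y‖ ^ 2 • K R (x - y)))
      (volume.prod volume) := by
    refine ⟨hmeas.aestronglyMeasurable, ?_⟩
    unfold HasFiniteIntegral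
    rw [lintegral_prod _ (by exact hmeas.enorm.aemeasurable)]
    have hfin : (∫⁻ x, (‖w x‖ₑ ^ 2 + ‖fderiv ℝ w x‖ₑ ^ 2)) * N < ⊤ := by
      rw [lintegral_add_left (by fun_prop)]
      exact ENNReal.mul_lt_top (ENNReal.add_lt_top.2 ⟨int_sq_lt_top w, int_fderiv_sq_lt_top w⟩)
        (lt_top_iff_ne_top.2 hN)
    refine lt_of_le_of_lt ?_ hfin
    rw [← lintegral_mul_const _ (by fun_prop)]
    refine lintegral_mono fun x => ?_
    refine le_trans ?_ (mul_le_mul_right (hu.cv0 x) _)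
    unfold cv
    rw [← lintegral_const_mul _ (by fun_prop)]
    refine lintegral_mono fun y => ?_
    refine (nn_fderiv_le w x _).trans ?_
    rw [enorm_smul, enorm_nsq, mul_comm (‖u y‖ₑ ^ 2)]
    gcongr
    exact K_le _
  constructor
  · have := hint.integral_prod_left
    refine this.congr (Eventually.of_forall fun x => ?_)
    exact (hpt x).symm
  · simp_rw [hpt]
    rw [integral_integral_swap hint]
    have : ∀ y, ∫ x, fderiv ℝ (nn w) x (‖u y‖ ^ 2 • K R (x - y)) = 0 := by
      intro y
      simp_rw [map_smul, smul_eq_mul]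
      rw [integral_const_mul, divfree_add R _ (nn_contDiff w), mul_zero]
    simp only [this, integral_zero]

end CSS

namespace CSS
open Filter Topology LineDeriv

section
variable (φ ψ : SchwartzMap E2 ℂ)

/-- error term -/
def Er (β R : ℝ) (x : E2) : ℂ :=
  - 2 * β * Complex.I * fderiv ℝ φ x (Apot 0 φ x - Apot R ψ x)
    + (↑(β ^ 2 * (‖Apot 0 φ x‖ ^ 2 - ‖Apot R ψ x‖ ^ 2)) : ℂ) * φ x
    - (β : ℂ) * (↑(convKv 0 (FF β 0 φ) x - convKv R (FF β R ψ) x) : ℂ) * φ x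

lemma cssRHS_eq (β R : ℝ) (u : E2 → ℂ) (x : E2) : cssRHS β R u x =
  -(lap u x) - 2 * β * Complex.I * fderiv ℝ u x (Apot R u x)
    + (↑(β ^ 2 * ‖Apot R u x‖ ^ 2) : ℂ) * u x
    - (β : ℂ) * (↑(convKv R (FF β R u) x) : ℂ) * u x := rfl

lemma fderiv_w (x : E2) : fderiv ℝ (φ - ψ : SchwartzMap E2 ℂ) x = fderiv ℝ φ x - fderiv ℝ ψ x := by
  have := (φ.hasFDerivAt x).sub (ψ.hasFDerivAt x)
  exact this.fderiv

lemma lap_w (x : E2) : lap (φ - ψ : SchwartzMap E2 ℂ) x = lap φ x - lap ψ x := by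
  have h : ∀ (j : Fin 2), (∂_{e2 j} (∂_{e2 j} (φ - ψ) : SchwartzMap E2 ℂ) : SchwartzMap E2 ℂ) x
      = (∂_{e2 j} (∂_{e2 j} φ : SchwartzMap E2 ℂ) : SchwartzMap E2 ℂ) x
        - (∂_{e2 j} (∂_{e2 j} ψ : SchwartzMap E2 ℂ) : SchwartzMap E2 ℂ) x := by
    intro j
    have e1 : (∂_{e2 j} (φ - ψ) : SchwartzMap E2 ℂ) = ∂_{e2 j} φ - ∂_{e2 j} ψ := by
      ext y
      change _ = (∂_{e2 j} φ : SchwartzMap E2 ℂ) y - (∂_{e2 j} ψ : SchwartzMap E2 ℂ) y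
      rw [pd_apply, pd_apply, pd_apply, fderiv_w]; rfl
    rw [e1, pd_apply, pd_apply, pd_apply, fderiv_w]; rfl
  simp only [lap_eq, h]
  ring

lemma css_decomp (β R : ℝ) (x : E2) :
    ((starRingEnd ℂ) ((φ - ψ : SchwartzMap E2 ℂ) x) * (cssRHS β 0 φ x - cssRHS β R ψ x)).im
      = -((starRingEnd ℂ) ((φ - ψ : SchwartzMap E2 ℂ) x) * lap (φ - ψ : SchwartzMap E2 ℂ) x).im
        - β * fderiv ℝ (nn (φ - ψ)) x (Apot R ψ x)
        + ((starRingEnd ℂ) ((φ - ψ : SchwartzMap E2 ℂ) x) * Er φ ψ β R x).im := by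
  have s1 : ∀ v, (fderiv ℝ φ x - fderiv ℝ ψ x) v = fderiv ℝ φ x v - fderiv ℝ ψ x v := fun _ => rfl
  have s2 : (φ - ψ : SchwartzMap E2 ℂ) x = φ x - ψ x := rfl
  have s3 : ∀ v v', fderiv ℝ φ x (v - v') = fderiv ℝ φ x v - fderiv ℝ φ x v' := fun _ _ => map_sub _ _ _
  rw [nn_fderiv, lap_w, fderiv_w, cssRHS_eq, cssRHS_eq, Er, s3, s1, s2]
  generalize lap φ x = a1
  generalize lap ψ x = a2
  generalize convKv 0 (FF β 0 φ) x = g1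
  generalize convKv R (FF β R ψ) x = g2
  generalize hA : Apot 0 φ x = A
  generalize hB : Apot R ψ x = B
  generalize fderiv ℝ φ x A = f1
  generalize fderiv ℝ φ x B = f2
  generalize fderiv ℝ ψ x B = f3
  generalize φ x = p
  generalize ψ x = q
  simp only [Complex.mul_im, Complex.mul_re, Complex.sub_im, Complex.sub_re, Complex.add_im,
    Complex.add_re, Complex.conj_re, Complex.conj_im, Complex.neg_im, Complex.neg_re,
    Complex.ofReal_re, Complex.ofReal_im, Complex.I_re, Complex.I_im, map_sub]
  norm_num
  ring

lemma nsq_diff_le (A B : E2) {N : ℝ≥0∞} (hA : ‖A‖ₑ ≤ N) (hB : ‖B‖ₑ ≤ N) :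
    ‖(‖A‖ ^ 2 - ‖B‖ ^ 2 : ℝ)‖ₑ ≤ 2 * N * ‖A - B‖ₑ := by
  have : ‖(‖A‖ ^ 2 - ‖B‖ ^ 2 : ℝ)‖ₑ ≤ ‖A - B‖ₑ * (‖A‖ₑ + ‖B‖ₑ) := by
    rw [← ofReal_norm, ← ofReal_norm, ← ofReal_norm, ← ofReal_norm,
      ← ENNReal.ofReal_add (by positivity) (by positivity), ← ENNReal.ofReal_mul (by positivity)]
    apply ENNReal.ofReal_le_ofReal
    have h1 : ‖A‖ ^ 2 - ‖B‖ ^ 2 = (‖A‖ - ‖B‖) * (‖A‖ + ‖B‖) := by ring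
    rw [h1, norm_mul, Real.norm_eq_abs, Real.norm_eq_abs, abs_of_nonneg (by positivity : 0 ≤ ‖A‖ + ‖B‖)]
    gcongr
    exact abs_norm_sub_norm_le A B
  refine this.trans ?_
  calc _ ≤ ‖A - B‖ₑ * (N + N) := by gcongr
    _ = _ := by ring

lemma cofReal_enorm (r : ℝ) : ‖(r : ℂ)‖ₑ = ‖r‖ₑ := by
  rw [← ofReal_norm, ← ofReal_norm, Complex.norm_real]

lemma enorm_two_c : ‖(2:ℂ)‖ₑ = 2 := by
  rw [← ofReal_norm]; simp

lemma enorm_I_c : ‖Complex.I‖ₑ = 1 := by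
  rw [← ofReal_norm]; simp

lemma Er_le {β R : ℝ} (hβ : |β| ≤ 1) {N : ℝ≥0∞} (hφ : Bd φ N) (hψ : Bd ψ N) (x : E2) :
    ‖Er φ ψ β R x‖ₑ ≤ 2 * (‖fderiv ℝ φ x‖ₑ * ‖Apot 0 φ x - Apot R ψ x‖ₑ)
      + 2 * N * (‖φ x‖ₑ * ‖Apot 0 φ x - Apot R ψ x‖ₑ)
      + ‖φ x‖ₑ * ‖convKv 0 (FF β 0 φ) x - convKv R (FF β R ψ) x‖ₑ := by
  have hb := enorm_beta hβ
  unfold Er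
  refine (enorm_sub_le).trans (add_le_add ((enorm_add_le _ _).trans (add_le_add ?_ ?_)) ?_)
  · rw [enorm_mul, enorm_mul, enorm_mul, enorm_neg, cofReal_enorm, enorm_two_c, enorm_I_c]
    calc _ ≤ 2 * 1 * 1 * (‖fderiv ℝ φ x‖ₑ * ‖Apot 0 φ x - Apot R ψ x‖ₑ) := by
          gcongr; exact clm_le _ _
      _ = _ := by ring
  · rw [enorm_mul, cofReal_enorm, enorm_mul, enorm_pow]
    calc _ ≤ 1 ^ 2 * (2 * N * ‖Apot 0 φ x - Apot R ψ x‖ₑ) * ‖φ x‖ₑ := by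
          gcongr
          exact nsq_diff_le _ _ ((A_le x).trans (hφ.cv0 x)) ((A_le x).trans (hψ.cv0 x))
      _ = _ := by ring
  · rw [enorm_mul, enorm_mul, cofReal_enorm, cofReal_enorm]
    calc _ ≤ 1 * ‖convKv 0 (FF β 0 φ) x - convKv R (FF β R ψ) x‖ₑ * ‖φ x‖ₑ := by
          gcongr
      _ = _ := by ring

/-- constants -/
def c1 (N : ℝ≥0∞) : ℝ≥0∞ := 3 * (4 * (6 * N * (2 * N)) + 4 * N ^ 2 * (6 * N * N) + (168 * N ^ 4 + 768 * N ^ 2))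
def c2 (N : ℝ≥0∞) : ℝ≥0∞ := 3 * (4 * (192 * N ^ 3) + 4 * N ^ 2 * (192 * N ^ 3) + (3840 * N ^ 5 + 6144 * N ^ 3))

lemma Er_meas (β R : ℝ) : Measurable (Er φ ψ β R) := by
  have h1 := A_meas 0 φ
  have h2 := A_meas R ψ
  have h3 := conv_meas 0 (FF_meas β 0 φ)
  have h4 := conv_meas R (FF_meas β R ψ)
  have h5 := φ.continuous.measurable
  have h6 := (continuous_fderiv_S φ).measurable
  have hev : Measurable (fun p : (E2 →L[ℝ] ℂ) × E2 => p.1 p.2) := by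
    have : Continuous (fun p : (E2 →L[ℝ] ℂ) × E2 => p.1 p.2) := by fun_prop
    exact this.measurable
  have h7 : Measurable fun x => fderiv ℝ φ x (Apot 0 φ x - Apot R ψ x) :=
    hev.comp (h6.prodMk (h1.sub h2))
  unfold Er
  fun_prop

lemma Er_int {β R : ℝ} (hβ : |β| ≤ 1) (hR : 0 < R) {N : ℝ≥0∞} (hN : N ≠ ⊤) (hφ : Bd φ N) (hψ : Bd ψ N) :
    ∫⁻ x, ‖Er φ ψ β R x‖ₑ ^ 2 ≤ c1 N * (∫⁻ x, ‖φ x - ψ x‖ₑ ^ 2) + c2 N * (ENNReal.ofReal R) ^ 2 := by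
  have mA0 := A_meas 0 φ
  have mAR := A_meas R ψ
  have mG0 := conv_meas 0 (FF_meas β 0 φ)
  have mGR := conv_meas R (FF_meas β R ψ)
  have mφ := φ.continuous.measurable
  have mψ := ψ.continuous.measurable
  have mdφ := (continuous_fderiv_S φ).measurable
  have mdψ := (continuous_fderiv_S ψ).measurable
  set D : E2 → ℝ≥0∞ := fun x => ‖Apot 0 φ x - Apot R ψ x‖ₑ with hDdef
  set G : E2 → ℝ≥0∞ := fun x => ‖convKv 0 (FF β 0 φ) x - convKv R (FF β R ψ) x‖ₑ with hGdef
  have mD : Measurable D := by fun_prop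
  have mG : Measurable G := by fun_prop
  have hD : ∀ x, D x ≤ cv kap (fun y => ‖φ y - ψ y‖ₑ * ‖φ y‖ₑ) x
      + cv kap (fun y => ‖φ y - ψ y‖ₑ * ‖ψ y‖ₑ) x + cv (kapR R) (fun y => ‖ψ y‖ₑ ^ 2) x :=
    fun x => D_le hR φ ψ x (ne_top_of_le_ne_top hN (hφ.cv0 x)) (ne_top_of_le_ne_top hN (hψ.cv0 x))
  have hG : ∀ x, G x ≤ cv kap (fun y => 2 * (D y * ‖φ y‖ₑ * ‖φ y‖ₑ)
        + 2 * N * (‖φ y - ψ y‖ₑ * ‖φ y‖ₑ + ‖φ y - ψ y‖ₑ * ‖ψ y‖ₑ)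
        + 4 * (‖φ y - ψ y‖ₑ * ‖fderiv ℝ φ y‖ₑ + ‖φ y - ψ y‖ₑ * ‖fderiv ℝ ψ y‖ₑ)) x
      + cv (kapR R) (fun y => 2 * N * ‖ψ y‖ₑ ^ 2 + 4 * (‖ψ y‖ₑ * ‖fderiv ℝ ψ y‖ₑ)) x := by
    intro x
    refine (G_le φ ψ hβ hR hN hφ hψ x).trans (add_le_add ?_ ?_)
    · exact cv_mono fun y => PP_le φ ψ hβ hψ y
    · exact cv_mono fun y => FF_le hβ hψ y
  have hkI : ∫⁻ z, kapR R z ≤ 8 * ENNReal.ofReal R := by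
    refine (lintegral_kapR R hR).trans (le_of_eq ?_)
    rw [ENNReal.ofReal_mul (by norm_num)]; simp
  have mkr := measurable_kapR R
  have e1 := estD (a := fun x => ‖φ x‖ₑ) (b := fun x => ‖ψ x‖ₑ) (w := fun x => ‖φ x - ψ x‖ₑ)
    (D := D) (by fun_prop) (by fun_prop) (by fun_prop) mkr hkI hφ.cv0 hψ.cv0 hψ.sup hD
    (g := fun x => ‖fderiv ℝ φ x‖ₑ) (by fun_prop) hφ.cv1 hφ.int1
  have e2 := estD (a := fun x => ‖φ x‖ₑ) (b := fun x => ‖ψ x‖ₑ) (w := fun x => ‖φ x - ψ x‖ₑ)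
    (D := D) (by fun_prop) (by fun_prop) (by fun_prop) mkr hkI hφ.cv0 hψ.cv0 hψ.sup hD
    (g := fun x => ‖φ x‖ₑ) (by fun_prop) hφ.cv0 hφ.int0
  have e3 := estG (a := fun x => ‖φ x‖ₑ) (b := fun x => ‖ψ x‖ₑ) (w := fun x => ‖φ x - ψ x‖ₑ)
    (p := fun x => ‖fderiv ℝ φ x‖ₑ) (q := fun x => ‖fderiv ℝ ψ x‖ₑ) (D := D)
    (by fun_prop) (by fun_prop) (by fun_prop) (by fun_prop) (by fun_prop) mD mkr hkI (kapR_neg R)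
    hφ.cv0 hψ.cv0 hφ.cv1 hψ.cv1 hφ.sup hψ.sup hφ.int0 hψ.int1 hD hG
  calc ∫⁻ x, ‖Er φ ψ β R x‖ₑ ^ 2
      ≤ ∫⁻ x, 3 * (4 * (‖fderiv ℝ φ x‖ₑ ^ 2 * D x ^ 2) + 4 * N ^ 2 * (‖φ x‖ₑ ^ 2 * D x ^ 2)
          + ‖φ x‖ₑ ^ 2 * G x ^ 2) := by
        refine lintegral_mono fun x => ?_
        refine (pow_le_pow_left₀ zero_le (Er_le φ ψ hβ hφ hψ x) 2).trans ((sq3 _ _ _).trans (le_of_eq ?_))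
        simp only [hDdef, hGdef]
        ring
    _ = 3 * (4 * (∫⁻ x, ‖fderiv ℝ φ x‖ₑ ^ 2 * D x ^ 2) + 4 * N ^ 2 * (∫⁻ x, ‖φ x‖ₑ ^ 2 * D x ^ 2)
          + ∫⁻ x, ‖φ x‖ₑ ^ 2 * G x ^ 2) := by
        rw [lintegral_const_mul _ (by fun_prop), lintegral_add_left (by fun_prop),
          lintegral_add_left (by fun_prop), lintegral_const_mul _ (by fun_prop),
          lintegral_const_mul _ (by fun_prop)]
    _ ≤ _ := mul_le_mul_right (add_le_add (add_le_add (mul_le_mul_right e1 4)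
          (mul_le_mul_right e2 (4 * N ^ 2))) e3) 3
    _ = _ := by unfold c1 c2; ring

/-- constant for the uniform bound -/
def c3 (N : ℝ≥0∞) : ℝ≥0∞ := 3 * (4 * N + 4 * N ^ 3 + (N ^ 2 + (2 * N ^ 2 + 6 * N)) ^ 2 * N)

lemma lap_le (u : SchwartzMap E2 ℂ) (x : E2) : ‖lap u x‖ₑ ≤ 2 * ‖fderiv ℝ (fderiv ℝ u) x‖ₑ := by
  rw [lap_eq, two_mul, pd_apply, pd_apply]
  refine (enorm_add_le _ _).trans (add_le_add ?_ ?_)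
  · exact (clm_e2_le _ _).trans (pd_fderiv_le u 0 x)
  · exact (clm_e2_le _ _).trans (pd_fderiv_le u 1 x)

lemma css_le {β R : ℝ} (hβ : |β| ≤ 1) {N : ℝ≥0∞} (hφ : Bd φ N) (x : E2) :
    ‖cssRHS β R φ x‖ₑ ≤ 2 * ‖fderiv ℝ (fderiv ℝ φ) x‖ₑ + 2 * N * ‖fderiv ℝ φ x‖ₑ
      + (N ^ 2 + (2 * N ^ 2 + 6 * N)) * ‖φ x‖ₑ := by
  have hb := enorm_beta hβ
  rw [cssRHS_eq, add_mul, ← add_assoc]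
  refine (enorm_sub_le).trans (add_le_add ((enorm_add_le _ _).trans
    (add_le_add ((enorm_sub_le).trans (add_le_add ?_ ?_)) ?_)) ?_)
  · rw [enorm_neg]; exact lap_le φ x
  · rw [enorm_mul, enorm_mul, enorm_mul, cofReal_enorm, enorm_two_c, enorm_I_c]
    calc _ ≤ 2 * 1 * 1 * (‖fderiv ℝ φ x‖ₑ * N) := by
          gcongr
          refine (clm_le _ _).trans ?_
          gcongr
          exact (A_le x).trans (hφ.cv0 x)
      _ = _ := by ring
  · rw [enorm_mul, cofReal_enorm, enorm_mul, enorm_pow, enorm_pow, enorm_norm]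
    calc _ ≤ 1 ^ 2 * N ^ 2 * ‖φ x‖ₑ := by
          gcongr
          exact (A_le x).trans (hφ.cv0 x)
      _ = _ := by ring
  · rw [enorm_mul, enorm_mul, cofReal_enorm, cofReal_enorm]
    calc _ ≤ 1 * (2 * N ^ 2 + 6 * N) * ‖φ x‖ₑ := by
          gcongr
          exact (conv_le).trans (cvFF_le hβ hφ x)
      _ = _ := by ring

lemma css_int {β R : ℝ} (hβ : |β| ≤ 1) {N : ℝ≥0∞} (hφ : Bd φ N) :
    ∫⁻ x, ‖cssRHS β R φ x‖ₑ ^ 2 ≤ c3 N := by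
  have mφ := φ.continuous.measurable
  have mdφ := (continuous_fderiv_S φ).measurable
  have mddφ : Measurable (fderiv ℝ (fderiv ℝ φ)) := measurable_fderiv ℝ _
  calc _ ≤ ∫⁻ x, 3 * (4 * ‖fderiv ℝ (fderiv ℝ φ) x‖ₑ ^ 2 + 4 * N ^ 2 * ‖fderiv ℝ φ x‖ₑ ^ 2
      + (N ^ 2 + (2 * N ^ 2 + 6 * N)) ^ 2 * ‖φ x‖ₑ ^ 2) := by
        refine lintegral_mono fun x => ?_
        refine (pow_le_pow_left₀ zero_le (css_le φ hβ hφ x) 2).trans ((sq3 _ _ _).trans (le_of_eq ?_))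
        ring
    _ = 3 * (4 * (∫⁻ x, ‖fderiv ℝ (fderiv ℝ φ) x‖ₑ ^ 2) + 4 * N ^ 2 * (∫⁻ x, ‖fderiv ℝ φ x‖ₑ ^ 2)
      + (N ^ 2 + (2 * N ^ 2 + 6 * N)) ^ 2 * ∫⁻ x, ‖φ x‖ₑ ^ 2) := by
        rw [lintegral_const_mul _ (by fun_prop), lintegral_add_left (by fun_prop),
          lintegral_add_left (by fun_prop), lintegral_const_mul _ (by fun_prop),
          lintegral_const_mul _ (by fun_prop), lintegral_const_mul _ (by fun_prop)]
    _ ≤ 3 * (4 * N + 4 * N ^ 2 * N + (N ^ 2 + (2 * N ^ 2 + 6 * N)) ^ 2 * N) := by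
        gcongr
        · exact hφ.int2
        · exact hφ.int1
        · exact hφ.int0
    _ = _ := by unfold c3; ring

end
end CSS

namespace CSS
open Filter Topology LineDeriv

lemma int_toReal {f : E2 → ℂ} (hf : Measurable f) : ∫ x, ‖f x‖ ^ 2 = (∫⁻ x, ‖f x‖ₑ ^ 2).toReal := by
  rw [integral_eq_lintegral_of_nonneg_ae (Eventually.of_forall fun x => by positivity)
    (by fun_prop)]
  simp_rw [sq_enorm]

lemma int_sq_integrable {f : E2 → ℂ} (hf : Measurable f) (h : ∫⁻ x, ‖f x‖ₑ ^ 2 ≠ ⊤) :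
    Integrable (fun x => ‖f x‖ ^ 2) := by
  refine ⟨Measurable.aestronglyMeasurable (by fun_prop), ?_⟩
  refine lt_of_le_of_lt (le_of_eq ?_) (lt_top_iff_ne_top.2 h)
  refine lintegral_congr fun x => ?_
  rw [enorm_nsq]

lemma im_bd (a b : ℂ) : 2 * |((starRingEnd ℂ) a * b).im| ≤ ‖a‖ ^ 2 + ‖b‖ ^ 2 := by
  have h := Complex.abs_im_le_norm ((starRingEnd ℂ) a * b)
  rw [norm_mul, RCLike.norm_conj] at h
  nlinarith [sq_nonneg (‖a‖ - ‖b‖)]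

/-- the final constant -/
def Cst (N : ℝ≥0∞) : ℝ := 1 + (c1 N).toReal + (c2 N).toReal

lemma fixed_time (φ ψ : SchwartzMap E2 ℂ) {β R : ℝ} (hβ : |β| ≤ 1) (hR : 0 < R) {N : ℝ≥0∞}
    (hN : N ≠ ⊤) (hφ : Bd φ N) (hψ : Bd ψ N) :
    ∫ x, 2 * ((starRingEnd ℂ) (φ x - ψ x) * (cssRHS β 0 φ x - cssRHS β R ψ x)).im
      ≤ Cst N * R ^ 2 + Cst N * ∫ x, ‖φ x - ψ x‖ ^ 2 := by
  set w : SchwartzMap E2 ℂ := φ - ψ with hw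
  have hwx : ∀ x, w x = φ x - ψ x := fun x => rfl
  simp_rw [← hwx]
  have hEi := Er_int φ ψ hβ hR hN hφ hψ
  simp_rw [← hwx] at hEi
  have hwf := int_sq_lt_top w
  have hc1 : c1 N ≠ ⊤ := by unfold c1; finiteness
  have hc2 : c2 N ≠ ⊤ := by unfold c2; finiteness
  have hbf : c1 N * (∫⁻ x, ‖w x‖ₑ ^ 2) + c2 N * (ENNReal.ofReal R) ^ 2 ≠ ⊤ := by
    have := hwf.ne
    finiteness
  have mE := Er_meas φ ψ β R
  have mw := w.continuous.measurable
  have hEf := ne_top_of_le_ne_top hbf hEi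
  have iw := int_sq_integrable mw hwf.ne
  have iE := int_sq_integrable mE hEf
  have ip : Integrable (fun x => ((starRingEnd ℂ) (w x) * Er φ ψ β R x).im) := by
    refine (iw.add iE).mono' (Measurable.aestronglyMeasurable ?_) (Eventually.of_forall fun x => ?_)
    · exact Complex.measurable_im.comp ((Complex.continuous_conj.measurable.comp mw).mul mE)
    · have := im_bd (w x) (Er φ ψ β R x)
      have h2 := abs_nonneg ((starRingEnd ℂ) (w x) * Er φ ψ β R x).im
      simp only [Pi.add_apply, Real.norm_eq_abs]
      linarith
  obtain ⟨it, it0⟩ := transport hN w ψ hψ R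
  have hdec := fun x => css_decomp φ ψ β R x
  simp only [← hw] at hdec
  simp_rw [hdec]
  rw [integral_const_mul, integral_add (by exact (lap_integrable w).neg.sub (it.const_mul β)) ip,
    integral_sub (by exact (lap_integrable w).neg) (it.const_mul β), integral_const_mul, it0,
    integral_neg, lap_integral]
  · rw [neg_zero, mul_zero, sub_zero, zero_add]
    have h1 : ∫ x, 2 * ((starRingEnd ℂ) (w x) * Er φ ψ β R x).im
        ≤ ∫ x, (‖w x‖ ^ 2 + ‖Er φ ψ β R x‖ ^ 2) := by
      refine integral_mono (ip.const_mul 2) (iw.add iE) fun x => ?_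
      have := im_bd (w x) (Er φ ψ β R x)
      have h2 := le_abs_self ((starRingEnd ℂ) (w x) * Er φ ψ β R x).im
      simp only
      linarith
    rw [integral_add iw iE] at h1
    have h2 : ∫ x, ‖Er φ ψ β R x‖ ^ 2
        ≤ (c1 N).toReal * (∫ x, ‖w x‖ ^ 2) + (c2 N).toReal * R ^ 2 := by
      rw [int_toReal mE, int_toReal mw]
      refine (ENNReal.toReal_mono hbf hEi).trans (le_of_eq ?_)
      have := hwf.ne
      rw [ENNReal.toReal_add (by finiteness) (by finiteness), ENNReal.toReal_mul, ENNReal.toReal_mul,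
        ENNReal.toReal_pow, ENNReal.toReal_ofReal hR.le]
    have h3 : 0 ≤ ∫ x, ‖w x‖ ^ 2 := integral_nonneg fun x => by positivity
    have h4 : 0 ≤ (c1 N).toReal := ENNReal.toReal_nonneg
    have h5 : 0 ≤ (c2 N).toReal := ENNReal.toReal_nonneg
    have h6 := sq_nonneg R
    unfold Cst
    rw [integral_const_mul] at h1
    nlinarith [mul_nonneg h4 h6, mul_nonneg h5 h3]

/-- abstract one-dimensional part -/
lemma gron {f g : ℝ → ℝ} {T C r B : ℝ} (hT : 0 < T) (hC : 0 < C)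
    (hI : ∀ s t, 0 ≤ s → s ≤ t → t ≤ T → IntervalIntegrable g volume s t ∧ f t - f s = ∫ τ in s..t, g τ)
    (hb : ∀ τ ∈ Set.Icc 0 T, |g τ| ≤ B) (hg : ∀ τ ∈ Set.Icc 0 T, g τ ≤ C * r + C * f τ)
    (h0 : f 0 = 0) (hpos : ∀ τ, 0 ≤ f τ) (hr : 0 ≤ r) :
    ∀ t ∈ Set.Icc 0 T, deriv f t ≤ C * r + C * f t ∧ f t ≤ r * (Real.exp (C * t) - 1) := by
  have hlip : ∀ s t, 0 ≤ s → s ≤ t → t ≤ T → |f t - f s| ≤ B * |t - s| := by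
    intro s t hs hst ht
    rw [(hI s t hs hst ht).2, ← Real.norm_eq_abs]
    refine intervalIntegral.norm_integral_le_of_norm_le_const fun x hx => ?_
    rw [Set.uIoc_of_le hst] at hx
    exact hb x ⟨hs.trans hx.1.le, hx.2.trans ht⟩
  have hcont : ContinuousOn f (Set.Icc 0 T) := by
    have : LipschitzOnWith (Real.toNNReal B) f (Set.Icc 0 T) := by
      refine LipschitzOnWith.of_dist_le_mul fun x hx y hy => ?_
      have hB : 0 ≤ B := (abs_nonneg _).trans (hb x hx)
      rw [Real.coe_toNNReal _ hB, Real.dist_eq, Real.dist_eq]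
      rcases le_total x y with h | h
      · rw [abs_sub_comm, abs_sub_comm x]; exact hlip x y hx.1 h hy.2
      · exact hlip y x hy.1 h hx.2
    exact this.continuousOn
  have hloc : ∀ t ∈ Set.Icc 0 T, ∀ m, C * r + C * f t < m →
      ∃ δ > 0, ∀ a ∈ Set.Icc 0 T, ∀ b ∈ Set.Icc 0 T, |a - t| < δ → |b - t| < δ → a ≤ b →
        f b - f a ≤ m * (b - a) := by
    intro t ht m hm
    have hc2 : ContinuousOn (fun s => C * r + C * f s) (Set.Icc 0 T) := by fun_prop
    have hev := (hc2 t ht).eventually_lt_const hm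
    rw [eventually_nhdsWithin_iff, Metric.eventually_nhds_iff] at hev
    obtain ⟨δ, hδ, h⟩ := hev
    refine ⟨δ, hδ, fun a ha b hb' hat hbt hab => ?_⟩
    rw [(hI a b ha.1 hab hb'.2).2]
    have : ∫ τ in a..b, g τ ≤ ∫ τ in a..b, m := by
      refine intervalIntegral.integral_mono_on hab (hI a b ha.1 hab hb'.2).1 (by simp) fun x hx => ?_
      have hx' : x ∈ Set.Icc 0 T := ⟨ha.1.trans hx.1, hx.2.trans hb'.2⟩
      refine (hg x hx').trans (h ?_ hx').le
      rw [Real.dist_eq, abs_lt]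
      rw [abs_lt] at hat hbt
      constructor <;> linarith [hx.1, hx.2]
    refine this.trans (le_of_eq ?_)
    simp; ring
  intro t ht
  constructor
  · by_cases hd : DifferentiableAt ℝ f t
    · refine le_of_forall_gt_imp_ge_of_dense fun m hm => ?_
      obtain ⟨δ, hδ, h⟩ := hloc t ht m hm
      have hs := (hd.hasDerivAt.hasDerivWithinAt (s := Set.Icc 0 T))
      rw [hasDerivWithinAt_iff_tendsto_slope] at hs
      have hne : (𝓝[Set.Icc 0 T \ {t}] t).NeBot := by
        have h1 : AccPt t (𝓟 (Set.Icc 0 T)) := by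
          have hpre : IsPreconnected (Set.Icc 0 T) := isPreconnected_Icc
          have hnt : (Set.Icc 0 T).Nontrivial :=
            ⟨0, Set.left_mem_Icc.2 hT.le, T, Set.right_mem_Icc.2 hT.le, hT.ne⟩
          exact hpre.preperfect_of_nontrivial hnt t ht
        rwa [accPt_principal_iff_nhdsWithin] at h1
      refine le_of_tendsto hs ?_
      rw [eventually_nhdsWithin_iff, Metric.eventually_nhds_iff]
      refine ⟨δ, hδ, fun y hy hym => ?_⟩
      rw [Real.dist_eq] at hy
      have hyt : y ≠ t := hym.2
      have htt : |t - t| < δ := by simpa using hδ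
      rw [slope_def_field]
      rcases lt_or_gt_of_ne hyt with hlt | hlt
      · have := h y hym.1 t ht hy htt hlt.le
        rw [← neg_div_neg_eq, neg_sub, neg_sub, div_le_iff₀ (by linarith)]
        exact this
      · have := h t ht y hym.1 htt hy hlt.le
        rw [div_le_iff₀ (by linarith)]
        exact this
    · rw [deriv_zero_of_not_differentiableAt hd]
      have := hpos t
      positivity
  · have := le_gronwallBound_of_liminf_deriv_right_le (f := f) (f' := fun s => C * r + C * f s) (δ := 0)
      (K := C) (ε := C * r) (a := 0) (b := T) hcont ?_ h0.le (fun x _ => by linarith) t ht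
    · rw [gronwallBound_of_K_ne_0 hC.ne'] at this
      refine this.trans (le_of_eq ?_)
      field_simp
      simp
    · intro x hx m hm
      have hx' : x ∈ Set.Icc 0 T := ⟨hx.1, hx.2.le⟩
      obtain ⟨m', hm1, hm2⟩ := exists_between hm
      obtain ⟨δ, hδ, h⟩ := hloc x hx' m' hm1
      refine Eventually.frequently ?_
      have hmem : Set.Ioo x (min T (x + δ)) ∈ 𝓝[>] x :=
        Ioo_mem_nhdsGT (lt_min hx.2 (by linarith))
      filter_upwards [hmem] with z hz
      have hz1 : z < T := lt_of_lt_of_le hz.2 (min_le_left _ _)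
      have hz2 : z < x + δ := lt_of_lt_of_le hz.2 (min_le_right _ _)
      have hzx := hz.1
      have := h x hx' z ⟨hx.1.trans hzx.le, hz1.le⟩ (by simpa using hδ)
        (by rw [abs_of_pos (by linarith)]; linarith) hzx.le
      rw [inv_mul_lt_iff₀ (by linarith)]
      refine this.trans_lt ?_
      rw [mul_comm]
      exact mul_lt_mul_of_pos_left hm2 (by linarith)

end CSS

namespace CSS
open Filter Topology LineDeriv

lemma re_bd (a b : ℂ) : ‖2 * ((starRingEnd ℂ) a * b).re‖ₑ ≤ ‖a‖ₑ ^ 2 + ‖b‖ₑ ^ 2 := by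
  rw [sq_enorm, sq_enorm, ← ENNReal.ofReal_add (by positivity) (by positivity), ← ofReal_norm]
  apply ENNReal.ofReal_le_ofReal
  have h := Complex.abs_re_le_norm ((starRingEnd ℂ) a * b)
  rw [norm_mul, RCLike.norm_conj] at h
  rw [norm_mul, Real.norm_eq_abs, Real.norm_eq_abs, abs_two]
  nlinarith [sq_nonneg (‖a‖ - ‖b‖)]

lemma gbound {w dw : ℝ → E2 → ℂ} {B : ℝ≥0∞} {τ : ℝ} (hw : Measurable (w τ))
    (b0 : ∫⁻ x, ‖w τ x‖ₑ ^ 2 ≤ B) (b1 : ∫⁻ x, ‖dw τ x‖ₑ ^ 2 ≤ B) :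
    ∫⁻ x, ‖2 * ((starRingEnd ℂ) (w τ x) * dw τ x).re‖ₑ ≤ 2 * B := by
  calc _ ≤ ∫⁻ x, (‖w τ x‖ₑ ^ 2 + ‖dw τ x‖ₑ ^ 2) := lintegral_mono fun x => re_bd _ _
    _ = _ := lintegral_add_left (by fun_prop) _
    _ ≤ B + B := add_le_add b0 b1
    _ = _ := by ring

lemma timeI {w dw : ℝ → E2 → ℂ} (hw : Continuous fun p : ℝ × E2 => w p.1 p.2)
    (hdw : Continuous fun p : ℝ × E2 => dw p.1 p.2)
    (hd : ∀ t x, HasDerivAt (fun s => w s x) (dw t x) t) {T : ℝ} {B : ℝ≥0∞} (hB : B ≠ ⊤)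
    (b0 : ∀ t ∈ Set.Icc 0 T, ∫⁻ x, ‖w t x‖ₑ ^ 2 ≤ B)
    (b1 : ∀ t ∈ Set.Icc 0 T, ∫⁻ x, ‖dw t x‖ₑ ^ 2 ≤ B) (s t : ℝ) (hs : 0 ≤ s) (hst : s ≤ t) (ht : t ≤ T) :
    IntervalIntegrable (fun τ => ∫ x, 2 * ((starRingEnd ℂ) (w τ x) * dw τ x).re) volume s t ∧
    (∫ x, ‖w t x‖ ^ 2) - (∫ x, ‖w s x‖ ^ 2)
      = ∫ τ in s..t, ∫ x, 2 * ((starRingEnd ℂ) (w τ x) * dw τ x).re := by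
  have mw : ∀ τ, Measurable (w τ) := fun τ => by
    have : Continuous (w τ) := hw.comp (by fun_prop : Continuous fun x : E2 => (τ, x))
    exact this.measurable
  have hF : Continuous (fun p : ℝ × E2 => 2 * ((starRingEnd ℂ) (w p.1 p.2) * dw p.1 p.2).re) :=
    continuous_const.mul (Complex.continuous_re.comp ((Complex.continuous_conj.comp hw).mul hdw))
  have hint : Integrable (Function.uncurry fun (τ : ℝ) (x : E2) => 2 * ((starRingEnd ℂ) (w τ x) * dw τ x).re)
      ((volume.restrict (Set.Ioc s t)).prod volume) := by
    refine ⟨hF.measurable.aestronglyMeasurable, ?_⟩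
    unfold HasFiniteIntegral
    rw [lintegral_prod _ (by exact hF.measurable.enorm.aemeasurable)]
    have : ∫⁻ τ in Set.Ioc s t, 2 * B < ⊤ := by
      rw [lintegral_const]
      simp only [Measure.restrict_apply MeasurableSet.univ, Set.univ_inter, Real.volume_Ioc]
      exact ENNReal.mul_lt_top (ENNReal.mul_lt_top (by simp) (lt_top_iff_ne_top.2 hB)) (by simp)
    refine lt_of_le_of_lt (setLIntegral_mono measurable_const fun τ hτ => ?_) this
    have hτ' : τ ∈ Set.Icc 0 T := ⟨hs.trans hτ.1.le, hτ.2.trans ht⟩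
    exact gbound (mw τ) (b0 τ hτ') (b1 τ hτ')
  constructor
  · rw [intervalIntegrable_iff_integrableOn_Ioc_of_le hst]
    exact hint.integral_prod_left
  · rw [intervalIntegral.integral_of_le hst, integral_integral_swap hint]
    have hmt : t ∈ Set.Icc 0 T := ⟨hs.trans hst, ht⟩
    have hms : s ∈ Set.Icc 0 T := ⟨hs, hst.trans ht⟩
    rw [← integral_sub (int_sq_integrable (mw t) (ne_top_of_le_ne_top hB (b0 t hmt)))
      (int_sq_integrable (mw s) (ne_top_of_le_ne_top hB (b0 s hms)))]
    refine integral_congr_ae (Eventually.of_forall fun x => ?_)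
    simp only
    rw [← intervalIntegral.integral_of_le hst]
    symm
    refine intervalIntegral.integral_eq_sub_of_hasDerivAt (f := fun τ => ‖w τ x‖ ^ 2) (fun τ _ => ?_) ?_
    · have := (hd τ x).norm_sq
      have e : 2 * ((starRingEnd ℂ) (w τ x) * dw τ x).re = 2 * ⟪w τ x, dw τ x⟫ := by
        rw [Complex.inner, mul_comm ((starRingEnd ℂ) (w τ x))]
      rw [e]
      exact this
    · refine Continuous.intervalIntegrable ?_ _ _
      exact hF.comp (by fun_prop : Continuous fun τ : ℝ => (τ, x))

lemma Bd_of_H2 {u : SchwartzMap E2 ℂ} {m : ℝ≥0∞} (h : H2 u ≤ m) : Bd u (m ^ 2) := by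
  have e : ∀ {F : Type} [ENorm F] (f : E2 → F), eLpNorm f 2 volume ^ 2 = ∫⁻ x, ‖f x‖ₑ ^ 2 := by
    intro F _ f
    rw [eLpNorm_eq_lintegral_rpow_enorm_toReal (by norm_num) (by norm_num), ← ENNReal.rpow_natCast,
      ← ENNReal.rpow_mul]
    simp
  unfold H2 at h
  rw [e, e, e] at h
  have h2 := pow_le_pow_left₀ zero_le h 2
  rw [← ENNReal.rpow_natCast, ← ENNReal.rpow_mul] at h2
  unfold Bd
  simpa using h2

lemma d_cont {Φ dΦ : ℝ → E2 → ℂ} (h : ContDiff ℝ (⊤ : ℕ∞) fun p : ℝ × E2 => Φ p.1 p.2)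
    (hd : ∀ t x, HasDerivAt (fun s => Φ s x) (dΦ t x) t) :
    Continuous fun p : ℝ × E2 => dΦ p.1 p.2 := by
  have hc : Continuous (fderiv ℝ fun p : ℝ × E2 => Φ p.1 p.2) := h.continuous_fderiv (by simp)
  have e : (fun p : ℝ × E2 => dΦ p.1 p.2) = fun p => fderiv ℝ (fun p : ℝ × E2 => Φ p.1 p.2) p (1, 0) := by
    funext p
    have h1 : HasFDerivAt (fun p : ℝ × E2 => Φ p.1 p.2) (fderiv ℝ (fun p : ℝ × E2 => Φ p.1 p.2) p) (p.1, p.2) :=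
      (h.differentiable (by simp) p).hasFDerivAt
    have h2 : HasDerivAt (fun s : ℝ => (s, p.2)) ((1 : ℝ), (0 : E2)) p.1 :=
      (hasDerivAt_id p.1).prodMk (hasDerivAt_const _ _)
    have h3 := h1.comp_hasDerivAt p.1 h2
    exact (hd p.1 p.2).unique h3
  rw [e]
  fun_prop

lemma sub_sq_int {f g : E2 → ℂ} (hf : Measurable f) {B : ℝ≥0∞}
    (h1 : ∫⁻ x, ‖f x‖ₑ ^ 2 ≤ B) (h2 : ∫⁻ x, ‖g x‖ₑ ^ 2 ≤ B) : ∫⁻ x, ‖f x - g x‖ₑ ^ 2 ≤ 4 * B := by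
  calc _ ≤ ∫⁻ x, 2 * (‖f x‖ₑ ^ 2 + ‖g x‖ₑ ^ 2) :=
        lintegral_mono fun x => (pow_le_pow_left₀ zero_le enorm_sub_le 2).trans (sq2 _ _)
    _ = 2 * (∫⁻ x, ‖f x‖ₑ ^ 2 + ‖g x‖ₑ ^ 2) := lintegral_const_mul' _ _ (by norm_num)
    _ = 2 * ((∫⁻ x, ‖f x‖ₑ ^ 2) + ∫⁻ x, ‖g x‖ₑ ^ 2) := by rw [lintegral_add_left (by fun_prop)]
    _ ≤ 2 * (B + B) := by gcongr
    _ = _ := by ring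

end CSS

/-- Lemma 3.3 (convergence of the pilot equation): for every `M > 0` there are
`c', C > 0` depending only on `M` such that for every `T > 0`, every `|β| ≤ c'` and
`0 < R < 1`, if `φ` solves `CSS(0)`, `ψ` solves `CSS(R)` (smooth, Schwartz in space),
`φ(0) = ψ(0)` and `‖φ(t)‖_{H²} + ‖ψ(t)‖_{H²} ≤ M` on `[0,T]`, then on `[0,T]`:
`(d/dt)‖φ(t) − ψ(t)‖₂² ≤ CR² + C‖φ(t) − ψ(t)‖₂²` and
`‖φ(t) − ψ(t)‖₂² ≤ CR² e^{Ct}`. -/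
theorem statement15 (M : ℝ) (hM : 0 < M) :
    ∃ c' C : ℝ, 0 < c' ∧ 0 < C ∧
      ∀ T : ℝ, 0 < T → ∀ β : ℝ, |β| ≤ c' → ∀ R : ℝ, 0 < R → R < 1 →
      ∀ (φ ψ : ℝ → SchwartzMap E2 ℂ) (dφ dψ : ℝ → E2 → ℂ),
        (ContDiff ℝ (⊤ : ℕ∞) fun p : ℝ × E2 => φ p.1 p.2) →
        (ContDiff ℝ (⊤ : ℕ∞) fun p : ℝ × E2 => ψ p.1 p.2) →
        (∀ t x, HasDerivAt (fun s => φ s x) (dφ t x) t) →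
        (∀ t x, HasDerivAt (fun s => ψ s x) (dψ t x) t) →
        (∀ t ∈ Set.Icc (0 : ℝ) T, ∀ x, Complex.I * dφ t x = cssRHS β 0 (⇑(φ t)) x) →
        (∀ t ∈ Set.Icc (0 : ℝ) T, ∀ x, Complex.I * dψ t x = cssRHS β R (⇑(ψ t)) x) →
        φ 0 = ψ 0 →
        (∀ t ∈ Set.Icc (0 : ℝ) T, H2 (⇑(φ t)) + H2 (⇑(ψ t)) ≤ ENNReal.ofReal M) →
        ∀ t ∈ Set.Icc (0 : ℝ) T,
          (deriv (fun s => ∫ x, ‖φ s x - ψ s x‖ ^ 2) t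
              ≤ C * R ^ 2 + C * ∫ x, ‖φ t x - ψ t x‖ ^ 2) ∧
          ((∫ x, ‖φ t x - ψ t x‖ ^ 2) ≤ C * R ^ 2 * Real.exp (C * t)) := by
  set N : ℝ≥0∞ := (ENNReal.ofReal M) ^ 2 with hNdef
  have hN : N ≠ ⊤ := by simp [hNdef]
  have hC1 : 1 ≤ CSS.Cst N := by
    unfold CSS.Cst
    linarith [ENNReal.toReal_nonneg (a := CSS.c1 N), ENNReal.toReal_nonneg (a := CSS.c2 N)]
  refine ⟨1, CSS.Cst N, one_pos, by linarith, ?_⟩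
  intro T hT β hβ R hR hR1 φ ψ dφ dψ hφ hψ hdφ hdψ eφ eψ h0 hH
  have bφ : ∀ t ∈ Set.Icc 0 T, CSS.Bd (φ t) N := fun t ht => CSS.Bd_of_H2 (le_self_add.trans (hH t ht))
  have bψ : ∀ t ∈ Set.Icc 0 T, CSS.Bd (ψ t) N := fun t ht => CSS.Bd_of_H2 (le_add_self.trans (hH t ht))
  have cφ := CSS.d_cont (Φ := fun t x => φ t x) hφ hdφ
  have cψ := CSS.d_cont (Φ := fun t x => ψ t x) hψ hdψ
  set w : ℝ → E2 → ℂ := fun t x => φ t x - ψ t x with hw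
  set dw : ℝ → E2 → ℂ := fun t x => dφ t x - dψ t x with hdw
  have cw : Continuous fun p : ℝ × E2 => w p.1 p.2 := hφ.continuous.sub hψ.continuous
  have cdw : Continuous fun p : ℝ × E2 => dw p.1 p.2 := cφ.sub cψ
  have hd : ∀ t x, HasDerivAt (fun s => w s x) (dw t x) t := fun t x => (hdφ t x).sub (hdψ t x)
  set B : ℝ≥0∞ := 4 * N + 4 * CSS.c3 N with hBdef
  have hB : B ≠ ⊤ := by
    simp only [hBdef, CSS.c3]; finiteness
  have nI : ∀ z : ℂ, ‖Complex.I * z‖ₑ = ‖z‖ₑ := fun z => by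
    rw [enorm_mul, CSS.enorm_I_c, one_mul]
  have b0 : ∀ t ∈ Set.Icc 0 T, ∫⁻ x, ‖w t x‖ₑ ^ 2 ≤ B := fun t ht =>
    (CSS.sub_sq_int (φ t).continuous.measurable (bφ t ht).int0 (bψ t ht).int0).trans le_self_add
  have b1 : ∀ t ∈ Set.Icc 0 T, ∫⁻ x, ‖dw t x‖ₑ ^ 2 ≤ B := by
    intro t ht
    refine (CSS.sub_sq_int (B := CSS.c3 N) ?_ ?_ ?_).trans le_add_self
    · have : Continuous (dφ t) := cφ.comp (by fun_prop : Continuous fun x : E2 => (t, x))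
      exact this.measurable
    · refine le_trans (le_of_eq (lintegral_congr fun x => ?_)) (CSS.css_int (φ t) (R := 0) hβ (bφ t ht))
      rw [← eφ t ht x, nI]
    · refine le_trans (le_of_eq (lintegral_congr fun x => ?_)) (CSS.css_int (ψ t) (R := R) hβ (bψ t ht))
      rw [← eψ t ht x, nI]
  have hI := CSS.timeI cw cdw hd hB b0 b1
  have hgb : ∀ τ ∈ Set.Icc 0 T, |∫ x, 2 * ((starRingEnd ℂ) (w τ x) * dw τ x).re| ≤ (2 * B).toReal := by
    intro τ hτ
    have mw : Measurable (w τ) := by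
      have : Continuous (w τ) := cw.comp (by fun_prop : Continuous fun x : E2 => (τ, x))
      exact this.measurable
    have h1 := (enorm_integral_le_lintegral_enorm
      (fun x => 2 * ((starRingEnd ℂ) (w τ x) * dw τ x).re)).trans
      (CSS.gbound mw (b0 τ hτ) (b1 τ hτ))
    have h2 := ENNReal.toReal_mono (by finiteness) h1
    rwa [toReal_enorm, Real.norm_eq_abs] at h2
  have hg : ∀ τ ∈ Set.Icc 0 T, ∫ x, 2 * ((starRingEnd ℂ) (w τ x) * dw τ x).re
      ≤ CSS.Cst N * R ^ 2 + CSS.Cst N * ∫ x, ‖w τ x‖ ^ 2 := by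
    intro τ hτ
    refine le_trans (le_of_eq (integral_congr_ae (Filter.Eventually.of_forall fun x => ?_)))
      (CSS.fixed_time (φ τ) (ψ τ) hβ hR hN (bφ τ hτ) (bψ τ hτ))
    simp only [hw, hdw]
    rw [← eφ τ hτ x, ← eψ τ hτ x]
    generalize dφ τ x = a
    generalize dψ τ x = b
    generalize φ τ x - ψ τ x = c
    simp
    ring
  have h00 : ∫ x, ‖w 0 x‖ ^ 2 = 0 := by simp [hw, h0]
  intro t ht
  obtain ⟨g1, g2⟩ := CSS.gron (f := fun t => ∫ x, ‖w t x‖ ^ 2) hT (by linarith : 0 < CSS.Cst N) hI hgb hg h00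
    (fun τ => integral_nonneg fun x => by positivity) (sq_nonneg R) t ht
  refine ⟨g1, ?_⟩
  change ∫ x, ‖w t x‖ ^ 2 ≤ _
  have hE := Real.exp_pos (CSS.Cst N * t)
  have hR2 := sq_nonneg R
  calc ∫ x, ‖w t x‖ ^ 2 ≤ R ^ 2 * (Real.exp (CSS.Cst N * t) - 1) := g2
    _ ≤ 1 * (R ^ 2 * Real.exp (CSS.Cst N * t)) := by nlinarith
    _ ≤ CSS.Cst N * (R ^ 2 * Real.exp (CSS.Cst N * t)) := by gcongr
    _ = _ := by ring
end
end

section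
/- Pointwise convergence of the average-field energy functional (Proposition A.3): fix β ∈ ℝ. There exists a constant C > 0 (depending only on β) such that for every R ∈ (0, 1] and every u ∈ H¹(ℝ², ℂ) with ‖u‖₂ = 1, | E_R[u] − E₀[u] | ≤ C (1 + E₀[u]^{3/2}) R, where for R ≥ 0 the average-field energy is E_R[u] := ∫_{ℝ²} ‖ −i∇u(x) + β (K_R ∗ |u|²)(x) u(x) ‖² dx. -/
noncomputable section
open MeasureTheory ENNReal
open scoped RealInnerProductSpace

lemma cs_lint {α : Type*} [MeasurableSpace α] (μ : Measure α) {f g : α → ℝ≥0∞}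
    (hf : AEMeasurable f μ) (hg : AEMeasurable g μ) :
    (∫⁻ a, f a * g a ∂μ) ^ 2 ≤ (∫⁻ a, f a ^ 2 ∂μ) * (∫⁻ a, g a ^ 2 ∂μ) := by
  have h := ENNReal.lintegral_mul_le_Lp_mul_Lq μ Real.HolderConjugate.two_two hf hg
  have h2 : (∫⁻ a, f a * g a ∂μ) ^ 2 ≤
      ((∫⁻ a, f a ^ (2:ℝ) ∂μ) ^ (1 / (2:ℝ)) * (∫⁻ a, g a ^ (2:ℝ) ∂μ) ^ (1 / (2:ℝ))) ^ 2 := by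
    gcongr
    exact h
  refine h2.trans (le_of_eq ?_)
  rw [mul_pow, ← ENNReal.rpow_natCast, ← ENNReal.rpow_natCast, ← ENNReal.rpow_mul,
    ← ENNReal.rpow_mul]
  norm_num

lemma one_dim {W : ℝ → ℝ} (hW : Differentiable ℝ W) 
    (hint : ∫⁻ t, ENNReal.ofReal (W t) ≠ ⊤) (t : ℝ) :
    ENNReal.ofReal (W t) ≤ ∫⁻ s, ‖deriv W s‖ₑ := by
  by_cases htop : ∫⁻ s, ‖deriv W s‖ₑ = ⊤
  · rw [htop]; exact le_top
  have hd : Integrable (deriv W) := by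
    refine ⟨(measurable_deriv W).aestronglyMeasurable, ?_⟩
    rw [hasFiniteIntegral_iff_enorm]
    exact lt_top_iff_ne_top.2 htop
  have key : ∀ a, W t - W a ≤ ∫ s, ‖deriv W s‖ := by
    intro a
    rw [← intervalIntegral.integral_eq_sub_of_hasDerivAt (f := W) (f' := deriv W) (a := a) (b := t)
      (fun x _ => (hW x).hasDerivAt) hd.intervalIntegrable]
    refine (le_abs_self _).trans ?_
    rw [← Real.norm_eq_abs]
    refine intervalIntegral.norm_integral_le_integral_norm_uIoc.trans ?_
    exact setIntegral_le_integral hd.norm (Filter.Eventually.of_forall fun _ => norm_nonneg _)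
  have e : ∫⁻ s, ‖deriv W s‖ₑ = ENNReal.ofReal (∫ s, ‖deriv W s‖) := by
    rw [ofReal_integral_norm_eq_lintegral_enorm hd]
  rw [e]
  apply ENNReal.ofReal_le_ofReal
  by_contra hlt
  push Not at hlt
  set δ := W t - ∫ s, ‖deriv W s‖ with hδ
  have hδ0 : 0 < δ := by linarith
  have : ∫⁻ _ : ℝ, ENNReal.ofReal δ ≤ ∫⁻ t, ENNReal.ofReal (W t) := by
    apply lintegral_mono
    intro a
    apply ENNReal.ofReal_le_ofReal
    linarith [key a]
  apply hint
  rw [eq_top_iff]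
  refine le_trans ?_ this
  rw [lintegral_const, Real.volume_univ, ENNReal.mul_top]
  simpa using hδ0

/-- the plane as a product -/
def mk2 (p : ℝ × ℝ) : E2 := WithLp.toLp 2 ![p.1, p.2]

lemma mk2_mp : MeasurePreserving mk2 (volume.prod volume) volume := by
  have h1 := (volume_preserving_finTwoArrow ℝ).symm
  have h2 := PiLp.volume_preserving_toLp (Fin 2)
  exact h2.comp h1

lemma mk2_0 (s t y : ℝ) : mk2 (s, y) = mk2 (t, y) + (s - t) • e2 0 := by
  ext i; fin_cases i <;> simp [mk2, e2]

lemma mk2_1 (s t y : ℝ) : mk2 (y, s) = mk2 (y, t) + (s - t) • e2 1 := by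
  ext i; fin_cases i <;> simp [mk2, e2]

lemma mk2_d0 {W : E2 → ℝ} (hW : Differentiable ℝ W) (s y : ℝ) :
    HasDerivAt (fun s => W (mk2 (s, y))) (fderiv ℝ W (mk2 (s, y)) (e2 0)) s := by
  have h : HasDerivAt (fun s' => mk2 (s', y)) (e2 0) s := by
    rw [show (fun s' => mk2 (s', y)) = fun s' => mk2 (0, y) + (s' - 0) • e2 0 from
      funext fun s' => mk2_0 s' 0 y]
    simpa using ((((hasDerivAt_id s).sub_const 0).smul_const (e2 0)).const_add (mk2 (0, y)))
  exact (hW _).hasFDerivAt.comp_hasDerivAt s h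

lemma mk2_d1 {W : E2 → ℝ} (hW : Differentiable ℝ W) (s y : ℝ) :
    HasDerivAt (fun s => W (mk2 (y, s))) (fderiv ℝ W (mk2 (y, s)) (e2 1)) s := by
  have h : HasDerivAt (fun s' => mk2 (y, s')) (e2 1) s := by
    rw [show (fun s' => mk2 (y, s')) = fun s' => mk2 (y, 0) + (s' - 0) • e2 1 from
      funext fun s' => mk2_1 s' 0 y]
    simpa using ((((hasDerivAt_id s).sub_const 0).smul_const (e2 1)).const_add (mk2 (y, 0)))
  exact (hW _).hasFDerivAt.comp_hasDerivAt s h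

lemma plane {W : E2 → ℝ} (hW : Differentiable ℝ W)
    (hint : ∫⁻ t, ENNReal.ofReal (W t) ≠ ⊤) {g : E2 → ℝ≥0∞} (hg : Measurable g)
    (hgW : ∀ j x, ‖fderiv ℝ W x (e2 j)‖ₑ ≤ g x) :
    ∫⁻ x, ENNReal.ofReal (W x) ^ 2 ≤ (∫⁻ x, g x) ^ 2 := by
  have hWm : Measurable W := hW.continuous.measurable
  have mm : Measurable mk2 := mk2_mp.measurable
  have hint' : ∫⁻ p : ℝ × ℝ, ENNReal.ofReal (W (mk2 p)) ∂(volume.prod volume) ≠ ⊤ := by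
    rwa [mk2_mp.lintegral_comp (f := fun x => ENNReal.ofReal (W x)) (by fun_prop)]
  rw [← mk2_mp.lintegral_comp (f := fun x => ENNReal.ofReal (W x) ^ 2) (by fun_prop),
    ← mk2_mp.lintegral_comp (f := g) hg]
  have mW : Measurable fun p : ℝ × ℝ => ENNReal.ofReal (W (mk2 p)) := by fun_prop
  have mg : Measurable fun p : ℝ × ℝ => g (mk2 p) := hg.comp mm
  set G0 : ℝ → ℝ≥0∞ := fun y => ∫⁻ s, g (mk2 (s, y)) with hG0
  set G1 : ℝ → ℝ≥0∞ := fun x => ∫⁻ s, g (mk2 (x, s)) with hG1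
  have mG0 : Measurable G0 := mg.lintegral_prod_left'
  have mG1 : Measurable G1 := mg.lintegral_prod_right'
  have i0 : ∫⁻ y, G0 y = ∫⁻ p, g (mk2 p) ∂(volume.prod volume) := by
    rw [lintegral_prod_symm _ mg.aemeasurable]
  have i1 : ∫⁻ y, G1 y = ∫⁻ p, g (mk2 p) ∂(volume.prod volume) := by
    rw [lintegral_prod _ mg.aemeasurable]
  have a1 : ∀ᵐ x : ℝ, ∫⁻ y, ENNReal.ofReal (W (mk2 (x, y))) < ⊤ := by
    apply ae_lt_top mW.lintegral_prod_right'
    rwa [lintegral_prod _ mW.aemeasurable] at hint'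
  have a0 : ∀ᵐ y : ℝ, ∫⁻ x, ENNReal.ofReal (W (mk2 (x, y))) < ⊤ := by
    apply ae_lt_top mW.lintegral_prod_left'
    rwa [lintegral_prod_symm _ mW.aemeasurable] at hint'
  have b1 : ∀ᵐ x : ℝ, ∀ y, ENNReal.ofReal (W (mk2 (x, y))) ≤ G1 x := by
    filter_upwards [a1] with x hx y
    refine (one_dim (W := fun y => W (mk2 (x, y))) (fun s => (mk2_d1 hW s x).differentiableAt)
      hx.ne y).trans ?_
    apply lintegral_mono
    intro s
    beta_reduce
    rw [(mk2_d1 hW s x).deriv]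
    exact hgW _ _
  have b0 : ∀ᵐ y : ℝ, ∀ x, ENNReal.ofReal (W (mk2 (x, y))) ≤ G0 y := by
    filter_upwards [a0] with x hx y
    refine (one_dim (W := fun y => W (mk2 (y, x))) (fun s => (mk2_d0 hW s x).differentiableAt)
      hx.ne y).trans ?_
    apply lintegral_mono
    intro s
    beta_reduce
    rw [(mk2_d0 hW s x).deriv]
    exact hgW _ _
  calc ∫⁻ p : ℝ × ℝ, ENNReal.ofReal (W (mk2 p)) ^ 2 ∂(volume.prod volume)
      = ∫⁻ x, ∫⁻ y, ENNReal.ofReal (W (mk2 (x, y))) ^ 2 := by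
        rw [lintegral_prod _ (by fun_prop)]
    _ ≤ ∫⁻ x, ∫⁻ y, G1 x * G0 y := by
        apply lintegral_mono_ae
        filter_upwards [b1] with x hx
        apply lintegral_mono_ae
        filter_upwards [b0] with y hy
        rw [sq]
        exact mul_le_mul' (hx y) (hy x)
    _ = (∫⁻ x, G1 x) * ∫⁻ y, G0 y := by
        simp_rw [lintegral_const_mul _ mG0]
        rw [lintegral_mul_const _ mG1]
    _ = _ := by rw [i0, i1, sq]

lemma gn4 {u : E2 → ℂ} (hu : Differentiable ℝ u) (h1 : ∫⁻ x, ‖u x‖ₑ ^ 2 = 1)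
    {V : E2 → ℝ≥0∞} (hVm : Measurable V)
    (hV : ∀ j x, ‖fderiv ℝ (fun y => ‖u y‖ ^ 2) x (e2 j)‖ₑ ≤ 2 * ‖u x‖ₑ * V x) :
    ∫⁻ x, ‖u x‖ₑ ^ 4 ≤ 4 * ∫⁻ x, V x ^ 2 := by
  have hum : Measurable u := hu.continuous.measurable
  have e : ∀ x, ENNReal.ofReal (‖u x‖ ^ 2) = ‖u x‖ₑ ^ 2 := fun x => by
    rw [ENNReal.ofReal_pow (norm_nonneg _), ofReal_norm]
  have h := plane (W := fun y => ‖u y‖ ^ 2) (hu.norm_sq ℝ) (by simp [e, h1])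
    (g := fun x => 2 * ‖u x‖ₑ * V x) (by fun_prop) hV
  simp only [e, ← pow_mul] at h
  refine h.trans ?_
  calc (∫⁻ x, 2 * ‖u x‖ₑ * V x) ^ 2 = 4 * (∫⁻ x, ‖u x‖ₑ * V x) ^ 2 := by
        simp_rw [mul_assoc]
        rw [lintegral_const_mul _ (by fun_prop), mul_pow]
        norm_num
    _ ≤ 4 * ((∫⁻ x, ‖u x‖ₑ ^ 2) * ∫⁻ x, V x ^ 2) := by
        gcongr
        exact cs_lint _ (by fun_prop) (by fun_prop)
    _ = _ := by rw [h1, one_mul]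

lemma gn6 {u : E2 → ℂ} (hu : Differentiable ℝ u) (h1 : ∫⁻ x, ‖u x‖ₑ ^ 2 = 1)
    {V : E2 → ℝ≥0∞} (hVm : Measurable V)
    (hV : ∀ j x, ‖fderiv ℝ (fun y => ‖u y‖ ^ 2) x (e2 j)‖ₑ ≤ 2 * ‖u x‖ₑ * V x)
    (hN : ∫⁻ x, V x ^ 2 ≠ ⊤) :
    ∫⁻ x, ‖u x‖ₑ ^ 6 ≤ 36 * (∫⁻ x, V x ^ 2) ^ 2 := by
  have hum : Measurable u := hu.continuous.measurable
  have h4 := gn4 hu h1 hVm hV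
  have hw : Differentiable ℝ (fun y => ‖u y‖ ^ 2) := hu.norm_sq ℝ
  have e3 : ∀ x, (‖u x‖ ^ 2) ^ (3 / 2 : ℝ) = ‖u x‖ ^ 3 := fun x => by
    rw [← Real.rpow_natCast, ← Real.rpow_mul (norm_nonneg _), ← Real.rpow_natCast]
    norm_num
  have e1 : ∀ x, (‖u x‖ ^ 2) ^ (3 / 2 - 1 : ℝ) = ‖u x‖ := fun x => by
    rw [← Real.rpow_natCast, ← Real.rpow_mul (norm_nonneg _)]
    norm_num
  have hd : ∀ x, HasFDerivAt (fun y => ‖u y‖ ^ 3)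
      (((3 / 2 : ℝ) * ‖u x‖) • fderiv ℝ (fun y => ‖u y‖ ^ 2) x) x := fun x => by
    have := (hw x).hasFDerivAt.rpow_const (p := (3 / 2 : ℝ)) (Or.inr (by norm_num))
    rw [e1] at this
    simpa only [e3] using this
  have e : ∀ x, ENNReal.ofReal (‖u x‖ ^ 3) = ‖u x‖ₑ ^ 3 := fun x => by
    rw [ENNReal.ofReal_pow (norm_nonneg _), ofReal_norm]
  have hfin : ∫⁻ x, ‖u x‖ₑ ^ 3 ≠ ⊤ := by
    have : ∫⁻ x, ‖u x‖ₑ ^ 3 ≤ ∫⁻ x, (‖u x‖ₑ ^ 2 + ‖u x‖ₑ ^ 4) := by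
      apply lintegral_mono
      intro x
      beta_reduce
      rcases le_total (‖u x‖ₑ) 1 with h | h
      · exact (pow_le_pow_right_of_le_one' h (by norm_num)).trans le_self_add
      · exact (pow_le_pow_right₀ h (by norm_num)).trans le_add_self
    refine ne_top_of_le_ne_top ?_ this
    rw [lintegral_add_left (by fun_prop), h1]
    exact ENNReal.add_ne_top.2 ⟨by simp, ne_top_of_le_ne_top
      (ENNReal.mul_ne_top (by norm_num) hN) h4⟩
  have h := plane (W := fun y => ‖u y‖ ^ 3) (fun x => (hd x).differentiableAt) (by simpa only [e])
    (g := fun x => 3 * (‖u x‖ₑ ^ 2 * V x)) (by fun_prop) (by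
      intro j x
      rw [(hd x).fderiv, smul_apply, smul_eq_mul, enorm_mul, enorm_mul]
      calc _ ≤ ‖(3 / 2 : ℝ)‖ₑ * ‖‖u x‖‖ₑ * (2 * ‖u x‖ₑ * V x) := by
            gcongr
            exact hV j x
        _ = (‖(3 / 2 : ℝ)‖ₑ * 2) * (‖u x‖ₑ ^ 2 * V x) := by
            rw [enorm_norm]; ring
        _ = _ := by
            congr 1
            rw [Real.enorm_eq_ofReal (by norm_num)]
            rw [show (2 : ℝ≥0∞) = ENNReal.ofReal 2 by norm_num, ← ENNReal.ofReal_mul (by norm_num)]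
            norm_num)
  simp only [e, ← pow_mul] at h
  refine h.trans ?_
  calc (∫⁻ x, 3 * (‖u x‖ₑ ^ 2 * V x)) ^ 2 = 9 * (∫⁻ x, ‖u x‖ₑ ^ 2 * V x) ^ 2 := by
        rw [lintegral_const_mul _ (by fun_prop), mul_pow]
        norm_num
    _ ≤ 9 * ((∫⁻ x, (‖u x‖ₑ ^ 2) ^ 2) * ∫⁻ x, V x ^ 2) := by
        gcongr
        exact cs_lint _ (by fun_prop) (by fun_prop)
    _ ≤ 9 * ((4 * ∫⁻ x, V x ^ 2) * ∫⁻ x, V x ^ 2) := by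
        gcongr
        simpa only [← pow_mul] using h4
    _ = _ := by ring

/-- the truncated kernel `1/|x|` on `|x| < r` -/
def fk (r : ℝ) (x : E2) : ℝ≥0∞ := ENNReal.ofReal ((Set.Iio r).indicator (fun t => t⁻¹) ‖x‖)

lemma fk_meas (r : ℝ) : Measurable (fk r) := by
  unfold fk
  have : Measurable ((Set.Iio r).indicator (fun t : ℝ => t⁻¹)) :=
    measurable_inv.indicator measurableSet_Iio
  exact (this.comp measurable_norm).ennreal_ofReal

lemma fk_int {r : ℝ} (hr : 0 < r) :
    ∫⁻ x, fk r x = ENNReal.ofReal ((2 * volume.real (Metric.ball (0 : E2) 1)) * r) := by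
  have hdim : Module.finrank ℝ E2 = 2 := by simp
  have eq : Set.EqOn (fun y : ℝ => y ^ (Module.finrank ℝ E2 - 1) •
      (Set.Iio r).indicator (fun t => t⁻¹) y) ((Set.Iio r).indicator (fun _ => (1:ℝ))) (Set.Ioi 0) := by
    intro y hy
    have : y ≠ 0 := ne_of_gt hy
    by_cases h : y < r <;> simp [hdim, h, this]
  have hi : Integrable (fun x : E2 => (Set.Iio r).indicator (fun t : ℝ => t⁻¹) ‖x‖) := by
    rw [integrable_fun_norm_addHaar (μ := (volume : Measure E2)) (f := (Set.Iio r).indicator (fun t : ℝ => t⁻¹))]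
    rw [integrableOn_congr_fun eq measurableSet_Ioi]
    rw [integrableOn_indicator_iff measurableSet_Iio]
    rw [Set.inter_comm, Set.Ioi_inter_Iio]
    simp
  have hn : ∀ x : E2, 0 ≤ (Set.Iio r).indicator (fun t : ℝ => t⁻¹) ‖x‖ := fun x =>
    Set.indicator_apply_nonneg fun _ => by positivity
  unfold fk
  rw [← ofReal_integral_eq_lintegral_ofReal hi (Filter.Eventually.of_forall hn)]
  rw [integral_fun_norm_addHaar, setIntegral_congr_fun measurableSet_Ioi eq,
    setIntegral_indicator measurableSet_Iio, Set.Ioi_inter_Iio, hdim]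
  simp [hr.le, mul_assoc]

lemma fk_neg (r : ℝ) (x : E2) : fk r (-x) = fk r x := by simp [fk]

lemma fk_le {R r : ℝ} (hr : 0 < r) (x : E2) : fk R x ≤ fk r x + ENNReal.ofReal r⁻¹ := by
  unfold fk
  by_cases h : ‖x‖ < r
  · refine le_trans ?_ le_self_add
    apply ENNReal.ofReal_le_ofReal
    rw [Set.indicator_of_mem (show ‖x‖ ∈ Set.Iio r from h)]
    exact Set.indicator_apply_le' (fun _ => le_rfl) (fun _ => by positivity)
  · refine le_trans ?_ le_add_self
    apply ENNReal.ofReal_le_ofReal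
    push Not at h
    exact Set.indicator_apply_le' (fun _ => inv_anti₀ hr h) (fun _ => by positivity)

/-- the convolution with the truncated kernel -/
def Dk (r : ℝ) (u : E2 → ℂ) (x : E2) : ℝ≥0∞ := ∫⁻ y, fk r (x - y) * ‖u y‖ₑ ^ 2

lemma Dk_meas (r : ℝ) {u : E2 → ℂ} (hum : Measurable u) : Measurable (Dk r u) := by
  have := fk_meas r
  unfold Dk
  apply Measurable.lintegral_prod_right'
    (f := fun p : E2 × E2 => fk r (p.1 - p.2) * ‖u p.2‖ₑ ^ 2)
  fun_prop

lemma fk_int_left {r : ℝ} (x : E2) : ∫⁻ y, fk r (x - y) = ∫⁻ y, fk r y :=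
  lintegral_sub_left_eq_self (fk r) x

lemma fk_int_right {r : ℝ} (y : E2) : ∫⁻ x, fk r (x - y) = ∫⁻ y, fk r y :=
  lintegral_sub_right_eq_self (fk r) y

lemma Dk_sq (r : ℝ) {u : E2 → ℂ} (hum : Measurable u) (x : E2) :
    Dk r u x ^ 2 ≤ (∫⁻ y, fk r y) * ∫⁻ y, fk r (x - y) * ‖u y‖ₑ ^ 4 := by
  have hf := fk_meas r
  have hs : ∀ a : ℝ≥0∞, (a ^ (1 / 2 : ℝ)) ^ 2 = a := fun a => by
    rw [← ENNReal.rpow_natCast, ← ENNReal.rpow_mul]; norm_num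
  have h := cs_lint volume (f := fun y => fk r (x - y) ^ (1 / 2 : ℝ))
    (g := fun y => fk r (x - y) ^ (1 / 2 : ℝ) * ‖u y‖ₑ ^ 2) (by fun_prop) (by fun_prop)
  simp only [← mul_assoc, ← sq, hs, mul_pow, ← pow_mul, fk_int_left] at h
  exact h

lemma Dk_u (r : ℝ) {u : E2 → ℂ} (hum : Measurable u) :
    ∫⁻ x, (Dk r u x * ‖u x‖ₑ) ^ 2 ≤ 2 * (∫⁻ y, fk r y) ^ 2 * ∫⁻ x, ‖u x‖ₑ ^ 6 := by
  have hf := fk_meas r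
  set I := ∫⁻ y, fk r y with hI
  have key : ∀ a b : ℝ≥0∞, a ^ 4 * b ^ 2 ≤ a ^ 6 + b ^ 6 := by
    intro a b
    rcases le_total a b with h | h
    · calc a ^ 4 * b ^ 2 ≤ b ^ 4 * b ^ 2 := by gcongr
        _ = b ^ 6 := by ring
        _ ≤ _ := le_add_self
    · calc a ^ 4 * b ^ 2 ≤ a ^ 4 * a ^ 2 := by gcongr
        _ = a ^ 6 := by ring
        _ ≤ _ := le_self_add
  calc ∫⁻ x, (Dk r u x * ‖u x‖ₑ) ^ 2
      ≤ ∫⁻ x, I * ∫⁻ y, (fk r (x - y) * ‖u y‖ₑ ^ 6 + fk r (x - y) * ‖u x‖ₑ ^ 6) := by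
        apply lintegral_mono
        intro x
        beta_reduce
        rw [mul_pow]
        refine (mul_le_mul_left (Dk_sq r hum x) _).trans ?_
        rw [← hI, mul_assoc]
        refine mul_le_mul_right ?_ _
        rw [← lintegral_mul_const _ (by fun_prop)]
        refine lintegral_mono fun y => ?_
        beta_reduce
        rw [mul_assoc, ← mul_add]
        exact mul_le_mul_right (key _ _) _
    _ = I * (∫⁻ x, ∫⁻ y, fk r (x - y) * ‖u y‖ₑ ^ 6) + I * ∫⁻ x, I * ‖u x‖ₑ ^ 6 := by
        have m1 : Measurable fun p : E2 × E2 => fk r (p.1 - p.2) * ‖u p.2‖ₑ ^ 6 := by fun_prop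
        have m2 : Measurable fun p : E2 × E2 => fk r (p.1 - p.2) * ‖u p.1‖ₑ ^ 6 := by fun_prop
        have m1' := m1.lintegral_prod_right' (ν := volume)
        have m3 : ∀ x, Measurable fun y => fk r (x - y) := fun x => by fun_prop
        have m4 : ∀ x, Measurable fun y => fk r (x - y) * ‖u y‖ₑ ^ 6 := fun x => by fun_prop
        simp_rw [lintegral_add_left (m4 _), lintegral_mul_const _ (m3 _), fk_int_left]
        rw [lintegral_const_mul, lintegral_add_left, mul_add]
        · exact m1'
        · exact m1'.add (by fun_prop)
    _ = _ := by
        rw [lintegral_lintegral_swap (by fun_prop)]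
        have m3 : ∀ y, Measurable fun x => fk r (x - y) := fun x => by fun_prop
        simp_rw [lintegral_mul_const _ (m3 _), fk_int_right]
        rw [lintegral_const_mul _ (by fun_prop)]
        ring

lemma Dk_le {R r : ℝ} (hr : 0 < r) {u : E2 → ℂ} (hum : Measurable u)
    (h1 : ∫⁻ x, ‖u x‖ₑ ^ 2 = 1) (x : E2) : Dk R u x ≤ Dk r u x + ENNReal.ofReal r⁻¹ := by
  have hf := fk_meas r
  calc Dk R u x ≤ ∫⁻ y, (fk r (x - y) * ‖u y‖ₑ ^ 2 + ENNReal.ofReal r⁻¹ * ‖u y‖ₑ ^ 2) := by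
        apply lintegral_mono
        intro y
        beta_reduce
        rw [← add_mul]
        gcongr
        exact fk_le hr _
    _ = _ := by
        rw [lintegral_add_left (by fun_prop), lintegral_const_mul _ (by fun_prop), h1, mul_one]
        rfl

lemma Dk_fin {r : ℝ} (hr : 0 < r) {u : E2 → ℂ} (hum : Measurable u)
    (h1 : ∫⁻ x, ‖u x‖ₑ ^ 2 = 1) : ∀ᵐ x, Dk r u x < ⊤ := by
  have hf := fk_meas r
  apply ae_lt_top (Dk_meas r hum)
  unfold Dk
  rw [lintegral_lintegral_swap (by fun_prop)]
  have m3 : ∀ y, Measurable fun x => fk r (x - y) := fun x => by fun_prop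
  simp_rw [lintegral_mul_const _ (m3 _), fk_int_right]
  rw [lintegral_const_mul _ (by fun_prop), h1, fk_int hr, mul_one]
  exact ENNReal.ofReal_ne_top

lemma enn_add_sq_le (a b : ℝ≥0∞) : (a + b) ^ 2 ≤ 2 * a ^ 2 + 2 * b ^ 2 := by
  have := ENNReal.rpow_add_le_mul_rpow_add_rpow a b (p := 2) (by norm_num)
  norm_num at this
  rwa [mul_add] at this

lemma Dk_u' {R r : ℝ} (hr : 0 < r) {u : E2 → ℂ} (hum : Measurable u)
    (h1 : ∫⁻ x, ‖u x‖ₑ ^ 2 = 1) :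
    ∫⁻ x, (Dk R u x * ‖u x‖ₑ) ^ 2 ≤
      2 * (2 * (∫⁻ y, fk r y) ^ 2 * ∫⁻ x, ‖u x‖ₑ ^ 6) + 2 * ENNReal.ofReal r⁻¹ ^ 2 := by
  have hD := Dk_meas r hum
  calc ∫⁻ x, (Dk R u x * ‖u x‖ₑ) ^ 2
      ≤ ∫⁻ x, (2 * (Dk r u x * ‖u x‖ₑ) ^ 2 + 2 * ENNReal.ofReal r⁻¹ ^ 2 * ‖u x‖ₑ ^ 2) := by
        apply lintegral_mono
        intro x
        beta_reduce
        rw [mul_pow, mul_pow, ← mul_assoc, ← add_mul]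
        gcongr
        refine le_trans ?_ (enn_add_sq_le _ _)
        gcongr
        exact Dk_le hr hum h1 x
    _ = 2 * (∫⁻ x, (Dk r u x * ‖u x‖ₑ) ^ 2) + 2 * ENNReal.ofReal r⁻¹ ^ 2 := by
        rw [lintegral_add_left (by fun_prop), lintegral_const_mul _ (by fun_prop),
          lintegral_const_mul _ (by fun_prop), h1, mul_one]
    _ ≤ _ := by
        gcongr
        exact Dk_u r hum

lemma two_mul_ofReal (a : ℝ) : 2 * ENNReal.ofReal a = ENNReal.ofReal (2 * a) := by
  rw [ENNReal.ofReal_mul (by norm_num)]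
  norm_num

lemma perp_norm (x : E2) : ‖perp x‖ = ‖x‖ := by
  rw [EuclideanSpace.norm_eq, EuclideanSpace.norm_eq]
  simp [perp, add_comm]

lemma perp_meas : Measurable perp := by
  have : Continuous perp := by
    unfold perp
    refine (PiLp.continuous_toLp 2 _).comp (continuous_pi fun i => ?_)
    fin_cases i <;> simp <;> fun_prop
  exact this.measurable

lemma K_meas (R : ℝ) : Measurable (K R) := by
  have := perp_meas
  unfold K
  fun_prop

lemma K_norm (R : ℝ) (x : E2) : ‖K R x‖ = ((max R ‖x‖) ^ 2)⁻¹ * ‖x‖ := by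
  rw [K, norm_smul, perp_norm, Real.norm_of_nonneg (by positivity)]

lemma K_bd (R : ℝ) (x : E2) : ‖K R x‖ₑ ≤ fk 1 x + 1 := by
  by_cases hx : x = 0
  · subst hx
    rw [← ofReal_norm, K_norm]
    simp
  have hx' : 0 < ‖x‖ := norm_pos_iff.2 hx
  have h : ‖K R x‖ ≤ ‖x‖⁻¹ := by
    rw [K_norm]
    have : ((max R ‖x‖) ^ 2)⁻¹ ≤ (‖x‖ ^ 2)⁻¹ := by
      apply inv_anti₀ (by positivity)
      gcongr
      exact le_max_right _ _
    calc _ ≤ (‖x‖ ^ 2)⁻¹ * ‖x‖ := by gcongr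
      _ = _ := by field_simp
  rw [← ofReal_norm]
  refine (ENNReal.ofReal_le_ofReal h).trans ?_
  unfold fk
  by_cases h1 : ‖x‖ < 1
  · rw [Set.indicator_of_mem (show ‖x‖ ∈ Set.Iio 1 from h1)]
    exact le_self_add
  · refine le_trans ?_ le_add_self
    rw [← ENNReal.ofReal_one]
    apply ENNReal.ofReal_le_ofReal
    exact inv_le_one_of_one_le₀ (not_lt.1 h1)

lemma K_diff {R : ℝ} (hR : 0 < R) (x : E2) : ‖K R x - K 0 x‖ₑ ≤ fk R x := by
  by_cases h : ‖x‖ < R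
  · rw [fk, Set.indicator_of_mem (show ‖x‖ ∈ Set.Iio R from h), ← ofReal_norm]
    apply ENNReal.ofReal_le_ofReal
    rw [K, K, max_eq_left h.le, max_eq_right (norm_nonneg _), ← sub_smul, norm_smul, perp_norm]
    by_cases hx : x = 0
    · simp [hx]
    have hx' : 0 < ‖x‖ := norm_pos_iff.2 hx
    have h2 : (R ^ 2)⁻¹ ≤ (‖x‖ ^ 2)⁻¹ := inv_anti₀ (by positivity) (by gcongr)
    have h3 : 0 ≤ (R ^ 2)⁻¹ := by positivity
    rw [Real.norm_eq_abs, abs_of_nonpos (by linarith)]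
    calc _ ≤ (‖x‖ ^ 2)⁻¹ * ‖x‖ := by gcongr; linarith
      _ = _ := by field_simp
  · push Not at h
    rw [K, K, max_eq_right h, max_eq_right (norm_nonneg _)]
    simp

lemma Apot_meas (R : ℝ) {u : E2 → ℂ} (hum : Measurable u) : Measurable (Apot R u) := by
  have := K_meas R
  unfold Apot convKs
  have h : StronglyMeasurable (fun p : E2 × E2 => ‖u p.2‖ ^ 2 • K R (p.1 - p.2)) := by
    apply Measurable.stronglyMeasurable
    fun_prop
  exact h.integral_prod_right.measurable

lemma Apot_lint (R : ℝ) {u : E2 → ℂ} (hum : Measurable u) (h1 : ∫⁻ x, ‖u x‖ₑ ^ 2 = 1) (x : E2) :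
    ∫⁻ y, ‖‖u y‖ ^ 2 • K R (x - y)‖ₑ ≤ Dk 1 u x + 1 := by
  have hf := fk_meas 1
  calc _ ≤ ∫⁻ y, (fk 1 (x - y) * ‖u y‖ₑ ^ 2 + ‖u y‖ₑ ^ 2) := by
        apply lintegral_mono
        intro y
        beta_reduce
        rw [enorm_smul, enorm_pow, enorm_norm, mul_comm]
        refine (mul_le_mul_left (K_bd R _) _).trans ?_
        rw [add_mul, one_mul]
    _ = _ := by
        rw [lintegral_add_left (by fun_prop), h1]
        rfl

lemma Apot_bd (R : ℝ) {u : E2 → ℂ} (hum : Measurable u) (h1 : ∫⁻ x, ‖u x‖ₑ ^ 2 = 1) (x : E2) :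
    ‖Apot R u x‖ₑ ≤ Dk 1 u x + 1 :=
  (enorm_integral_le_lintegral_enorm _).trans (Apot_lint R hum h1 x)

lemma Apot_diff {R : ℝ} (hR : 0 < R) {u : E2 → ℂ} (hum : Measurable u)
    (h1 : ∫⁻ x, ‖u x‖ₑ ^ 2 = 1) :
    ∀ᵐ x, ‖Apot R u x - Apot 0 u x‖ₑ ≤ Dk R u x := by
  filter_upwards [Dk_fin one_pos hum h1] with x hx
  have hi : ∀ R, Integrable (fun y => ‖u y‖ ^ 2 • K R (x - y)) := by
    intro R
    have := K_meas R
    refine ⟨Measurable.aestronglyMeasurable (by fun_prop), ?_⟩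
    rw [hasFiniteIntegral_iff_enorm]
    exact (Apot_lint R hum h1 x).trans_lt (by simpa using hx)
  rw [Apot, Apot, convKs, convKs, ← integral_sub (hi R) (hi 0)]
  refine (enorm_integral_le_lintegral_enorm _).trans ?_
  apply lintegral_mono
  intro y
  beta_reduce
  rw [← smul_sub, enorm_smul, enorm_pow, enorm_norm, mul_comm]
  exact mul_le_mul_left (K_diff hR _) _

abbrev C2 : Type := EuclideanSpace ℂ (Fin 2)

/-- gradient part -/
def Gv (u : E2 → ℂ) (x : E2) : C2 := WithLp.toLp 2 fun j => -Complex.I * fderiv ℝ u x (e2 j)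

/-- magnetic part -/
def Bv (β R : ℝ) (u : E2 → ℂ) (x : E2) : C2 :=
  WithLp.toLp 2 fun j => (↑(β * Apot R u x j) : ℂ) * u x

def vv (β R : ℝ) (u : E2 → ℂ) (x : E2) : C2 := Gv u x + Bv β R u x

lemma energy_eq (β R : ℝ) (u : E2 → ℂ) : energy β R u = ∫ x, ‖vv β R u x‖ ^ 2 := by
  unfold energy
  congr 1
  ext x
  rw [EuclideanSpace.norm_sq_eq]
  rfl

lemma toLp_norm (a : E2) (β : ℝ) (z : ℂ) :
    ‖(WithLp.toLp 2 fun j => (↑(β * a j) : ℂ) * z : C2)‖ = |β| * ‖a‖ * ‖z‖ := by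
  rw [EuclideanSpace.norm_eq, EuclideanSpace.norm_eq]
  rw [← Real.sqrt_sq (abs_nonneg β), ← Real.sqrt_sq (norm_nonneg z),
    ← Real.sqrt_mul (by positivity), ← Real.sqrt_mul (by positivity)]
  congr 1
  simp [mul_pow]
  ring

lemma Bv_enorm (β R : ℝ) (u : E2 → ℂ) (x : E2) :
    ‖Bv β R u x‖ₑ = ‖β‖ₑ * ‖Apot R u x‖ₑ * ‖u x‖ₑ := by
  rw [← ofReal_norm, Bv, toLp_norm, ← Real.norm_eq_abs, ENNReal.ofReal_mul (by positivity),
    ENNReal.ofReal_mul (by positivity)]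
  simp only [ofReal_norm]

lemma Bv_diff (β R : ℝ) (u : E2 → ℂ) (x : E2) :
    ‖vv β R u x - vv β 0 u x‖ₑ = ‖β‖ₑ * ‖Apot R u x - Apot 0 u x‖ₑ * ‖u x‖ₑ := by
  have : vv β R u x - vv β 0 u x =
      WithLp.toLp 2 fun j => (↑(β * (Apot R u x - Apot 0 u x) j) : ℂ) * u x := by
    rw [vv, vv, add_sub_add_left_eq_sub]
    ext j
    simp [Bv]
    ring
  rw [this, ← ofReal_norm, toLp_norm, ← Real.norm_eq_abs, ENNReal.ofReal_mul (by positivity),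
    ENNReal.ofReal_mul (by positivity)]
  simp only [ofReal_norm]

lemma e2_norm (j : Fin 2) : ‖e2 j‖ = 1 := by simp [e2]

lemma Gv_enorm (u : E2 → ℂ) (x : E2) : ‖Gv u x‖ₑ ≤ 2 * ‖fderiv ℝ u x‖ₑ := by
  have : ‖Gv u x‖ ≤ 2 * ‖fderiv ℝ u x‖ := by
    rw [Gv, EuclideanSpace.norm_eq]
    apply Real.sqrt_le_iff.2
    refine ⟨by positivity, ?_⟩
    have h : ∀ j, ‖fderiv ℝ u x (e2 j)‖ ^ 2 ≤ ‖fderiv ℝ u x‖ ^ 2 := fun j => by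
      gcongr
      simpa [e2_norm] using (fderiv ℝ u x).le_opNorm (e2 j)
    simp
    nlinarith [h 0, h 1, sq_nonneg ‖fderiv ℝ u x‖]
  rw [← ofReal_norm, ← ofReal_norm, two_mul_ofReal]
  exact ENNReal.ofReal_le_ofReal this

lemma vv_meas (β R : ℝ) {u : E2 → ℂ} (hum : Measurable u) : Measurable (vv β R u) := by
  have := Apot_meas R hum
  have h2 : ∀ j, Measurable fun x => fderiv ℝ u x (e2 j) := fun j =>
    measurable_fderiv_apply_const ℝ u (e2 j)
  have h3 : ∀ j, Measurable fun x => (Apot R u x) j := fun j => by fun_prop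
  unfold vv
  refine Measurable.add ?_ ?_
  · unfold Gv
    refine (PiLp.continuous_toLp 2 _).measurable.comp (measurable_pi_lambda _ fun j => ?_)
    exact (h2 j).const_mul _
  · unfold Bv
    refine (PiLp.continuous_toLp 2 _).measurable.comp (measurable_pi_lambda _ fun j => ?_)
    have := h3 j
    fun_prop

lemma fd_sq {u : E2 → ℂ} (hu : Differentiable ℝ u) (x e : E2) :
    fderiv ℝ (fun y => ‖u y‖ ^ 2) x e = 2 * ⟪u x, fderiv ℝ u x e⟫ := by
  rw [((hu x).hasFDerivAt.norm_sq).fderiv]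
  simp
  ring

lemma hV1 {u : E2 → ℂ} (hu : Differentiable ℝ u) (j : Fin 2) (x : E2) :
    ‖fderiv ℝ (fun y => ‖u y‖ ^ 2) x (e2 j)‖ₑ ≤ 2 * ‖u x‖ₑ * ‖fderiv ℝ u x‖ₑ := by
  rw [fd_sq hu, ← ofReal_norm, ← ofReal_norm, ← ofReal_norm,
    two_mul_ofReal, ← ENNReal.ofReal_mul (by positivity)]
  apply ENNReal.ofReal_le_ofReal
  rw [norm_mul, mul_assoc]
  simp only [Real.norm_ofNat]
  gcongr
  refine (norm_inner_le_norm _ _).trans ?_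
  gcongr
  simpa [e2_norm] using (fderiv ℝ u x).le_opNorm (e2 j)

lemma hV2 (β R : ℝ) {u : E2 → ℂ} (hu : Differentiable ℝ u) (j : Fin 2) (x : E2) :
    ‖fderiv ℝ (fun y => ‖u y‖ ^ 2) x (e2 j)‖ₑ ≤ 2 * ‖u x‖ₑ * ‖vv β R u x‖ₑ := by
  rw [fd_sq hu, ← ofReal_norm, ← ofReal_norm, ← ofReal_norm,
    two_mul_ofReal, ← ENNReal.ofReal_mul (by positivity)]
  apply ENNReal.ofReal_le_ofReal
  rw [norm_mul, mul_assoc]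
  simp only [Real.norm_ofNat]
  have : ⟪u x, fderiv ℝ u x (e2 j)⟫ = ⟪u x, Complex.I * vv β R u x j⟫ := by
    simp [Complex.inner, vv, Gv, Bv]
    ring
  rw [this]
  gcongr
  refine (norm_inner_le_norm _ _).trans ?_
  gcongr
  rw [norm_mul, Complex.norm_I, one_mul]
  exact PiLp.norm_apply_le _ j

lemma num1 {a E : ℝ} (ha : 0 ≤ a) (hE : 0 ≤ E) :
    2 * ENNReal.ofReal a ^ 2 * (36 * ENNReal.ofReal E ^ 2) =
      ENNReal.ofReal (72 * a ^ 2 * E ^ 2) := by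
  rw [ENNReal.ofReal_mul (by positivity), ENNReal.ofReal_mul (by positivity),
    ENNReal.ofReal_pow ha, ENNReal.ofReal_pow hE, show ENNReal.ofReal 72 = 72 by norm_num]
  ring

lemma vv_fin (β R : ℝ) {u : E2 → ℂ} (hu : Differentiable ℝ u)
    (h1 : ∫⁻ x, ‖u x‖ₑ ^ 2 = 1) (h2 : ∫⁻ x, ‖fderiv ℝ u x‖ₑ ^ 2 ≠ ⊤) :
    ∫⁻ x, ‖vv β R u x‖ₑ ^ 2 ≠ ⊤ := by
  have hum : Measurable u := hu.continuous.measurable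
  have hdm : Measurable fun x => ‖fderiv ℝ u x‖ₑ := (measurable_fderiv ℝ u).enorm
  have hD := Dk_meas 1 hum
  have h6 := gn6 hu h1 hdm (hV1 hu) h2
  have h7 := Dk_u 1 hum
  have h8 : ∫⁻ x, (Dk 1 u x * ‖u x‖ₑ) ^ 2 ≠ ⊤ := by
    refine ne_top_of_le_ne_top ?_ h7
    refine ENNReal.mul_ne_top (ENNReal.mul_ne_top (by norm_num) ?_)
      (ne_top_of_le_ne_top ?_ h6)
    · rw [fk_int one_pos]
      exact ENNReal.pow_ne_top ENNReal.ofReal_ne_top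
    · exact ENNReal.mul_ne_top (by norm_num) (ENNReal.pow_ne_top h2)
  have hle : ∫⁻ x, ‖vv β R u x‖ₑ ^ 2 ≤ ∫⁻ x, (8 * ‖fderiv ℝ u x‖ₑ ^ 2 +
      (4 * ‖β‖ₑ ^ 2 * (Dk 1 u x * ‖u x‖ₑ) ^ 2 + 4 * ‖β‖ₑ ^ 2 * ‖u x‖ₑ ^ 2)) := by
    apply lintegral_mono
    intro x
    beta_reduce
    calc ‖vv β R u x‖ₑ ^ 2 ≤ (2 * ‖fderiv ℝ u x‖ₑ + ‖β‖ₑ * (Dk 1 u x + 1) * ‖u x‖ₑ) ^ 2 := by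
          gcongr
          refine (enorm_add_le _ _).trans ?_
          refine add_le_add (Gv_enorm u x) ?_
          rw [Bv_enorm]
          gcongr
          exact Apot_bd R hum h1 x
      _ ≤ 2 * (2 * ‖fderiv ℝ u x‖ₑ) ^ 2 + 2 * (‖β‖ₑ * (Dk 1 u x + 1) * ‖u x‖ₑ) ^ 2 :=
          enn_add_sq_le _ _
      _ = 8 * ‖fderiv ℝ u x‖ₑ ^ 2 + 2 * ‖β‖ₑ ^ 2 * ‖u x‖ₑ ^ 2 * (Dk 1 u x + 1) ^ 2 := by ring
      _ ≤ 8 * ‖fderiv ℝ u x‖ₑ ^ 2 + 2 * ‖β‖ₑ ^ 2 * ‖u x‖ₑ ^ 2 *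
          (2 * Dk 1 u x ^ 2 + 2 * 1 ^ 2) := by
          gcongr
          exact enn_add_sq_le _ _
      _ = _ := by ring
  refine ne_top_of_le_ne_top ?_ hle
  rw [lintegral_add_left (by fun_prop), lintegral_add_left (by fun_prop),
    lintegral_const_mul _ (by fun_prop), lintegral_const_mul _ (by fun_prop),
    lintegral_const_mul _ (by fun_prop), h1]
  have hb : 4 * ‖β‖ₑ ^ 2 ≠ ⊤ := ENNReal.mul_ne_top (by norm_num) (ENNReal.pow_ne_top (by simp))
  exact ENNReal.add_ne_top.2 ⟨ENNReal.mul_ne_top (by norm_num) h2, ENNReal.add_ne_top.2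
    ⟨ENNReal.mul_ne_top hb h8, ENNReal.mul_ne_top hb (by simp)⟩⟩

lemma vv_integrable (β R : ℝ) {u : E2 → ℂ} (hu : Differentiable ℝ u)
    (h1 : ∫⁻ x, ‖u x‖ₑ ^ 2 = 1) (h2 : ∫⁻ x, ‖fderiv ℝ u x‖ₑ ^ 2 ≠ ⊤) :
    Integrable (fun x => ‖vv β R u x‖ ^ 2) := by
  have := vv_meas β R hu.continuous.measurable
  refine ⟨Measurable.aestronglyMeasurable (by fun_prop), ?_⟩
  rw [hasFiniteIntegral_iff_enorm]
  simp only [enorm_pow, enorm_norm]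
  exact lt_top_iff_ne_top.2 (vv_fin β R hu h1 h2)

lemma energy_lint (β R : ℝ) {u : E2 → ℂ} (hu : Differentiable ℝ u)
    (h1 : ∫⁻ x, ‖u x‖ₑ ^ 2 = 1) (h2 : ∫⁻ x, ‖fderiv ℝ u x‖ₑ ^ 2 ≠ ⊤) :
    ∫⁻ x, ‖vv β R u x‖ₑ ^ 2 = ENNReal.ofReal (energy β R u) := by
  rw [energy_eq, ofReal_integral_eq_lintegral_ofReal (vv_integrable β R hu h1 h2)
    (Filter.Eventually.of_forall fun _ => by positivity)]
  congr 1
  ext x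
  rw [ENNReal.ofReal_pow (norm_nonneg _), ofReal_norm]

lemma real_fin {E q R c X Y b : ℝ} (hE : 0 ≤ E) (hq : 0 ≤ q) (hR : 0 ≤ R) (hX : 0 ≤ X)
    (hc : 0 ≤ c) (hY : Y ≤ 2 * X + b ^ 2 * q) (hXq : X ^ 2 ≤ E * (b ^ 2 * q))
    (q1 : q ≤ 72 * (c * R) ^ 2 * E ^ 2)
    (q2 : ∀ r, 0 < r → q ≤ 144 * (c * r) ^ 2 * E ^ 2 + 2 * r⁻¹ ^ 2) :
    Y ≤ (2 * (|b| * (9 * c)) + b ^ 2 * (9 * c * √(144 * c ^ 2 + 2)) + 1) *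
      (1 + E ^ (3 / 2 : ℝ)) * R := by
  have hE32 : E ^ (3 / 2 : ℝ) = E * √E := by
    rw [Real.sqrt_eq_rpow, show (3 / 2 : ℝ) = 1 + 1 / 2 by norm_num,
      Real.rpow_add_of_nonneg hE (by norm_num) (by norm_num), Real.rpow_one]
  have q3 : q ≤ (144 * c ^ 2 + 2) * E := by
    rcases hE.eq_or_lt with h | h
    · subst h
      simpa using q1
    · have hs : 0 < √E := Real.sqrt_pos.2 h
      refine (q2 (√E)⁻¹ (by positivity)).trans (le_of_eq ?_)
      rw [inv_inv, mul_pow, inv_pow, Real.sq_sqrt hE]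
      field_simp
  have s1 : √q ≤ 9 * c * R * E := by
    apply Real.sqrt_le_iff.2
    refine ⟨by positivity, q1.trans ?_⟩
    nlinarith [sq_nonneg (c * R * E)]
  have s2 : √q ≤ √(144 * c ^ 2 + 2) * √E := by
    rw [← Real.sqrt_mul (by positivity)]
    exact Real.sqrt_le_sqrt q3
  have hqq : q ≤ (9 * c * R * E) * (√(144 * c ^ 2 + 2) * √E) := by
    calc q = √q * √q := (Real.mul_self_sqrt hq).symm
      _ ≤ _ := by gcongr
  have hX' : X ≤ √E * (|b| * (9 * c * R * E)) := by
    calc X ≤ √(E * (b ^ 2 * q)) := Real.le_sqrt_of_sq_le hXq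
      _ = √E * (|b| * √q) := by
        rw [Real.sqrt_mul hE, Real.sqrt_mul (sq_nonneg _), Real.sqrt_sq_eq_abs]
      _ ≤ _ := by gcongr
  rw [hE32]
  set T := √(144 * c ^ 2 + 2)
  have hT : 0 ≤ T := Real.sqrt_nonneg _
  have hS : 0 ≤ √E := Real.sqrt_nonneg _
  have hP : 0 ≤ 2 * (|b| * (9 * c)) + b ^ 2 * (9 * c * T) := by positivity
  calc Y ≤ 2 * (√E * (|b| * (9 * c * R * E))) + b ^ 2 * ((9 * c * R * E) * (T * √E)) := by
        have := mul_le_mul_of_nonneg_left hqq (sq_nonneg b)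
        linarith
    _ = (2 * (|b| * (9 * c)) + b ^ 2 * (9 * c * T)) * (E * √E) * R := by ring
    _ ≤ _ := by
        refine mul_le_mul_of_nonneg_right (mul_le_mul (by linarith) (by linarith) (by positivity)
          (by linarith)) hR

theorem main_bound (β : ℝ) {R : ℝ} (hR : 0 < R) {u : E2 → ℂ} (hu : Differentiable ℝ u)
    (h1 : ∫⁻ x, ‖u x‖ₑ ^ 2 = 1) (h2 : ∫⁻ x, ‖fderiv ℝ u x‖ₑ ^ 2 ≠ ⊤) :
    |energy β R u - energy β 0 u| ≤
      (2 * (|β| * (9 * (2 * volume.real (Metric.ball (0 : E2) 1)))) +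
        β ^ 2 * (9 * (2 * volume.real (Metric.ball (0 : E2) 1)) *
          √(144 * (2 * volume.real (Metric.ball (0 : E2) 1)) ^ 2 + 2)) + 1) *
      (1 + energy β 0 u ^ (3 / 2 : ℝ)) * R := by
  have hum : Measurable u := hu.continuous.measurable
  have hvm := vv_meas β 0 hum
  have hD := Dk_meas R hum
  set c := 2 * volume.real (Metric.ball (0 : E2) 1) with hc
  have hc0 : 0 ≤ c := by positivity
  have hE : 0 ≤ energy β 0 u := by
    rw [energy_eq]; exact integral_nonneg fun _ => by positivity
  have hN := energy_lint β 0 hu h1 h2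
  have h6 := gn6 hu h1 hvm.enorm (hV2 β 0 hu) (by rw [hN]; simp)
  rw [hN] at h6
  set E := energy β 0 u with hEdef
  set Q := ∫⁻ x, (Dk R u x * ‖u x‖ₑ) ^ 2 with hQdef
  have e2' : (2 : ℝ≥0∞) = ENNReal.ofReal 2 := by norm_num
  have hQ1 : Q ≤ ENNReal.ofReal (72 * (c * R) ^ 2 * E ^ 2) := by
    refine (Dk_u R hum).trans ?_
    rw [fk_int hR]
    refine (mul_le_mul_right h6 _).trans (le_of_eq ?_)
    exact num1 (by positivity) hE
  have hQ2 : ∀ r, 0 < r → Q ≤ ENNReal.ofReal (144 * (c * r) ^ 2 * E ^ 2 + 2 * r⁻¹ ^ 2) := by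
    intro r hr
    refine (Dk_u' hr hum h1).trans ?_
    rw [fk_int hr]
    refine (add_le_add_left (mul_le_mul_right (mul_le_mul_right h6 _) _) _).trans (le_of_eq ?_)
    rw [ENNReal.ofReal_add (by positivity) (by positivity), ENNReal.ofReal_mul (q := r⁻¹ ^ 2)
      (by positivity), ← e2', ENNReal.ofReal_pow (p := r⁻¹) (by positivity)]
    congr 1
    rw [num1 (by positivity) hE, two_mul_ofReal]
    congr 1
    ring
  have hQt : Q ≠ ⊤ := ne_top_of_le_ne_top ENNReal.ofReal_ne_top hQ1
  set Xe := ∫⁻ x, ‖vv β 0 u x‖ₑ * (‖β‖ₑ * (Dk R u x * ‖u x‖ₑ)) with hXe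
  have hTsq : ∫⁻ x, (‖β‖ₑ * (Dk R u x * ‖u x‖ₑ)) ^ 2 = ENNReal.ofReal (β ^ 2) * Q := by
    simp_rw [mul_pow ‖β‖ₑ]
    rw [lintegral_const_mul _ (by fun_prop)]
    congr 1
    rw [← ofReal_norm, ← ENNReal.ofReal_pow (norm_nonneg _)]
    simp
  have hX2 : Xe ^ 2 ≤ ENNReal.ofReal E * (ENNReal.ofReal (β ^ 2) * Q) := by
    refine (cs_lint _ (by fun_prop) (by fun_prop)).trans ?_
    rw [hTsq, hN]
  have hX2t : ENNReal.ofReal E * (ENNReal.ofReal (β ^ 2) * Q) ≠ ⊤ :=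
    ENNReal.mul_ne_top (by simp) (ENNReal.mul_ne_top (by simp) hQt)
  have hXt : Xe ≠ ⊤ := by
    intro h
    rw [h] at hX2
    exact hX2t (by simpa using hX2)
  have hY : ‖energy β R u - E‖ₑ ≤ 2 * Xe + ENNReal.ofReal (β ^ 2) * Q := by
    rw [hEdef, energy_eq, energy_eq,
      ← integral_sub (vv_integrable β R hu h1 h2) (vv_integrable β 0 hu h1 h2)]
    refine (enorm_integral_le_lintegral_enorm _).trans ?_
    rw [← hTsq, hXe, ← lintegral_const_mul _ (by fun_prop), ← lintegral_add_left (by fun_prop)]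
    apply lintegral_mono_ae
    filter_upwards [Apot_diff hR hum h1] with x hx
    have hb : ‖vv β R u x - vv β 0 u x‖ₑ ≤ ‖β‖ₑ * (Dk R u x * ‖u x‖ₑ) := by
      rw [Bv_diff, mul_assoc]
      gcongr
    have hr : ‖‖vv β R u x‖ ^ 2 - ‖vv β 0 u x‖ ^ 2‖ₑ ≤
        2 * (‖vv β 0 u x‖ₑ * ‖vv β R u x - vv β 0 u x‖ₑ) + ‖vv β R u x - vv β 0 u x‖ₑ ^ 2 := by
      rw [← ofReal_norm, ← ofReal_norm, ← ofReal_norm, ← ENNReal.ofReal_mul (norm_nonneg _),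
        two_mul_ofReal, ← ENNReal.ofReal_pow (norm_nonneg _),
        ← ENNReal.ofReal_add (by positivity) (by positivity)]
      apply ENNReal.ofReal_le_ofReal
      set a := vv β R u x
      set b := vv β 0 u x
      have t1 : ‖a‖ ≤ ‖b‖ + ‖a - b‖ := by simpa using norm_add_le b (a - b)
      have t2 : ‖b‖ ≤ ‖a‖ + ‖a - b‖ := by
        have := norm_sub_le a (a - b)
        simpa using this
      have p1 := norm_nonneg a
      have p2 := norm_nonneg b
      have p3 := norm_nonneg (a - b)
      rw [Real.norm_eq_abs, abs_le]
      constructor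
      · nlinarith
      · nlinarith
    refine hr.trans ?_
    gcongr
  have hYt : 2 * Xe + ENNReal.ofReal (β ^ 2) * Q ≠ ⊤ :=
    ENNReal.add_ne_top.2 ⟨ENNReal.mul_ne_top (by norm_num) hXt,
      ENNReal.mul_ne_top (by simp) hQt⟩
  refine real_fin (q := Q.toReal) (X := Xe.toReal) hE ENNReal.toReal_nonneg hR.le
    ENNReal.toReal_nonneg hc0 ?_ ?_ ?_ ?_
  · have := ENNReal.toReal_mono hYt hY
    rw [ENNReal.toReal_add (ENNReal.mul_ne_top (by norm_num) hXt)
      (ENNReal.mul_ne_top (by simp) hQt), ENNReal.toReal_mul, ENNReal.toReal_mul,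
      ENNReal.toReal_ofReal (sq_nonneg _), toReal_enorm, Real.norm_eq_abs] at this
    simpa using this
  · have := ENNReal.toReal_mono hX2t hX2
    rwa [ENNReal.toReal_pow, ENNReal.toReal_mul, ENNReal.toReal_mul,
      ENNReal.toReal_ofReal (sq_nonneg _), ENNReal.toReal_ofReal hE] at this
  · exact ENNReal.toReal_le_of_le_ofReal (by positivity) hQ1
  · intro r hr
    exact ENNReal.toReal_le_of_le_ofReal (by positivity) (hQ2 r hr)

/-- Proposition A.3 (pointwise convergence of the average-field energy functional):
for fixed `β` there is `C > 0` such that for all `0 < R ≤ 1` and all normalized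
`u ∈ H¹(ℝ², ℂ)`, `|E_R[u] − E₀[u]| ≤ C (1 + E₀[u]^{3/2}) R`, with
`E_R[u] = ∫ ‖−i∇u + β(K_R ∗ |u|²)u‖²`. -/
theorem statement17 (β : ℝ) :
    ∃ C : ℝ, 0 < C ∧ ∀ R : ℝ, 0 < R → R ≤ 1 →
      ∀ u : E2 → ℂ, Differentiable ℝ u → H1 u < ⊤ → eLpNorm u 2 volume = 1 →
        |energy β R u - energy β 0 u| ≤ C * (1 + energy β 0 u ^ (3 / 2 : ℝ)) * R := by
  refine ⟨_, ?_, fun R hR _ u hu hH h1 => main_bound β hR hu ?_ ?_⟩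
  · positivity
  · have := eLpNorm_nnreal_pow_eq_lintegral (f := u) (μ := volume) (p := 2) (by norm_num)
    rw [show ((2 : NNReal) : ℝ≥0∞) = 2 from rfl, h1] at this
    simpa using this.symm
  · have h := eLpNorm_nnreal_pow_eq_lintegral (f := fun x => fderiv ℝ u x) (μ := volume) (p := 2)
      (by norm_num)
    rw [show ((2 : NNReal) : ℝ≥0∞) = 2 from rfl] at h
    have h' : eLpNorm (fun x => fderiv ℝ u x) 2 volume ^ 2 = ∫⁻ x, ‖fderiv ℝ u x‖ₑ ^ 2 := by
      simpa using h
    rw [← h']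
    unfold H1 at hH
    have h3 := (ENNReal.rpow_lt_top_iff_of_pos (by norm_num)).1 hH
    exact (ENNReal.add_lt_top.1 h3).2.ne
end
end
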